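/- arXiv:funct-an/9406003 — 2 statements merged into one kernel-verified Lean document; each statement's English description precedes it below -/
import Mathlib

section
/- Let A be an AF C*-algebra and let B be an infinite-dimensional, unital, simple AF C*-algebra. Then there exist a ℂ-linear isometry γ : A → B and a ℂ-linear map δ : B → A with ‖δ(b)‖ ≤ ‖b‖ for all b ∈ B such that δ ∘ γ = id_A; in particular γ(A) is a contractively complemented closed subspace of B. -/
/-!
Statement 1.

If `A` is an AF C*-algebra and `B` is an infinite-dimensional unital simple AF
C*-algebra, then there is a ℂ-linear isometry `γ : A → B` and a contractive
ℂ-linear left inverse `δ : B → A`; in particular `γ(A)` is contractively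
complemented in `B`.
-/

/-- `S` is an AF presentation of the C*-algebra `A`: an increasing sequence of
finite-dimensional *-subalgebras whose union is dense. -/
def IsAFPresentation (A : Type*) [NonUnitalCStarAlgebra A]
    (S : ℕ → NonUnitalStarSubalgebra ℂ A) : Prop :=
  Monotone S ∧ (∀ k, FiniteDimensional ℂ (S k)) ∧ Dense (⋃ k, (S k : Set A))

/-- A C*-algebra is simple if its only closed two-sided ideals are `{0}` and
the whole algebra. -/
def IsSimpleCStarAlgebra (A : Type*) [NonUnitalCStarAlgebra A] : Prop :=
  ∀ I : TwoSidedIdeal A, IsClosed (I : Set A) → I = ⊥ ∨ I = ⊤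

/-!
For a matrix subalgebra of `A` and one of `B` the maps are explicit: `δ` compresses `B` to columns
`v`, `w` over a minimal projection of the subalgebra of `B` and reads the resulting scalars as
coefficients of matrix units of the subalgebra of `A`, while `γ` sends `x` to an element acting on
the columns by the coefficient matrix of `x`, and so `δ (γ x) = x`.

To pass to larger subalgebras, refine the columns. Since `B` is simple and infinite-dimensional,
below any nonzero projection there are arbitrarily many orthogonal equivalent minimal projections
of a later subalgebra, so there is always room. The new `γ` is prescribed on the span of the new
columns, and on its complement it is the old `γ` composed with a contractive projection onto the
smaller subalgebra of `A`. The part of the larger subalgebra of `A` outside the unit of the smaller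
one could disturb `δ`; there `v` and `w` are refined by orthogonal copies, so that compression
kills the old subalgebra of `B`. This is why two families of columns are needed. Both sequences of
maps are then compatible and contractive, and extend to the limits by density.
-/

open scoped Matrix Matrix.Norms.L2Operator

universe u

namespace AFEmbedding

section ColumnFamilies

variable {A : Type*} [NonUnitalCStarAlgebra A] {ι : Type*}

/-- A family of partial isometries `v a` with source projections `p a` and mutually orthogonal
ranges: the first columns of a system of matrix units. The zero column is allowed. -/
structure IsColumnFamily (p v : ι → A) : Prop where
  proj : ∀ a, IsStarProjection (p a)
  source : ∀ a, star (v a) * v a = p a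
  orthogonal : ∀ a b, a ≠ b → star (v a) * v b = 0

lemma mul_self_eq_of_star_mul_self {p v : A} (hp : IsStarProjection p) (h : star v * v = p) :
    v * p = v := by
  have hpp := hp.isIdempotentElem.eq
  have hvp : star v * (v * p) = p := by rw [← mul_assoc, h, hpp]
  refine sub_eq_zero.mp ((CStarRing.star_mul_self_eq_zero_iff _).mp ?_)
  simp only [star_sub, star_mul, hp.isSelfAdjoint.star_eq, sub_mul, mul_sub, mul_assoc, hvp, h,
    hpp, sub_self]

namespace IsColumnFamily

variable {p v r w : ι → A}

lemma mul_proj (hv : IsColumnFamily p v) (a : ι) : v a * p a = v a :=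
  mul_self_eq_of_star_mul_self (hv.proj a) (hv.source a)

lemma proj_mul_star (hv : IsColumnFamily p v) (a : ι) : p a * star (v a) = star (v a) := by
  simpa [(hv.proj a).isSelfAdjoint.star_eq] using congrArg star (hv.mul_proj a)

lemma proj_mul_mul_proj (hv : IsColumnFamily p v) (hw : IsColumnFamily r w) (x : A) (a b : ι) :
    p a * (star (v a) * x * w b) * r b = star (v a) * x * w b := by
  rw [mul_assoc, mul_assoc _ (w b), hw.mul_proj, ← mul_assoc, ← mul_assoc, hv.proj_mul_star]

lemma reindex {κ : Type*} (hv : IsColumnFamily p v) {g : κ → ι} (hg : Function.Injective g) :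
    IsColumnFamily (fun k => p (g k)) (fun k => v (g k)) :=
  ⟨fun _ => hv.proj _, fun _ => hv.source _, fun _ _ h => hv.orthogonal _ _ (hg.ne h)⟩

lemma ite (hv : IsColumnFamily p v) (R : ι → Prop) [DecidablePred R] :
    IsColumnFamily (fun a => if R a then p a else 0) (fun a => if R a then v a else 0) where
  proj a := by
    split_ifs
    exacts [hv.proj a, .zero _]
  source a := by
    split_ifs
    exacts [hv.source a, mul_zero _]
  orthogonal a b hab := by
    by_cases ha : R a <;> by_cases hb : R b <;> simp [ha, hb, hv.orthogonal a b hab]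

lemma eq_zero (hv : IsColumnFamily p v) {a : ι} (h : p a = 0) : v a = 0 := by
  rw [← hv.mul_proj a, h, mul_zero]

lemma comp {κ : Type*} {r : ι → A} {r' t : κ × ι → A} (hv : IsColumnFamily r v)
    (ht : ∀ a, IsColumnFamily (fun s => r' (s, a)) (fun s => t (s, a)))
    (hrt : ∀ α, r α.2 * t α = t α) :
    IsColumnFamily r' (fun α => v α.2 * t α) where
  proj α := (ht α.2).proj α.1
  source α := by
    rw [star_mul, mul_assoc, ← mul_assoc (star (v α.2)), hv.source, hrt]
    exact (ht α.2).source α.1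
  orthogonal := by
    rintro ⟨s, a⟩ ⟨s', b⟩ h
    rw [star_mul, mul_assoc, ← mul_assoc (star (v a))]
    rcases eq_or_ne a b with rfl | hab
    · rw [hv.source, hrt (s', a)]
      exact (ht a).orthogonal s s' fun h' => h (by rw [h'])
    · rw [hv.orthogonal a b hab, zero_mul, mul_zero]

lemma mul_column {κ : Type*} {q f : κ → A} (hv : IsColumnFamily p v) (hf : IsColumnFamily q f)
    {t : ι → κ} (ht : ∀ a, p a * f (t a) = f (t a)) :
    IsColumnFamily (q ∘ t) fun a => v a * f (t a) where
  proj a := hf.proj (t a)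
  source a := by
    rw [star_mul, mul_assoc, ← mul_assoc (star (v a)), hv.source, ht, hf.source, Function.comp]
  orthogonal a b hab := by
    rw [star_mul, mul_assoc, ← mul_assoc (star (v a)), hv.orthogonal a b hab, zero_mul, mul_zero]

end IsColumnFamily

variable {p v w : ι → A}

open Classical in
/-- A linear functional taking the value `1` at `p`, or the zero functional if `p = 0`. -/
noncomputable def dualFunctional (p : A) : A →ₗ[ℂ] ℂ :=
  if hp : p ≠ 0 then (SeparatingDual.exists_eq_one (R := ℂ) hp).choose else 0

lemma dualFunctional_self {p : A} (hp : p ≠ 0) : dualFunctional p p = 1 := by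
  rw [dualFunctional, dif_pos hp]
  exact (SeparatingDual.exists_eq_one (R := ℂ) hp).choose_spec

/-- The matrix of coefficients of the corners `star (v a) * x * w b`, read off by the functional
dual to `p a`. It is meaningful when these corners are multiples of `p a`, see
`HasScalarCompression`, but it is defined, and linear, for every `x`. -/
noncomputable def compression (p v w : ι → A) : A →ₗ[ℂ] Matrix ι ι ℂ where
  toFun x := Matrix.of fun a b => dualFunctional (p a) (star (v a) * x * w b)
  map_add' x y := by ext; simp [mul_add, add_mul]
  map_smul' c x := by ext; simp [mul_smul_comm, smul_mul_assoc]

/-- The corners of `x` are scalar multiples of the projections `p a`, and they vanish between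
different projections. -/
def HasScalarCompression (p v w : ι → A) (x : A) : Prop :=
  ∀ a b, ∃ c : ℂ, star (v a) * x * w b = c • p a ∧ (p a ≠ p b → c = 0)

/-- Matrices supported on the pairs of indices with a common nonzero projection. -/
def IsBlockMatrix (p : ι → A) (M : Matrix ι ι ℂ) : Prop :=
  ∀ a b, M a b ≠ 0 → p a = p b ∧ p a ≠ 0

lemma compression_apply_eq {x : A} {a b : ι} {c : ℂ} (hp : p a ≠ 0)
    (h : star (v a) * x * w b = c • p a) : compression p v w x a b = c := by
  simp [compression, h, dualFunctional_self hp]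

lemma compression_apply_eq_zero {a : ι} (hp : p a = 0) (x : A) (b : ι) :
    compression p v w x a b = 0 := by
  simp [compression, dualFunctional, hp]

lemma compression_apply_congr {A' κ : Type*} [NonUnitalCStarAlgebra A'] {p' v' w' : κ → A'} {x : A}
    {x' : A'} {a b : ι} {a' b' : κ} {c : ℂ} (h : star (v a) * x * w b = c • p a)
    (h' : star (v' a') * x' * w' b' = c • p' a') (hp : p a = 0 ↔ p' a' = 0) :
    compression p v w x a b = compression p' v' w' x' a' b' := by
  by_cases h0 : p a = 0
  · rw [compression_apply_eq_zero h0, compression_apply_eq_zero (hp.mp h0)]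
  · rw [compression_apply_eq h0 h, compression_apply_eq (hp.not.mp h0) h']

lemma isBlockMatrix_compression {x : A} (hx : HasScalarCompression p v w x) :
    IsBlockMatrix p (compression p v w x) := by
  intro a b hab
  have hp : p a ≠ 0 := fun h => hab (compression_apply_eq_zero h x b)
  obtain ⟨c, hc, hc0⟩ := hx a b
  rw [compression_apply_eq hp hc] at hab
  exact ⟨not_imp_comm.mp hc0 hab, hp⟩

lemma HasScalarCompression.star_mul_mul {x : A} (hx : HasScalarCompression p v w x) (a b : ι) :
    star (v a) * x * w b = compression p v w x a b • p a := by
  obtain ⟨c, hc, -⟩ := hx a b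
  by_cases hp : p a = 0
  · rw [hc, hp, smul_zero, smul_zero]
  · rw [compression_apply_eq hp hc, hc]

lemma IsBlockMatrix.conjTranspose {M : Matrix ι ι ℂ} (hM : IsBlockMatrix p M) :
    IsBlockMatrix p Mᴴ := by
  intro a b hab
  obtain ⟨hba, hb⟩ := hM b a fun h => hab (by rw [Matrix.conjTranspose_apply, h, star_zero])
  exact ⟨hba.symm, hba ▸ hb⟩

variable [Fintype ι]

/-- The sum of the range projections of a column family. -/
def rangeProj (v : ι → A) : A := ∑ a, v a * star (v a)

/-- The linear map sending the matrix unit `E a b` to `v a * star (w b)`. -/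
def frameMap (v w : ι → A) : Matrix ι ι ℂ →ₗ[ℂ] A where
  toFun M := ∑ a, ∑ b, M a b • (v a * star (w b))
  map_add' M N := by simp only [Matrix.add_apply, add_smul, Finset.sum_add_distrib]
  map_smul' c M := by
    simp only [Matrix.smul_apply, smul_assoc, Finset.smul_sum, RingHom.id_apply]

lemma frameMap_apply (v w : ι → A) (M : Matrix ι ι ℂ) :
    frameMap v w M = ∑ a, ∑ b, M a b • (v a * star (w b)) := rfl

lemma star_frameMap (v w : ι → A) (M : Matrix ι ι ℂ) :
    star (frameMap v w M) = frameMap w v Mᴴ := by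
  simp only [frameMap_apply, star_sum, star_smul, star_mul, star_star, Matrix.conjTranspose_apply]
  exact Finset.sum_comm

lemma frameMap_mem {S : Type*} [SetLike S A] [AddSubmonoidClass S A] [MulMemClass S A]
    [StarMemClass S A] [SMulMemClass S ℂ A] {G : S} {v w : ι → A}
    (hv : ∀ a, v a ∈ G) (hw : ∀ a, w a ∈ G) (M : Matrix ι ι ℂ) : frameMap v w M ∈ G :=
  sum_mem fun a _ => sum_mem fun b _ => SMulMemClass.smul_mem _ (mul_mem (hv a) (star_mem (hw b)))

namespace IsColumnFamily

variable {p v r w u : ι → A}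

lemma star_mul_sum (hv : IsColumnFamily p v) (a : ι) (y : ι → A) :
    star (v a) * ∑ b, v b * y b = p a * y a := by
  rw [Finset.mul_sum, Finset.sum_eq_single a]
  · rw [← mul_assoc, hv.source]
  · intro b _ hb
    rw [← mul_assoc, hv.orthogonal a b hb.symm, zero_mul]
  · simp

lemma star_mul_frameMap (hv : IsColumnFamily p v) (w : ι → A) (M : Matrix ι ι ℂ) (a : ι) :
    star (v a) * frameMap v w M = ∑ b, M a b • (p a * star (w b)) := by
  simp only [frameMap_apply, ← mul_smul_comm, ← Finset.mul_sum, hv.star_mul_sum]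

lemma frameMap_mul (hw : IsColumnFamily r w) (v : ι → A) (M : Matrix ι ι ℂ) (b : ι) :
    frameMap v w M * w b = ∑ a, M a b • (v a * r b) := by
  have h := congrArg star (hw.star_mul_frameMap v Mᴴ b)
  simpa [star_frameMap, (hw.proj b).isSelfAdjoint.star_eq] using h

lemma star_mul_frameMap_mul (hv : IsColumnFamily p v) (hw : IsColumnFamily r w)
    (M : Matrix ι ι ℂ) (a b : ι) : star (v a) * frameMap v w M * w b = M a b • (p a * r b) := by
  rw [mul_assoc, hw.frameMap_mul]
  simp only [← mul_smul_comm, hv.star_mul_sum]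

lemma rangeProj_mul (hv : IsColumnFamily p v) (a : ι) : rangeProj v * v a = v a := by
  rw [rangeProj, Finset.sum_mul, Finset.sum_eq_single a]
  · rw [mul_assoc, hv.source, hv.mul_proj]
  · intro b _ hb
    rw [mul_assoc, hv.orthogonal b a hb, mul_zero]
  · simp

lemma isStarProjection_rangeProj (hv : IsColumnFamily p v) : IsStarProjection (rangeProj v) where
  isIdempotentElem := by
    have h : rangeProj v * ∑ a, v a * star (v a) = ∑ a, v a * star (v a) := by
      simp only [Finset.mul_sum, ← mul_assoc, hv.rangeProj_mul]
    exact h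
  isSelfAdjoint := by simp [IsSelfAdjoint, rangeProj]

lemma star_mul_rangeProj (hv : IsColumnFamily p v) (a : ι) :
    star (v a) * rangeProj v = star (v a) := by
  simpa [hv.isStarProjection_rangeProj.isSelfAdjoint.star_eq] using
    congrArg star (hv.rangeProj_mul a)

lemma rangeProj_mul_frameMap (hv : IsColumnFamily p v) (w : ι → A) (M : Matrix ι ι ℂ) :
    rangeProj v * frameMap v w M = frameMap v w M := by
  simp only [frameMap_apply, Finset.mul_sum, mul_smul_comm, ← mul_assoc, hv.rangeProj_mul]

lemma frameMap_mul_rangeProj (hw : IsColumnFamily r w) (v : ι → A) (M : Matrix ι ι ℂ) :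
    frameMap v w M * rangeProj w = frameMap v w M := by
  simp only [frameMap_apply, Finset.sum_mul, smul_mul_assoc, mul_assoc, hw.star_mul_rangeProj]

end IsColumnFamily

section NormBound

variable {p v r w : ι → A}

lemma frameMap_conjTranspose_mul_self (w : ι → A) (M : Matrix ι ι ℂ) :
    frameMap w w (Mᴴ * M) =
      ∑ a, star (∑ b, M a b • star (w b)) * ∑ b, M a b • star (w b) := by
  simp only [frameMap_apply, star_sum, star_smul, star_star, Finset.sum_mul_sum,
    smul_mul_smul_comm, Matrix.mul_apply, Matrix.conjTranspose_apply, Finset.sum_smul]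
  rw [Finset.sum_comm_cycle]

lemma frameMap_one [DecidableEq ι] (w : ι → A) : frameMap w w 1 = rangeProj w := by
  simp [frameMap_apply, rangeProj, Matrix.one_apply, ite_smul]

lemma exists_star_mul_self_eq_norm_sq_sub {D : Type*} [CStarAlgebra D] (x : D) :
    ∃ k : D, star k * k = algebraMap ℝ D (‖x‖ ^ 2) - star x * x := by
  let _ := CStarAlgebra.spectralOrder D
  have := CStarAlgebra.spectralOrderedRing D
  obtain ⟨k, hk⟩ := CStarAlgebra.nonneg_iff_eq_star_mul_self.mp
    (sub_nonneg.mpr (CStarAlgebra.star_mul_le_algebraMap_norm_sq (a := x)))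
  exact ⟨k, hk.symm⟩

lemma star_sub_mul_sub_of_isStarProjection {p : A} (hp : IsStarProjection p) (y : A) :
    star (y - p * y) * (y - p * y) = star y * y - star y * (p * y) := by
  have hpp : p * (p * y) = p * y := by rw [← mul_assoc, hp.isIdempotentElem.eq]
  simp only [star_sub, star_mul, hp.isSelfAdjoint.star_eq, sub_mul, mul_sub, mul_assoc, hpp,
    sub_self, sub_zero]

lemma norm_frameMap_le [DecidableEq ι] (hv : IsColumnFamily p v) (hw : IsColumnFamily r w)
    (M : Matrix ι ι ℂ) : ‖frameMap v w M‖ ≤ ‖M‖ := by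
  let _ := CStarAlgebra.spectralOrder A
  have := CStarAlgebra.spectralOrderedRing A
  let y : ι → A := fun a => ∑ b, M a b • star (w b)
  have star_mul_self : star (frameMap v w M) * frameMap v w M = ∑ a, star (y a) * (p a * y a) := by
    have h : frameMap v w M = ∑ a, v a * y a := by
      simp only [frameMap_apply, y, Finset.mul_sum, mul_smul_comm]
    conv_lhs => lhs; rw [h]
    simp only [star_sum, star_mul, Finset.sum_mul, mul_assoc, h, hv.star_mul_sum]
  have drop_source : ∑ a, star (y a) * (p a * y a) ≤ ∑ a, star (y a) * y a := by
    refine Finset.sum_le_sum fun a _ => sub_nonneg.mp ?_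
    rw [← star_sub_mul_sub_of_isStarProjection (hv.proj a)]
    exact star_mul_self_nonneg _
  have le_rangeProj : ∑ a, star (y a) * y a ≤ ((‖M‖ ^ 2 : ℝ) : ℂ) • rangeProj w := by
    obtain ⟨K, hK⟩ := exists_star_mul_self_eq_norm_sq_sub M
    have h : ((‖M‖ ^ 2 : ℝ) : ℂ) • rangeProj w - ∑ a, star (y a) * y a = frameMap w w (Kᴴ * K) := by
      rw [← Matrix.star_eq_conjTranspose, hK, map_sub, Matrix.star_eq_conjTranspose,
        frameMap_conjTranspose_mul_self, Algebra.algebraMap_eq_smul_one, ← Complex.coe_smul,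
        map_smul, frameMap_one]
    rw [← sub_nonneg, h, frameMap_conjTranspose_mul_self]
    exact Finset.sum_nonneg fun a _ => star_mul_self_nonneg _
  refine le_of_sq_le_sq ?_ (norm_nonneg _)
  calc ‖frameMap v w M‖ ^ 2 = ‖∑ a, star (y a) * (p a * y a)‖ := by
        rw [sq, ← CStarRing.norm_star_mul_self, star_mul_self]
    _ ≤ ‖((‖M‖ ^ 2 : ℝ) : ℂ) • rangeProj w‖ :=
        CStarAlgebra.norm_le_norm_of_nonneg_of_le
          (star_mul_self ▸ star_mul_self_nonneg _) (drop_source.trans le_rangeProj)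
    _ ≤ ‖M‖ ^ 2 := by
        rw [norm_smul, Complex.norm_real, Real.norm_of_nonneg (by positivity)]
        exact mul_le_of_le_one_right (by positivity) hw.isStarProjection_rangeProj.norm_le

end NormBound

section Compression

variable {p v r w u : ι → A}

lemma HasScalarCompression.rangeProj_mul_mul {x : A} (hv : IsColumnFamily p v)
    (hx : HasScalarCompression p v w x) :
    rangeProj v * x * rangeProj w = frameMap v w (compression p v w x) := by
  simp only [rangeProj, frameMap_apply, Finset.sum_mul, Finset.mul_sum]
  rw [Finset.sum_comm]
  refine Finset.sum_congr rfl fun a _ => Finset.sum_congr rfl fun b _ => ?_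
  calc v a * star (v a) * x * (w b * star (w b))
      = v a * (star (v a) * x * w b) * star (w b) := by simp only [mul_assoc]
    _ = compression p v w x a b • (v a * star (w b)) := by
        rw [hx.star_mul_mul, mul_smul_comm, hv.mul_proj, smul_mul_assoc]

lemma IsBlockMatrix.hasScalarCompression_frameMap {M : Matrix ι ι ℂ} (hM : IsBlockMatrix p M)
    (hv : IsColumnFamily p v) (hw : IsColumnFamily p w) :
    HasScalarCompression p v w (frameMap v w M) := by
  intro a b
  refine ⟨M a b, ?_, fun h => by_contra fun hab => h (hM a b hab).1⟩
  rw [hv.star_mul_frameMap_mul hw]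
  by_cases hab : M a b = 0
  · rw [hab, zero_smul, zero_smul]
  · rw [← (hM a b hab).1, (hv.proj a).isIdempotentElem.eq]

lemma IsBlockMatrix.compression_frameMap {M : Matrix ι ι ℂ} (hM : IsBlockMatrix p M)
    (hv : IsColumnFamily p v) (hw : IsColumnFamily p w) :
    compression p v w (frameMap v w M) = M := by
  have hx := hM.hasScalarCompression_frameMap hv hw
  ext a b
  by_cases hp : p a = 0
  · rw [by_contra fun h => (hM a b h).2 hp,
      by_contra fun h => (isBlockMatrix_compression hx a b h).2 hp]
  · have h := (hx.star_mul_mul a b).symm.trans (hv.star_mul_frameMap_mul hw M a b)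
    by_cases hab : M a b = 0
    · rw [hab, zero_smul] at h
      rw [hab, (smul_eq_zero.mp h).resolve_right hp]
    · rw [← (hM a b hab).1, (hv.proj a).isIdempotentElem.eq] at h
      exact smul_left_injective ℂ hp h

lemma IsBlockMatrix.frameMap_mul_frameMap {M : Matrix ι ι ℂ} (hM : IsBlockMatrix p M)
    (hv : IsColumnFamily p v) (hw : IsColumnFamily p w) (N : Matrix ι ι ℂ) :
    frameMap v w M * frameMap w u N = frameMap v u (M * N) := by
  have h : ∀ b, frameMap v w M * w b = ∑ a, M a b • v a := by
    intro b
    rw [hw.frameMap_mul]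
    refine Finset.sum_congr rfl fun a _ => ?_
    by_cases hab : M a b = 0
    · rw [hab, zero_smul, zero_smul]
    · rw [← (hM a b hab).1, hv.mul_proj]
  simp only [frameMap_apply w u, Finset.mul_sum, mul_smul_comm, ← mul_assoc, h,
    frameMap_apply v u, Matrix.mul_apply, Finset.sum_smul, Finset.sum_mul, Finset.smul_sum,
    smul_mul_assoc, smul_smul]
  rw [Finset.sum_comm_cycle]
  refine Finset.sum_congr rfl fun a _ => Finset.sum_comm.trans ?_
  simp only [mul_comm (N _ _)]

end Compression

section BlockIsometry

variable {p v w : ι → A}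

lemma IsBlockMatrix.mul {M N : Matrix ι ι ℂ} (hM : IsBlockMatrix p M) (hN : IsBlockMatrix p N) :
    IsBlockMatrix p (M * N) := by
  intro a b hab
  obtain ⟨c, -, hc⟩ := Finset.exists_ne_zero_of_sum_ne_zero hab
  have hMc := hM a c (left_ne_zero_of_mul hc)
  exact ⟨hMc.1.trans (hN c b (right_ne_zero_of_mul hc)).1, hMc.2⟩

/-- The block matrices with respect to `p`, as a C*-subalgebra. -/
def blockMatrices (p : ι → A) : NonUnitalStarSubalgebra ℂ (Matrix ι ι ℂ) where
  carrier := {M | IsBlockMatrix p M}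
  add_mem' {M N} hM hN a b hab := by
    by_cases h : M a b = 0
    · exact hN a b fun h' => hab (by rw [Matrix.add_apply, h, h', add_zero])
    · exact hM a b h
  zero_mem' a b hab := absurd rfl hab
  smul_mem' c M hM a b hab := hM a b (right_ne_zero_of_mul hab)
  mul_mem' := IsBlockMatrix.mul
  star_mem' := IsBlockMatrix.conjTranspose

/-- On block matrices `frameMap w w` is a *-homomorphism. -/
def blockHom (hw : IsColumnFamily p w) : blockMatrices p →⋆ₙₐ[ℂ] A where
  toFun M := frameMap w w M
  map_smul' c M := map_smul (frameMap w w) c (M : Matrix ι ι ℂ)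
  map_zero' := map_zero (frameMap w w)
  map_add' M N := map_add (frameMap w w) (M : Matrix ι ι ℂ) N
  map_mul' M N := (M.2.frameMap_mul_frameMap hw hw N).symm
  map_star' M := (star_frameMap w w M).symm

lemma norm_frameMap_self [DecidableEq ι] (hw : IsColumnFamily p w) {M : Matrix ι ι ℂ}
    (hM : IsBlockMatrix p M) : ‖frameMap w w M‖ = ‖M‖ := by
  have : IsClosed (blockMatrices p : Set (Matrix ι ι ℂ)) :=
    (blockMatrices p).toSubmodule.closed_of_finiteDimensional
  let _ : NonUnitalCStarAlgebra (blockMatrices p) := inferInstance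
  refine NonUnitalStarAlgHom.norm_map (blockHom hw) (fun M N h => Subtype.ext ?_)
    (⟨M, hM⟩ : blockMatrices p)
  rw [← M.2.compression_frameMap hw hw, ← N.2.compression_frameMap hw hw]
  exact congrArg _ h

lemma norm_frameMap [DecidableEq ι] (hv : IsColumnFamily p v) (hw : IsColumnFamily p w)
    {M : Matrix ι ι ℂ} (hM : IsBlockMatrix p M) : ‖frameMap v w M‖ = ‖M‖ := by
  have h : star (frameMap v w M) * frameMap v w M = frameMap w w (Mᴴ * M) := by
    rw [star_frameMap, hM.conjTranspose.frameMap_mul_frameMap hw hv]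
  rw [← mul_self_inj_of_nonneg (norm_nonneg _) (norm_nonneg _), ← CStarRing.norm_star_mul_self, h,
    norm_frameMap_self hw (hM.conjTranspose.mul hM), Matrix.l2_opNorm_conjTranspose_mul_self]

lemma norm_compression_le [DecidableEq ι] (hv : IsColumnFamily p v) (hw : IsColumnFamily p w)
    {x : A} (hx : HasScalarCompression p v w x) : ‖compression p v w x‖ ≤ ‖x‖ := by
  rw [← norm_frameMap hv hw (isBlockMatrix_compression hx), ← hx.rangeProj_mul_mul hv]
  calc ‖rangeProj v * x * rangeProj w‖ ≤ ‖rangeProj v‖ * ‖x‖ * ‖rangeProj w‖ := norm_mul₃_le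
    _ ≤ 1 * ‖x‖ * 1 := by
        gcongr
        exacts [hv.isStarProjection_rangeProj.norm_le, hw.isStarProjection_rangeProj.norm_le]
    _ = ‖x‖ := by ring

end BlockIsometry

end ColumnFamilies

section Corners

variable {B : Type*} [CStarAlgebra B] {P Q X : B} {m : ℝ}

lemma star_mul_mul_self_le [PartialOrder B] [StarOrderedRing B] {R W : B} (hR : IsStarProjection R)
    (hW : ‖W‖ ≤ m) : star (W * R) * (W * R) ≤ m ^ 2 • R := by
  have hRR := hR.isIdempotentElem.eq
  have h := star_left_conjugate_le_conjugate
    ((CStarAlgebra.star_mul_le_algebraMap_norm_sq (a := W)).trans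
      (algebraMap_mono B (pow_le_pow_left₀ (norm_nonneg W) hW 2))) R
  simpa [Algebra.algebraMap_eq_smul_one, hR.isSelfAdjoint.star_eq, hRR, mul_assoc] using h

/-- Elements living in complementary corners have orthogonal initial and final spaces. -/
lemma norm_add_one_sub_mul_mul_one_sub_le (hP : IsStarProjection P) (hQ : IsStarProjection Q)
    (hPX : P * X = X) (hXQ : X * Q = X) (hX : ‖X‖ ≤ m) {Y : B} (hY : ‖Y‖ ≤ m) :
    ‖X + (1 - P) * Y * (1 - Q)‖ ≤ m := by
  let _ := CStarAlgebra.spectralOrder B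
  have := CStarAlgebra.spectralOrderedRing B
  set Z := (1 - P) * Y * (1 - Q) with hZ
  have star_X_mul_Z : star X * Z = 0 := by
    have h : star X * P = star X := by
      simpa [hP.isSelfAdjoint.star_eq] using congrArg star hPX
    rw [hZ, ← mul_assoc, ← mul_assoc, mul_sub (star X), h, mul_one, sub_self, zero_mul, zero_mul]
  have star_Z_mul_X : star Z * X = 0 := by simpa using congrArg star star_X_mul_Z
  have norm_Y : ‖(1 - P) * Y‖ ≤ m := (norm_mul_le _ _).trans <|
    (mul_le_of_le_one_left (norm_nonneg Y) hP.one_sub.norm_le).trans hY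
  have key : star (X + Z) * (X + Z) ≤ algebraMap ℝ B (m ^ 2) :=
    calc star (X + Z) * (X + Z) = star (X * Q) * (X * Q) + star Z * Z := by
          simp [add_mul, mul_add, star_X_mul_Z, star_Z_mul_X, hXQ]
      _ ≤ m ^ 2 • Q + m ^ 2 • (1 - Q) :=
          add_le_add (star_mul_mul_self_le hQ hX) (star_mul_mul_self_le hQ.one_sub norm_Y)
      _ = algebraMap ℝ B (m ^ 2) := by
          rw [← smul_add, add_sub_cancel, Algebra.algebraMap_eq_smul_one]
  have hm : 0 ≤ m := (norm_nonneg _).trans hX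
  refine le_of_sq_le_sq ?_ hm
  rw [sq, ← CStarRing.norm_star_mul_self]
  exact (CStarAlgebra.norm_le_iff_le_algebraMap _ (by positivity) (star_mul_self_nonneg _)).mpr key

end Corners

section FiniteDimensional

lemma finite_spectrum {D : Type*} [Ring D] [Algebra ℂ D] [FiniteDimensional ℂ D] (x : D) :
    (spectrum ℂ x).Finite := by
  refine (Module.End.finite_spectrum (Algebra.lmul ℂ D x)).subset fun z hz => ?_
  rwa [spectrum.mem_iff, ← (Algebra.lmul ℂ D).commutes, ← map_sub, Algebra.lmul_isUnit_iff]

lemma finite_quasispectrum {D : Type*} [NonUnitalRing D] [Module ℂ D] [IsScalarTower ℂ D D]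
    [SMulCommClass ℂ D D] [FiniteDimensional ℂ D] (x : D) : (quasispectrum ℂ x).Finite := by
  have : FiniteDimensional ℂ (Unitization ℂ D) := Module.Finite.of_surjective
    ((Algebra.linearMap ℂ (Unitization ℂ D)).coprod (Unitization.inrHom ℂ ℂ D))
    fun x => ⟨(x.fst, x.snd), Unitization.inl_fst_add_inr_snd_eq x⟩
  rw [Unitization.quasispectrum_eq_spectrum_inr ℂ]
  exact finite_spectrum _

lemma exists_spectral_projection {A : Type*} [NonUnitalCStarAlgebra A] [FiniteDimensional ℂ A]
    {y : A} (hsa : IsSelfAdjoint y) (hy0 : y ≠ 0) :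
    ∃ (c : ℂ) (r : A), c ≠ 0 ∧ IsStarProjection r ∧ r ≠ 0 ∧ y * r = c • r := by
  have hn : IsStarNormal y := hsa.isStarNormal
  have hcont (f : ℂ → ℂ) : ContinuousOn f (quasispectrum ℂ y) :=
    (finite_quasispectrum y).continuousOn f
  obtain ⟨c, hc, hc0⟩ : ∃ c ∈ quasispectrum ℂ y, c ≠ 0 := by
    by_contra! hcon
    refine hy0 ?_
    calc y = cfcₙ id y := (cfcₙ_id ℂ y).symm
      _ = cfcₙ 0 y := cfcₙ_congr hcon
      _ = 0 := cfcₙ_zero ℂ y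
  let f : ℂ → ℂ := Pi.single c 1
  have hf0 : f 0 = 0 := Pi.single_eq_of_ne hc0.symm 1
  refine ⟨c, cfcₙ f y, hc0, ⟨?_, ?_⟩, fun h => ?_, ?_⟩
  · rw [IsIdempotentElem, ← cfcₙ_mul f f y (hcont _) hf0 (hcont _) hf0]
    congr 1
    ext z
    simp [f, Pi.single_apply]
  · rw [IsSelfAdjoint, ← cfcₙ_star]
    congr 1
    ext z
    simp [f, Pi.single_apply, apply_ite]
  · have heq := (cfcₙ_eq_cfcₙ_iff_eqOn (g := 0) hn (hcont _) hf0 continuousOn_const rfl).mp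
      (h.trans (cfcₙ_zero ℂ y).symm) hc
    simp [f] at heq
  · nth_rw 1 [← cfcₙ_id ℂ y]
    rw [← cfcₙ_mul id f y (hcont _) rfl (hcont _) hf0, ← cfcₙ_smul c f y (hcont _) hf0]
    congr 1
    ext z
    by_cases hz : z = c <;> simp [f, hz]

variable {A : Type*} [NonUnitalCStarAlgebra A]

lemma proj_mul_eq_iff_mul_proj_eq {p r : A} (hp : IsStarProjection p) (hr : IsStarProjection r) :
    p * r = r ↔ r * p = r := by
  rw [← star_inj, star_mul, hp.isSelfAdjoint.star_eq, hr.isSelfAdjoint.star_eq]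

/-- A minimal projection of the subalgebra `G`: a nonzero projection whose corner in `G` is
one-dimensional. -/
structure IsMinimalProjection (G : NonUnitalStarSubalgebra ℂ A) (p : A) : Prop where
  mem : p ∈ G
  isStarProjection : IsStarProjection p
  ne_zero : p ≠ 0
  scalar : ∀ x ∈ G, ∃ c : ℂ, p * x * p = c • p

/-- The left fixed space of `p` in `G`, used to order the projections of `G`. -/
def leftFixed (G : NonUnitalStarSubalgebra ℂ A) (p : A) : Submodule ℂ G :=
  LinearMap.eqLocus (LinearMap.mulLeft ℂ p ∘ₗ G.toSubmodule.subtype) G.toSubmodule.subtype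

lemma mem_leftFixed {G : NonUnitalStarSubalgebra ℂ A} {p : A} {x : G} :
    x ∈ leftFixed G p ↔ p * x = x := Iff.rfl

lemma leftFixed_lt_leftFixed {G : NonUnitalStarSubalgebra ℂ A} {p r : A} (hpG : p ∈ G)
    (hp : IsStarProjection p) (hr : IsStarProjection r) (hpr : p * r = r) (hne : r ≠ p) :
    leftFixed G r < leftFixed G p := by
  refine lt_of_le_of_ne (fun x (hx : r * x = x) => ?_) fun h => hne ?_
  · rw [mem_leftFixed, ← hx, ← mul_assoc, hpr]
  · have hp_mem : (⟨p, hpG⟩ : G) ∈ leftFixed G p := hp.isIdempotentElem.eq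
    rw [← h] at hp_mem
    exact ((proj_mul_eq_iff_mul_proj_eq hp hr).mp hpr).symm.trans hp_mem

lemma isStarProjection_sum {R : Finset A} (hR : ∀ r ∈ R, IsStarProjection r)
    (horth : (R : Set A).Pairwise fun r s => r * s = 0) : IsStarProjection (∑ r ∈ R, r) := by
  induction R using Finset.cons_induction with
  | empty => simp
  | cons r R hrR ih =>
    rw [Finset.forall_mem_cons] at hR
    rw [Finset.coe_cons, Set.pairwise_insert_of_notMem (by simpa using hrR)] at horth
    rw [Finset.sum_cons]
    refine hR.1.add (ih hR.2 horth.1) ?_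
    rw [Finset.mul_sum]
    exact Finset.sum_eq_zero fun s hs => (horth.2 s hs).1

lemma mul_sum_self_eq {R : Finset A} (hR : ∀ r ∈ R, IsStarProjection r)
    (horth : (R : Set A).Pairwise fun r s => r * s = 0) {r : A} (hr : r ∈ R) :
    r * ∑ s ∈ R, s = r := by
  rw [Finset.mul_sum, Finset.sum_eq_single_of_mem r hr fun s hs h => horth hr hs h.symm]
  exact (hR r hr).isIdempotentElem.eq

lemma proj_mul_eq_zero_comm {p r : A} (hp : IsStarProjection p) (hr : IsStarProjection r) :
    p * r = 0 ↔ r * p = 0 := by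
  rw [← star_inj, star_mul, hp.isSelfAdjoint.star_eq, hr.isSelfAdjoint.star_eq, star_zero]

variable (G : NonUnitalStarSubalgebra ℂ A) [FiniteDimensional ℂ G]

lemma exists_spectral_projection_mem {y : A} (hy : y ∈ G) (hsa : IsSelfAdjoint y) (hy0 : y ≠ 0) :
    ∃ (c : ℂ) (r : A), c ≠ 0 ∧ r ∈ G ∧ IsStarProjection r ∧ r ≠ 0 ∧ y * r = c • r := by
  have : IsClosed (G : Set A) :=
    have : FiniteDimensional ℂ G.toSubmodule := ‹FiniteDimensional ℂ G›
    G.toSubmodule.closed_of_finiteDimensional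
  obtain ⟨c, r, hc, hr, hr0, hcr⟩ := exists_spectral_projection (A := G) (y := ⟨y, hy⟩)
    (Subtype.ext hsa) (fun h => hy0 (congrArg Subtype.val h))
  exact ⟨c, r, hc, r.2, ⟨congrArg Subtype.val hr.isIdempotentElem.eq,
    congrArg Subtype.val hr.isSelfAdjoint.star_eq⟩, fun h => hr0 (Subtype.ext h),
    congrArg Subtype.val hcr⟩

variable {G}

lemma isMinimalProjection_of_forall_eq {p : A} (hpG : p ∈ G) (hp : IsStarProjection p)
    (hp0 : p ≠ 0) (hmin : ∀ r ∈ G, IsStarProjection r → r ≠ 0 → p * r = r → r = p) :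
    IsMinimalProjection G p := by
  have hpp := hp.isIdempotentElem.eq
  have selfAdjoint : ∀ x ∈ G, IsSelfAdjoint x → ∃ c : ℂ, p * x * p = c • p := by
    intro x hx hsa
    by_cases h0 : p * x * p = 0
    · exact ⟨0, by rw [h0, zero_smul]⟩
    have hsa' : IsSelfAdjoint (p * x * p) := by
      simpa [hp.isSelfAdjoint.star_eq] using hsa.conjugate p
    obtain ⟨c, r, hc, hrG, hr, hr0, hcr⟩ :=
      exists_spectral_projection_mem G (mul_mem (mul_mem hpG hx) hpG) hsa' h0
    have hpr : p * r = r := by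
      refine smul_right_injective A hc ?_
      simp only [← mul_smul_comm, ← hcr, ← mul_assoc, hpp]
    obtain rfl := hmin r hrG hr hr0 hpr
    exact ⟨c, by rw [← hcr, mul_assoc _ r r, hpp]⟩
  refine ⟨hpG, hp, hp0, fun x hx => ?_⟩
  have hs := star_mem hx
  obtain ⟨c, hc⟩ := selfAdjoint (x + star x) (add_mem hx hs) (IsSelfAdjoint.add_star_self x)
  obtain ⟨d, hd⟩ := selfAdjoint (Complex.I • (x - star x)) (SMulMemClass.smul_mem _ (sub_mem hx hs))
    (by simp [IsSelfAdjoint, ← smul_neg])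
  have hx' : x = (1 / 2 : ℂ) • (x + star x - Complex.I • Complex.I • (x - star x)) := by
    rw [smul_smul, Complex.I_mul_I]
    module
  refine ⟨1 / 2 * (c - Complex.I * d), ?_⟩
  rw [hx', mul_smul_comm, smul_mul_assoc, mul_sub, sub_mul, hc, mul_smul_comm, smul_mul_assoc, hd]
  module

lemma exists_isMinimalProjection_le {p : A} (hpG : p ∈ G) (hp : IsStarProjection p) (hp0 : p ≠ 0) :
    ∃ r, IsMinimalProjection G r ∧ p * r = r := by
  obtain ⟨r, ⟨hrG, hr, hr0, hpr⟩, hmin⟩ := exists_minimalFor_of_wellFoundedLT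
    (fun r => r ∈ G ∧ IsStarProjection r ∧ r ≠ 0 ∧ p * r = r) (leftFixed G)
    ⟨p, hpG, hp, hp0, hp.isIdempotentElem.eq⟩
  refine ⟨r, isMinimalProjection_of_forall_eq hrG hr hr0 fun s hsG hs hs0 hrs => ?_, hpr⟩
  by_contra hne
  have hlt := leftFixed_lt_leftFixed hrG hr hs hrs hne
  have hps : p * s = s := by rw [← hrs, ← mul_assoc, hpr]
  exact hlt.not_ge (hmin ⟨hsG, hs, hs0, hps⟩ hlt.le)

lemma exists_isMinimalProjection_eq_mul {x : A} (hx : x ∈ G) (hx0 : x ≠ 0) :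
    ∃ r, IsMinimalProjection G r ∧ ∃ y, x * y = r := by
  obtain ⟨c, r', hc, hr'G, hr', hr'0, hcr⟩ := exists_spectral_projection_mem G
    (mul_mem hx (star_mem hx)) (IsSelfAdjoint.mul_star_self x)
    fun h => hx0 ((CStarRing.mul_star_self_eq_zero_iff x).mp h)
  obtain ⟨r, hr, hr'r⟩ := exists_isMinimalProjection_le hr'G hr' hr'0
  refine ⟨r, hr, c⁻¹ • (star x * r), ?_⟩
  rw [← hr'r, mul_smul_comm, ← mul_assoc, ← mul_assoc, hcr, smul_mul_assoc, inv_smul_smul₀ hc]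

lemma exists_isMinimalProjection_mul_eq_zero {u x : A} (huG : u ∈ G) (hu : IsStarProjection u)
    (hx : x ∈ G) (hux : u * x ≠ x) : ∃ r, IsMinimalProjection G r ∧ u * r = 0 := by
  obtain ⟨r, hr, y, hy⟩ := exists_isMinimalProjection_eq_mul
    (sub_mem hx (mul_mem huG hx)) fun h => hux (sub_eq_zero.mp h).symm
  refine ⟨r, hr, ?_⟩
  rw [← hy, ← mul_assoc, mul_sub, ← mul_assoc, hu.isIdempotentElem.eq, sub_self, zero_mul]

variable (G) in
lemma exists_isMinimalProjection_decomposition :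
    ∃ R : Finset A, (∀ r ∈ R, IsMinimalProjection G r) ∧
      (R : Set A).Pairwise (fun r s => r * s = 0) ∧ ∀ x ∈ G, (∑ r ∈ R, r) * x = x := by
  obtain ⟨R, ⟨hR, horth⟩, hmax⟩ := exists_maximalFor_of_wellFoundedGT
    (fun R : Finset A => (∀ r ∈ R, IsMinimalProjection G r) ∧
      (R : Set A).Pairwise fun r s => r * s = 0) (fun R => leftFixed G (∑ r ∈ R, r))
    ⟨∅, by simp⟩
  refine ⟨R, hR, horth, fun x hx => ?_⟩
  have hproj r (hr : r ∈ R) := (hR r hr).isStarProjection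
  set u := ∑ r ∈ R, r with hu
  have huG : u ∈ G := sum_mem fun r hr => (hR r hr).mem
  have hup : IsStarProjection u := isStarProjection_sum hproj horth
  by_contra hux
  obtain ⟨r, hr, hur⟩ := exists_isMinimalProjection_mul_eq_zero huG hup hx hux
  have hsr s (hs : s ∈ R) : s * r = 0 := by
    rw [← mul_sum_self_eq hproj horth hs, mul_assoc, ← hu, hur, mul_zero]
  have hrR : r ∉ R := fun h => hr.ne_zero (hr.isStarProjection.isIdempotentElem.eq ▸ hsr r h)
  have hru := (proj_mul_eq_zero_comm hup hr.isStarProjection).mp hur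
  have hcons : (∀ s ∈ R.cons r hrR, IsMinimalProjection G s) ∧
      (R.cons r hrR : Set A).Pairwise fun s t => s * t = 0 := by
    rw [Finset.coe_cons, Set.pairwise_insert_of_notMem (by simpa using hrR)]
    exact ⟨Finset.forall_mem_cons _ _ |>.mpr ⟨hr, hR⟩, horth, fun s hs =>
      ⟨(proj_mul_eq_zero_comm (hproj s hs) hr.isStarProjection).mp (hsr s hs), hsr s hs⟩⟩
  have hlt : leftFixed G u < leftFixed G (∑ s ∈ R.cons r hrR, s) := by
    rw [Finset.sum_cons]
    refine leftFixed_lt_leftFixed (add_mem hr.mem huG) (hr.isStarProjection.add hup hru) hup ?_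
      fun h => hr.ne_zero (right_eq_add.mp h)
    rw [add_mul, hru, zero_add, hup.isIdempotentElem.eq]
  exact hlt.not_ge (hmax hcons hlt.le)

end FiniteDimensional

section MinimalProjections

variable {A : Type*} [NonUnitalCStarAlgebra A] {G : NonUnitalStarSubalgebra ℂ A} {p r s x : A}

lemma exists_pos_of_star_mul_self_eq_smul (hp : IsStarProjection p) (hp0 : p ≠ 0) (hx0 : x ≠ 0)
    {d : ℂ} (h : star x * x = d • p) : ∃ e : ℝ, 0 < e ∧ d = e := by
  let _ := CStarAlgebra.spectralOrder A
  have := CStarAlgebra.spectralOrderedRing A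
  have hd : (starRingEnd ℂ) d = d := by
    have hstar := congrArg star h
    rw [star_mul, star_star, h, star_smul, hp.isSelfAdjoint.star_eq] at hstar
    exact (smul_left_injective ℂ hp0 hstar).symm
  obtain ⟨e, rfl⟩ := Complex.conj_eq_iff_real.mp hd
  have hp_pos : 0 < p := lt_of_le_of_ne hp.nonneg hp0.symm
  have hx_pos : 0 < star x * x := lt_of_le_of_ne (star_mul_self_nonneg x)
    fun h => hx0 ((CStarRing.star_mul_self_eq_zero_iff x).mp h.symm)
  rw [h, Complex.coe_smul] at hx_pos
  exact ⟨e, (smul_pos_iff_of_pos_right hp_pos).mp hx_pos, rfl⟩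

lemma IsMinimalProjection.exists_smul_source (hp : IsMinimalProjection G p) (hx : x ∈ G)
    (hxp : x * p = x) (hx0 : x ≠ 0) : ∃ c : ℂ, star (c • x) * (c • x) = p := by
  obtain ⟨d, hd⟩ := hp.scalar (star x * x) (mul_mem (star_mem hx) hx)
  have hpx : p * star x = star x := by
    simpa [hp.isStarProjection.isSelfAdjoint.star_eq] using congrArg star hxp
  rw [← mul_assoc, hpx, mul_assoc, hxp] at hd
  obtain ⟨e, he, rfl⟩ :=
    exists_pos_of_star_mul_self_eq_smul hp.isStarProjection hp.ne_zero hx0 hd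
  refine ⟨((Real.sqrt e)⁻¹ : ℝ), ?_⟩
  rw [star_smul, smul_mul_smul_comm, hd, smul_smul, RCLike.star_def, Complex.conj_ofReal,
    ← Complex.ofReal_mul, ← Complex.ofReal_mul, ← mul_inv, Real.mul_self_sqrt he.le,
    inv_mul_cancel₀ he.ne', Complex.ofReal_one, one_smul]

/-- Murray–von Neumann equivalence in `G`. -/
def IsEquivalentIn (G : NonUnitalStarSubalgebra ℂ A) (r s : A) : Prop :=
  ∃ f ∈ G, f * star f = r ∧ star f * f = s

namespace IsEquivalentIn

lemma refl (hr : IsMinimalProjection G r) : IsEquivalentIn G r r := by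
  refine ⟨r, hr.mem, ?_⟩
  rw [hr.isStarProjection.isSelfAdjoint.star_eq, hr.isStarProjection.isIdempotentElem.eq]
  exact ⟨rfl, rfl⟩

lemma symm : IsEquivalentIn G r s → IsEquivalentIn G s r := by
  rintro ⟨f, hf, hr, hs⟩
  exact ⟨star f, star_mem hf, by rwa [star_star], by rwa [star_star]⟩

lemma trans (hr : IsStarProjection r) (hp : IsStarProjection p) :
    IsEquivalentIn G r s → IsEquivalentIn G s p → IsEquivalentIn G r p := by
  rintro ⟨f, hf, hfr, hfs⟩ ⟨g, hg, hgs, hgp⟩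
  refine ⟨f * g, mul_mem hf hg, ?_, ?_⟩
  · calc f * g * star (f * g) = f * (g * star g) * star f := by simp only [star_mul, mul_assoc]
      _ = (f * star f) * (f * star f) := by simp only [hgs, ← hfs, mul_assoc]
      _ = r := by rw [hfr, hr.isIdempotentElem.eq]
  · calc star (f * g) * (f * g) = star g * (star f * f) * g := by simp only [star_mul, mul_assoc]
      _ = (star g * g) * (star g * g) := by simp only [hfs, ← hgs, mul_assoc]
      _ = p := by rw [hgp, hp.isIdempotentElem.eq]

end IsEquivalentIn

lemma IsMinimalProjection.isEquivalentIn (hr : IsMinimalProjection G r)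
    (hs : IsMinimalProjection G s) (hx : x ∈ G) (h : r * x * s ≠ 0) : IsEquivalentIn G r s := by
  have hrr := hr.isStarProjection.isIdempotentElem.eq
  have hmem : r * x * s ∈ G := mul_mem (mul_mem hr.mem hx) hs.mem
  obtain ⟨c, hc⟩ := hs.exists_smul_source hmem
    (by rw [mul_assoc, hs.isStarProjection.isIdempotentElem.eq]) h
  set f := c • (r * x * s) with hf
  have hfG : f ∈ G := SMulMemClass.smul_mem _ hmem
  have hrf : r * f = f := by rw [hf, mul_smul_comm, ← mul_assoc, ← mul_assoc, hrr]
  have hff : IsStarProjection (f * star f) := by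
    refine ⟨?_, IsSelfAdjoint.mul_star_self f⟩
    rw [IsIdempotentElem, mul_assoc, ← mul_assoc (star f), hc, ← mul_assoc,
      mul_self_eq_of_star_mul_self hs.isStarProjection hc]
  have hff0 : f * star f ≠ 0 := by
    rw [Ne, CStarRing.mul_star_self_eq_zero_iff]
    rintro h0
    exact hs.ne_zero (by rw [← hc, h0, mul_zero])
  obtain ⟨d, hd⟩ := hr.scalar (f * star f) (mul_mem hfG (star_mem hfG))
  have hrff : r * (f * star f) = f * star f := by rw [← mul_assoc, hrf]
  rw [hrff, (proj_mul_eq_iff_mul_proj_eq hr.isStarProjection hff).mp hrff] at hd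
  have hdd : (d * d) • r = d • r := by
    rw [← hd, ← hff.isIdempotentElem.eq, hd, smul_mul_smul_comm, hrr]
  have hd0 : d ≠ 0 := by
    rintro rfl
    exact hff0 (by rw [hd, zero_smul])
  have hd1 : d = 1 := mul_left_cancel₀ hd0 (by simpa using smul_left_injective ℂ hr.ne_zero hdd)
  exact ⟨f, hfG, by rw [hd, hd1, one_smul], hc⟩

lemma IsMinimalProjection.mul_eq_self_or_eq_zero {g : A} (hr : IsMinimalProjection G r)
    (hgG : g ∈ G) (hg : IsStarProjection g) (hgr : g * r = r * g) : g * r = r ∨ g * r = 0 := by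
  obtain ⟨c, hc⟩ := hr.scalar g hgG
  rw [← hgr, mul_assoc, hr.isStarProjection.isIdempotentElem.eq] at hc
  have hcc : (c * c) • r = c • r := by
    rw [← smul_smul, ← hc, ← mul_smul_comm, ← hc, ← mul_assoc, hg.isIdempotentElem.eq]
  have hc_idem : IsIdempotentElem c := smul_left_injective ℂ hr.ne_zero hcc
  rcases IsIdempotentElem.iff_eq_zero_or_one.mp hc_idem with rfl | rfl
  · exact Or.inr (by rw [hc, zero_smul])
  · exact Or.inl (by rw [hc, one_smul])

lemma exists_isMinimalProjection_decomposition_of_commute (G : NonUnitalStarSubalgebra ℂ A)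
    [FiniteDimensional ℂ G] {P : Set A} (hPG : P ⊆ G) (hP : ∀ g ∈ P, IsStarProjection g)
    (hcomm : ∀ g ∈ P, ∀ h ∈ P, g * h = h * g) :
    ∃ R : Finset A, (∀ r ∈ R, IsMinimalProjection G r) ∧
      (R : Set A).Pairwise (fun r s => r * s = 0) ∧ (∀ x ∈ G, (∑ r ∈ R, r) * x = x) ∧
      ∀ g ∈ P, ∀ r ∈ R, g * r = r ∨ g * r = 0 := by
  let G₀ := G ⊓ NonUnitalStarSubalgebra.centralizer ℂ P
  have mem_G₀ {x : A} (hx : x ∈ G) (h : ∀ g ∈ P, g * x = x * g) : x ∈ G₀ :=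
    ⟨hx, NonUnitalStarSubalgebra.mem_centralizer_iff ℂ |>.mpr fun g hg =>
      ⟨h g hg, by rw [(hP g hg).isSelfAdjoint.star_eq, h g hg]⟩⟩
  have commute_of_mem {x : A} (hx : x ∈ G₀) : ∀ g ∈ P, g * x = x * g := fun g hg =>
    ((NonUnitalStarSubalgebra.mem_centralizer_iff ℂ).mp hx.2 g hg).1
  have : FiniteDimensional ℂ G₀.toSubmodule :=
    have : FiniteDimensional ℂ G.toSubmodule := ‹FiniteDimensional ℂ G›
    Submodule.finiteDimensional_of_le (S₂ := G.toSubmodule) fun x hx => hx.1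
  have : FiniteDimensional ℂ G₀ := this
  obtain ⟨R, hR, horth, hunit⟩ := exists_isMinimalProjection_decomposition G₀
  have dichotomy : ∀ g ∈ P, ∀ r ∈ R, g * r = r ∨ g * r = 0 := fun g hg r hr =>
    (hR r hr).mul_eq_self_or_eq_zero (mem_G₀ (hPG hg) fun h hh => hcomm h hh g hg) (hP g hg)
      (commute_of_mem (hR r hr).mem g hg)
  have minimal : ∀ r ∈ R, IsMinimalProjection G r := by
    intro r hr
    have hrr := (hR r hr).isStarProjection.isIdempotentElem.eq
    refine ⟨(hR r hr).mem.1, (hR r hr).isStarProjection, (hR r hr).ne_zero, fun x hx => ?_⟩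
    have hmem : r * x * r ∈ G₀ := by
      refine mem_G₀ (mul_mem (mul_mem (hR r hr).mem.1 hx) (hR r hr).mem.1) fun g hg => ?_
      have hgr := commute_of_mem (hR r hr).mem g hg
      rw [mul_assoc _ r g, ← hgr, ← mul_assoc, ← mul_assoc]
      rcases dichotomy g hg r hr with h | h <;> simp only [h, zero_mul, mul_zero]
    obtain ⟨c, hc⟩ := (hR r hr).scalar _ hmem
    exact ⟨c, by simpa only [mul_assoc, hrr, ← mul_assoc r r] using hc⟩
  refine ⟨R, minimal, horth, fun x hx => ?_, dichotomy⟩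
  obtain ⟨R', hR', horth', hunit'⟩ := exists_isMinimalProjection_decomposition G
  set u' := ∑ r ∈ R', r
  have hu'G : u' ∈ G := sum_mem fun r hr => (hR' r hr).mem
  have hu' : IsStarProjection u' :=
    isStarProjection_sum (fun r hr => (hR' r hr).isStarProjection) horth'
  have hu'G₀ : u' ∈ G₀ := mem_G₀ hu'G fun g hg => by
    rw [hunit' g (hPG hg), (proj_mul_eq_iff_mul_proj_eq hu' (hP g hg)).mp (hunit' g (hPG hg))]
  rw [← hunit' x hx, ← mul_assoc, hunit u' hu'G₀]

end MinimalProjections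

section MatrixUnits

variable {A : Type*} [NonUnitalCStarAlgebra A] {ι : Type*} [Fintype ι]

/-- Columns of matrix units of the finite-dimensional algebra `F`: the elements
`e a * star (e b)` with `p a = p b` span `F`. The minimal projection `p a` labels the simple
summand of `F` that contains `e a`. -/
structure IsMatrixUnitFamily (F : NonUnitalStarSubalgebra ℂ A) (p e : ι → A) : Prop
    extends IsColumnFamily p e where
  mem : ∀ a, e a ∈ F
  scalar : ∀ x ∈ F, HasScalarCompression p e e x
  rangeProj_mul_mem : ∀ x ∈ F, rangeProj e * x = x

namespace IsMatrixUnitFamily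

variable {F : NonUnitalStarSubalgebra ℂ A} {p e : ι → A}

lemma mul_rangeProj (he : IsMatrixUnitFamily F p e) {x : A} (hx : x ∈ F) : x * rangeProj e = x := by
  simpa [he.isStarProjection_rangeProj.isSelfAdjoint.star_eq] using
    congrArg star (he.rangeProj_mul_mem _ (star_mem hx))

lemma frameMap_compression (he : IsMatrixUnitFamily F p e) {x : A} (hx : x ∈ F) :
    frameMap e e (compression p e e x) = x := by
  rw [← (he.scalar x hx).rangeProj_mul_mul he.toIsColumnFamily, he.rangeProj_mul_mem x hx,
    he.mul_rangeProj hx]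

lemma proj_mem (he : IsMatrixUnitFamily F p e) (a : ι) : p a ∈ F :=
  he.source a ▸ mul_mem (star_mem (he.mem a)) (he.mem a)

lemma rangeProj_mem (he : IsMatrixUnitFamily F p e) : rangeProj e ∈ F :=
  sum_mem fun a _ => mul_mem (he.mem a) (star_mem (he.mem a))

lemma proj_mul_proj (he : IsMatrixUnitFamily F p e) {a b : ι} (h : p a ≠ p b) : p a * p b = 0 := by
  obtain ⟨c, hc, hc0⟩ := he.scalar _ (mul_mem (he.mem a) (star_mem (he.mem b))) a b
  rw [hc0 h, zero_smul] at hc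
  rw [← he.source a, ← he.source b, ← hc]
  simp only [mul_assoc]

lemma proj_mul_comm (he : IsMatrixUnitFamily F p e) (a b : ι) : p a * p b = p b * p a := by
  by_cases h : p a = p b
  · rw [h]
  · rw [he.proj_mul_proj h, he.proj_mul_proj (Ne.symm h)]

lemma withZero (he : IsMatrixUnitFamily F p e) :
    IsMatrixUnitFamily F (fun s : Option ι => s.elim 0 p) (fun s => s.elim 0 e) where
  proj := by
    rintro (_ | a)
    exacts [IsStarProjection.zero _, he.proj a]
  source := by
    rintro (_ | a)
    exacts [mul_zero _, he.source a]
  orthogonal := by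
    rintro (_ | a) (_ | b) h
    exacts [mul_zero _, by simp, mul_zero _, he.orthogonal a b fun h' => h (congrArg some h')]
  mem := by
    rintro (_ | a)
    exacts [zero_mem F, he.mem a]
  scalar x hx := by
    rintro (_ | a) (_ | b)
    exacts [⟨0, by simp⟩, ⟨0, by simp⟩, ⟨0, by simp⟩, he.scalar x hx a b]
  rangeProj_mul_mem x hx := by
    have h : rangeProj (fun s : Option ι => s.elim 0 e) = rangeProj e := by simp [rangeProj]
    rw [h, he.rangeProj_mul_mem x hx]

end IsMatrixUnitFamily

/-- Choose a representative `p r` of the equivalence class of every `r ∈ R`, and a partial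
isometry `f r` from `p r` to `r`. -/
lemma exists_isMatrixUnitFamily_of_decomposition {G : NonUnitalStarSubalgebra ℂ A} {R : Finset A}
    (hR : ∀ r ∈ R, IsMinimalProjection G r) (horth : (R : Set A).Pairwise fun r s => r * s = 0)
    (hunit : ∀ x ∈ G, (∑ r ∈ R, r) * x = x) :
    ∃ p f : R → A, IsMatrixUnitFamily G p f ∧ ∀ r, f r * star (f r) = r := by
  let equivalence : Setoid R :=
    { r := fun r s => IsEquivalentIn G (r : A) s
      iseqv := ⟨fun r => .refl (hR r r.2), .symm, fun {r s t} =>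
        .trans (hR r r.2).isStarProjection (hR t t.2).isStarProjection⟩ }
  let rep (r : R) : R := (Quotient.mk equivalence r).out
  have hrep (r : R) : IsMinimalProjection G (rep r : A) := hR _ (rep r).2
  choose f hfG hrange hsource using fun r : R =>
    equivalence.symm (Quotient.mk_out (s := equivalence) r)
  have star_mul_self (r : R) : star (f r) * r = star (f r) := by
    refine mul_self_eq_of_star_mul_self (hR r r.2).isStarProjection ?_
    rw [star_star, hrange]
  have self_mul (r : R) : (r : A) * f r = f r := by
    simpa [(hR r r.2).isStarProjection.isSelfAdjoint.star_eq] using congrArg star (star_mul_self r)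
  have hf : IsColumnFamily (fun r => (rep r : A)) f := by
    refine ⟨fun r => (hrep r).isStarProjection, hsource, fun r s hrs => ?_⟩
    rw [← star_mul_self, ← self_mul s, mul_assoc, ← mul_assoc (r : A),
      horth r.2 s.2 fun h => hrs (Subtype.ext h), zero_mul, mul_zero]
  have rep_eq {r s : R} (h : IsEquivalentIn G (rep r : A) (rep s)) : rep r = rep s := by
    have := congrArg Quotient.out (Quotient.sound (s := equivalence) h)
    simpa only [rep, Quotient.out_eq] using this
  refine ⟨fun r => rep r, f, ⟨hf, hfG, fun x hx r s => ?_, fun x hx => ?_⟩, hrange⟩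
  · have hmem : star (f r) * x * f s ∈ G := mul_mem (mul_mem (star_mem (hfG r)) hx) (hfG s)
    have hcorner := hf.proj_mul_mul_proj hf x r s
    by_cases h : (rep r : A) = rep s
    · obtain ⟨c, hc⟩ := (hrep r).scalar _ hmem
      rw [← h] at hcorner
      exact ⟨c, hcorner.symm.trans hc, fun h' => absurd h h'⟩
    · refine ⟨0, ?_, fun _ => rfl⟩
      by_contra h0
      rw [zero_smul, ← hcorner] at h0
      exact h (congrArg _ (rep_eq ((hrep r).isEquivalentIn (hrep s) hmem h0)))
  · have hsum : rangeProj f = ∑ r ∈ R, r := by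
      simp only [rangeProj, hrange]
      exact Finset.sum_coe_sort R id
    rw [hsum, hunit x hx]

lemma exists_isMatrixUnitFamily {A : Type u} [NonUnitalCStarAlgebra A]
    (G : NonUnitalStarSubalgebra ℂ A) [FiniteDimensional ℂ G] {P : Set A} (hPG : P ⊆ G)
    (hP : ∀ g ∈ P, IsStarProjection g) (hcomm : ∀ g ∈ P, ∀ h ∈ P, g * h = h * g) :
    ∃ (S : Type u) (_ : Fintype S) (p f : S → A) (o : S), IsMatrixUnitFamily G p f ∧ f o = 0 ∧
      ∀ g ∈ P, ∀ s, g * f s = f s ∨ g * f s = 0 := by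
  obtain ⟨R, hR, horth, hunit, hPR⟩ :=
    exists_isMinimalProjection_decomposition_of_commute G hPG hP hcomm
  obtain ⟨p, f, hf, hrange⟩ := exists_isMatrixUnitFamily_of_decomposition hR horth hunit
  refine ⟨Option R, inferInstance, _, _, none, hf.withZero, rfl, ?_⟩
  rintro g hg (_ | r)
  · exact Or.inl (mul_zero g)
  · have hrf : r * f r = f r := by rw [← hrange, mul_assoc, hf.source, hf.mul_proj]
    simp only [Option.elim]
    rw [← hrf, ← mul_assoc]
    exact (hPR g hg r r.2).imp (fun h => by rw [h]) fun h => by rw [h, zero_mul]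

namespace IsMatrixUnitFamily

variable {F G : NonUnitalStarSubalgebra ℂ A} {p e : ι → A} {S : Type*} [Fintype S] {q f : S → A}

lemma exists_mul_eq_self (hf : IsMatrixUnitFamily G q f) (o : S) (ho : f o = 0) {r : A}
    (hrG : r ∈ G) (hr : IsStarProjection r) (hrf : ∀ s, r * f s = f s ∨ r * f s = 0) :
    ∃ s, r * f s = f s ∧ (f s = 0 ↔ r = 0) := by
  by_cases hr0 : r = 0
  · exact ⟨o, by rw [ho, mul_zero], by simp [ho, hr0]⟩
  obtain ⟨s, -, hs⟩ : ∃ s ∈ Finset.univ, f s * star (f s) * r ≠ 0 := by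
    refine Finset.exists_ne_zero_of_sum_ne_zero ?_
    rwa [← Finset.sum_mul, ← rangeProj, hf.rangeProj_mul_mem r hrG]
  have hrs : r * f s ≠ 0 := fun h => hs <| by
    rw [mul_assoc, ← hr.isSelfAdjoint.star_eq, ← star_mul, h, star_zero, mul_zero]
  have hrs' := (hrf s).resolve_right hrs
  exact ⟨s, hrs', iff_of_false (fun h => hrs (hrs'.trans h)) hr0⟩

lemma exists_expectation (he : IsMatrixUnitFamily F p e) (hf : IsMatrixUnitFamily G q f)
    (hFG : F ≤ G) (o : S) (ho : f o = 0) (hadapted : ∀ a s, p a * f s = f s ∨ p a * f s = 0) :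
    ∃ E : A →ₗ[ℂ] A, (∀ x, E x ∈ F) ∧ (∀ x ∈ G, ‖E x‖ ≤ ‖x‖) ∧ ∀ x ∈ F, E x = x := by
  classical
  have : Nonempty S := ⟨o⟩
  have : ∀ r ∈ Set.range p, ∃ s, r * f s = f s ∧ (f s = 0 ↔ r = 0) := by
    rintro _ ⟨a, rfl⟩
    exact hf.exists_mul_eq_self o ho (hFG (he.proj_mem a)) (he.proj a) (hadapted a)
  choose! σ hσ hσ0 using this
  let t (a : ι) : S := σ (p a)
  have ht (a : ι) : p a * f (t a) = f (t a) := hσ _ ⟨a, rfl⟩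
  have hu := he.toIsColumnFamily.mul_column hf.toIsColumnFamily ht
  have hcorner (x : A) (a b : ι) : star (e a * f (t a)) * x * (e b * f (t b)) =
      star (f (t a)) * (star (e a) * x * e b) * f (t b) := by simp only [star_mul, mul_assoc]
  have hscalar : ∀ x ∈ G, HasScalarCompression (q ∘ t) (fun a => e a * f (t a))
      (fun a => e a * f (t a)) x := fun x hx a b => hcorner x a b ▸ hf.scalar _
    (mul_mem (mul_mem (star_mem (hFG (he.mem a))) hx) (hFG (he.mem b))) (t a) (t b)
  refine ⟨frameMap e e ∘ₗ compression (q ∘ t) (fun a => e a * f (t a)) fun a => e a * f (t a),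
    fun x => frameMap_mem he.mem he.mem _, fun x hx => ?_, fun x hx => ?_⟩
  · exact (norm_frameMap_le he.toIsColumnFamily he.toIsColumnFamily _).trans
      (norm_compression_le hu hu (hscalar x hx))
  · rw [LinearMap.comp_apply]
    conv_rhs => rw [← he.frameMap_compression hx]
    congr 1
    ext a b
    obtain ⟨c, hc, hc0⟩ := he.scalar x hx a b
    refine compression_apply_congr (c := c) ?_ hc ?_
    · rw [hcorner, hc, mul_smul_comm, smul_mul_assoc, mul_assoc]
      by_cases hab : p a = p b
      · rw [show p a * f (t b) = f (t b) from hab ▸ ht b, show t b = t a by simp only [t, hab],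
          hf.source, Function.comp]
      · rw [hc0 hab, zero_smul, zero_smul]
    · rw [← hσ0 (p a) ⟨a, rfl⟩, Function.comp, ← hf.source, CStarRing.star_mul_self_eq_zero_iff]

end IsMatrixUnitFamily

lemma exists_contractive_projection {A : Type u} [NonUnitalCStarAlgebra A]
    (F G : NonUnitalStarSubalgebra ℂ A) [FiniteDimensional ℂ G] (hFG : F ≤ G) :
    ∃ E : A →ₗ[ℂ] A, (∀ x, E x ∈ F) ∧ (∀ x ∈ G, ‖E x‖ ≤ ‖x‖) ∧ ∀ x ∈ F, E x = x := by
  have : FiniteDimensional ℂ F :=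
    Submodule.finiteDimensional_of_le (S₁ := F.toSubmodule) (S₂ := G.toSubmodule) hFG
  obtain ⟨ι, _, p, e, -, he, -⟩ :=
    exists_isMatrixUnitFamily F (P := ∅) (by simp) (by simp) (by simp)
  obtain ⟨S, _, q, f, o, hf, ho, hadapted⟩ := exists_isMatrixUnitFamily G (P := Set.range p)
    (Set.range_subset_iff.mpr fun a => hFG (he.proj_mem a)) (Set.forall_mem_range.mpr he.proj)
    (by
      rintro _ ⟨a, rfl⟩ _ ⟨b, rfl⟩
      exact he.proj_mul_comm a b)
  exact he.exists_expectation hf hFG o ho (Set.forall_mem_range.mp hadapted)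

end MatrixUnits

section SimpleAlgebras

variable {B : Type*} [CStarAlgebra B]

lemma one_mem_span_singleton (hsimple : IsSimpleCStarAlgebra B) {r : B} (hr : r ≠ 0) :
    (1 : B) ∈ TwoSidedIdeal.span {r} := by
  set I := TwoSidedIdeal.span {r}
  let J : TwoSidedIdeal B := .mk' (closure I) (subset_closure (zero_mem I))
    (fun hx hy => map_mem_closure₂ continuous_add hx hy fun _ ha _ hb => add_mem ha hb)
    (fun hx => map_mem_closure continuous_neg hx fun _ ha => neg_mem ha)
    (fun {x _} hy => map_mem_closure (f := fun z => x * z) (by fun_prop) hy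
      fun _ ha => I.mul_mem_left _ _ ha)
    (fun {_ y} hx => map_mem_closure (f := fun z => z * y) (by fun_prop) hx
      fun _ ha => I.mul_mem_right _ _ ha)
  have hJ : (J : Set B) = closure I := TwoSidedIdeal.coe_mk' ..
  have hrJ : r ∈ J := by
    rw [← SetLike.mem_coe, hJ]
    exact subset_closure (TwoSidedIdeal.subset_span rfl)
  have hJtop : J = ⊤ := (hsimple J (hJ ▸ isClosed_closure)).resolve_left fun h =>
    hr ((TwoSidedIdeal.mem_bot B).mp (h ▸ hrJ))
  have hone : (1 : B) ∈ closure (I : Set B) := by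
    rw [← hJ, hJtop]
    trivial
  obtain ⟨u, hu, hdist⟩ := Metric.mem_closure_iff.mp hone 1 one_pos
  obtain ⟨u, rfl⟩ : IsUnit u := by
    simpa using isUnit_one_sub_of_norm_lt_one (x := 1 - u) (by rwa [← dist_eq_norm])
  rw [← u.inv_mul]
  exact I.mul_mem_left _ _ hu

lemma exists_sum_mul_mul_eq_one (hsimple : IsSimpleCStarAlgebra B) {r : B} (hr : r ≠ 0) :
    ∃ (n : ℕ) (x y : Fin n → B), ∑ i, x i * r * y i = 1 := by
  have h := TwoSidedIdeal.mem_span_iff_mem_addSubgroup_closure.mp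
    (one_mem_span_singleton hsimple hr)
  obtain ⟨n, c, g, hcg⟩ := Submodule.mem_span_set'.mp
    ((AddSubgroup.closure_le (Submodule.span ℤ _).toAddSubgroup).mpr Submodule.subset_span h)
  have hg i : ∃ x y, x * r * y = g i := by
    obtain ⟨_, ⟨x, -, _, rfl, rfl⟩, y, -, h⟩ := (g i).2
    exact ⟨x, y, h⟩
  choose x y hxy using hg
  exact ⟨n, fun i => c i • x i, y, by simpa only [smul_mul_assoc, hxy] using hcg⟩

lemma exists_mul_mul_ne_zero (hsimple : IsSimpleCStarAlgebra B) {x y : B} (hx : x ≠ 0)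
    (hy : y ≠ 0) : ∃ b, x * b * y ≠ 0 := by
  by_contra! h
  obtain ⟨n, a, b, hab⟩ := exists_sum_mul_mul_eq_one hsimple hy
  refine hx ?_
  rw [← mul_one x, ← hab, Finset.mul_sum]
  exact Finset.sum_eq_zero fun i _ => by rw [← mul_assoc, ← mul_assoc, h, zero_mul]

lemma finiteDimensional_of_scalar_corner (hsimple : IsSimpleCStarAlgebra B) {r : B} (hr : r ≠ 0)
    (hscalar : ∀ b, ∃ c : ℂ, r * b * r = c • r) : FiniteDimensional ℂ B := by
  obtain ⟨n, x, y, hxy⟩ := exists_sum_mul_mul_eq_one hsimple hr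
  let W : Submodule ℂ B :=
    Submodule.span ℂ (Set.range fun ij : Fin n × Fin n => x ij.1 * r * y ij.2)
  have hW : W = ⊤ := by
    refine eq_top_iff.mpr fun b _ => ?_
    have hb : b = ∑ i, ∑ j, x i * (r * (y i * b * x j) * r) * y j := by
      calc b = (∑ i, x i * r * y i) * b * ∑ j, x j * r * y j := by rw [hxy, one_mul, mul_one]
        _ = _ := by simp only [Finset.sum_mul, Finset.mul_sum, mul_assoc]; exact Finset.sum_comm
    rw [hb]
    refine sum_mem fun i _ => sum_mem fun j _ => ?_
    obtain ⟨c, hc⟩ := hscalar (y i * b * x j)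
    rw [hc, mul_smul_comm, smul_mul_assoc]
    exact W.smul_mem c (Submodule.subset_span ⟨(i, j), rfl⟩)
  exact Module.finite_def.mpr (hW ▸ Submodule.fg_span (Set.finite_range _))

variable {S : ℕ → NonUnitalStarSubalgebra ℂ B}

lemma forall_of_isClosed_of_isAFPresentation {A : Type*} [NonUnitalCStarAlgebra A]
    {S : ℕ → NonUnitalStarSubalgebra ℂ A} (hS : IsAFPresentation A S) {P : A → Prop}
    (hP : IsClosed {x | P x}) (h : ∀ k, ∀ x ∈ S k, P x) (x : A) : P x :=
  closure_minimal (Set.iUnion_subset h) hP (hS.2.2 x)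

lemma exists_mem_mul_mul_ne_zero (hsimple : IsSimpleCStarAlgebra B) (hS : IsAFPresentation B S)
    {x y : B} (hx : x ≠ 0) (hy : y ≠ 0) : ∃ k, ∃ b ∈ S k, x * b * y ≠ 0 := by
  by_contra! h
  obtain ⟨b, hb⟩ := exists_mul_mul_ne_zero hsimple hx hy
  exact hb (forall_of_isClosed_of_isAFPresentation hS
    (isClosed_eq (by fun_prop) continuous_const) h b)

lemma exists_proper_subprojection (hsimple : IsSimpleCStarAlgebra B)
    (hinf : ¬ FiniteDimensional ℂ B) (hS : IsAFPresentation B S) {n : ℕ} {q : B} (hq : q ∈ S n)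
    (hproj : IsStarProjection q) (hq0 : q ≠ 0) :
    ∃ n' ≥ n, ∃ s ∈ S n', IsStarProjection s ∧ s ≠ 0 ∧ s ≠ q ∧ q * s = s := by
  by_contra! h
  have hfin := hS.2.1
  have minimal (m : ℕ) (hm : n ≤ m) : IsMinimalProjection (S m) q :=
    isMinimalProjection_of_forall_eq (hS.1 hm hq) hproj hq0 fun s hs hsp hs0 hqs =>
      by_contra fun hne => h m hm s hs hsp hs0 hne hqs
  refine hinf (finiteDimensional_of_scalar_corner hsimple hq0 fun b => ?_)
  have hmem : q * b * q ∈ Submodule.span ℂ {q} := by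
    refine forall_of_isClosed_of_isAFPresentation (P := fun b => q * b * q ∈ Submodule.span ℂ {q})
      hS ((Submodule.closed_of_finiteDimensional _).preimage (f := fun b => q * b * q)
        (by fun_prop)) (fun k x hx => ?_) b
    obtain ⟨c, hc⟩ := (minimal (max n k) (le_max_left n k)).scalar x (hS.1 (le_max_right n k) hx)
    exact Submodule.mem_span_singleton.mpr ⟨c, hc.symm⟩
  obtain ⟨c, hc⟩ := Submodule.mem_span_singleton.mp hmem
  exact ⟨c, hc.symm⟩

lemma exists_isMinimalProjection_equivalent_le {G : NonUnitalStarSubalgebra ℂ B}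
    [FiniteDimensional ℂ G] {s s' b : B} (hs : IsStarProjection s) (hs' : IsStarProjection s')
    (hsG : s ∈ G) (hs'G : s' ∈ G) (hb : b ∈ G) (hne : s * b * s' ≠ 0) :
    ∃ r, IsMinimalProjection G r ∧ s' * r = r ∧ ∃ u ∈ G, s * u = u ∧ star u * u = r := by
  set x := s * b * s' with hx
  have hxG : x ∈ G := mul_mem (mul_mem hsG hb) hs'G
  have hsx : s * x = x := by rw [hx, ← mul_assoc, ← mul_assoc, hs.isIdempotentElem.eq]
  obtain ⟨r, hr, y, hy⟩ :=
    exists_isMinimalProjection_eq_mul (star_mem hxG) (star_ne_zero.mpr hne)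
  have hrr := hr.isStarProjection.isIdempotentElem.eq
  have hs'r : s' * r = r := by
    rw [← hy, hx, star_mul, hs'.isSelfAdjoint.star_eq, ← mul_assoc, ← mul_assoc,
      hs'.isIdempotentElem.eq]
  have hxr : x * r ≠ 0 := fun h => hr.ne_zero <| by
    calc r = star (star x * y) * r := by rw [hy, hr.isStarProjection.isSelfAdjoint.star_eq, hrr]
      _ = 0 := by rw [star_mul, star_star, mul_assoc, h, mul_zero]
  obtain ⟨c, hc⟩ := hr.exists_smul_source (mul_mem hxG hr.mem) (by rw [mul_assoc, hrr]) hxr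
  refine ⟨r, hr, hs'r, c • (x * r), SMulMemClass.smul_mem _ (mul_mem hxG hr.mem), ?_, hc⟩
  rw [mul_smul_comm, ← mul_assoc, hsx]

/-- Splitting `q = s + (q - s)`, primeness connects the two pieces by some `s * b * (q - s) ≠ 0`,
hence they contain equivalent minimal projections. -/
lemma exists_two_columns (hsimple : IsSimpleCStarAlgebra B) (hinf : ¬ FiniteDimensional ℂ B)
    (hS : IsAFPresentation B S) {n : ℕ} {q : B} (hq : q ∈ S n) (hproj : IsStarProjection q)
    (hq0 : q ≠ 0) :
    ∃ n' ≥ n, ∃ r, IsMinimalProjection (S n') r ∧ ∃ t : Bool → B,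
      (∀ i, t i ∈ S n') ∧ (∀ i, q * t i = t i) ∧ IsColumnFamily (fun _ => r) t := by
  obtain ⟨m, hnm, s, hsm, hs, hs0, hsq, hqs⟩ :=
    exists_proper_subprojection hsimple hinf hS hq hproj hq0
  have hsq' : s * q = s := (proj_mul_eq_iff_mul_proj_eq hproj hs).mp hqs
  have hs' : IsStarProjection (q - s) := hs.sub_of_mul_eq_left hproj hsq'
  have hqs' : q * (q - s) = q - s := by rw [mul_sub, hproj.isIdempotentElem.eq, hqs]
  have hss' : s * (q - s) = 0 := by rw [mul_sub, hs.isIdempotentElem.eq, hsq', sub_self]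
  obtain ⟨k, b, hb, hsb⟩ :=
    exists_mem_mul_mul_ne_zero hsimple hS hs0 (sub_ne_zero.mpr hsq.symm)
  have hm := hS.1 (le_max_left m k)
  have hfin := hS.2.1 (max m k)
  obtain ⟨r, hr, hs'r, u, huS, hsu, hu⟩ := exists_isMinimalProjection_equivalent_le hs hs'
    (hm hsm) (hm (sub_mem (hS.1 hnm hq) hsm)) (hS.1 (le_max_right m k) hb) hsb
  have hrsa := hr.isStarProjection.isSelfAdjoint.star_eq
  have hur : star u * r = 0 := by
    rw [← hsu, ← hs'r, star_mul, hs.isSelfAdjoint.star_eq, mul_assoc, ← mul_assoc s, hss',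
      zero_mul, mul_zero]
  have hqr : q * r = r := by rw [← hs'r, ← mul_assoc, hqs']
  have hqu : q * u = u := by rw [← hsu, ← mul_assoc, hqs]
  refine ⟨max m k, hnm.trans (le_max_left m k), r, hr, fun i => cond i u r, ?_, ?_,
    fun _ => hr.isStarProjection, ?_, ?_⟩
  · rintro (_ | _)
    exacts [hr.mem, huS]
  · rintro (_ | _)
    exacts [hqr, hqu]
  · rintro (_ | _)
    exacts [by rw [cond_false, hrsa, hr.isStarProjection.isIdempotentElem.eq], hu]
  · rintro (_ | _) (_ | _) h
    exacts [absurd rfl h, by simpa [hrsa] using congrArg star hur, hur, absurd rfl h]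

lemma exists_fin_succ_columns (hsimple : IsSimpleCStarAlgebra B)
    (hinf : ¬ FiniteDimensional ℂ B) (hS : IsAFPresentation B S) (m : ℕ) {n : ℕ} {q : B}
    (hq : q ∈ S n) (hproj : IsStarProjection q) (hq0 : q ≠ 0) :
    ∃ n' ≥ n, ∃ r, IsMinimalProjection (S n') r ∧ ∃ t : Fin (m + 1) → B,
      (∀ i, t i ∈ S n') ∧ (∀ i, q * t i = t i) ∧ IsColumnFamily (fun _ => r) t := by
  induction m generalizing n q with
  | zero =>
    have := hS.2.1 n
    obtain ⟨r, hr, hqr⟩ := exists_isMinimalProjection_le hq hproj hq0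
    refine ⟨n, le_rfl, r, hr, fun _ => r, fun _ => hr.mem, fun _ => hqr,
      fun _ => hr.isStarProjection, fun _ => ?_,
      fun i j h => absurd (Subsingleton.elim (α := Fin 1) i j) h⟩
    rw [hr.isStarProjection.isSelfAdjoint.star_eq, hr.isStarProjection.isIdempotentElem.eq]
  | succ m ih =>
    obtain ⟨n₁, hn₁, r₁, hr₁, t₁, ht₁S, hqt₁, ht₁⟩ :=
      exists_two_columns hsimple hinf hS hq hproj hq0
    obtain ⟨n₂, hn₂, r₂, hr₂, t₂, ht₂S, hrt₂, ht₂⟩ := ih hr₁.mem hr₁.isStarProjection hr₁.ne_zero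
    let g : Fin (m + 2) → Fin (m + 1) × Bool := Fin.cases (0, true) fun i => (i, false)
    have hg : Function.Injective g := by
      refine Fin.cases ?_ fun i => ?_ <;> refine Fin.cases ?_ fun j => ?_ <;> simp [g]
    refine ⟨n₂, hn₁.trans hn₂, r₂, hr₂, _, fun i => ?_, fun i => ?_, (IsColumnFamily.comp
      (r' := fun _ => r₂) ht₁ (t := fun α => t₂ α.1) (fun _ => ht₂) fun α => hrt₂ α.1).reindex hg⟩
    · exact mul_mem (hS.1 hn₂ (ht₁S _)) (ht₂S _)
    · rw [← mul_assoc, hqt₁]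

lemma exists_columns (hsimple : IsSimpleCStarAlgebra B) (hinf : ¬ FiniteDimensional ℂ B)
    (hS : IsAFPresentation B S) (T : Type*) [Finite T] {n : ℕ} {q : B} (hq : q ∈ S n)
    (hproj : IsStarProjection q) (hq0 : q ≠ 0) :
    ∃ n' ≥ n, ∃ r, IsMinimalProjection (S n') r ∧ ∃ t : T → B,
      (∀ i, t i ∈ S n') ∧ (∀ i, q * t i = t i) ∧ IsColumnFamily (fun _ => r) t := by
  obtain ⟨m, ⟨g⟩⟩ := Finite.exists_equiv_fin T
  obtain ⟨n', hn', r, hr, t, htS, hqt, ht⟩ :=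
    exists_fin_succ_columns hsimple hinf hS m hq hproj hq0
  exact ⟨n', hn', r, hr, _, fun i => htS _, fun i => hqt _,
    ht.reindex ((Fin.castSucc_injective m).comp g.injective)⟩

end SimpleAlgebras

section Intertwining

variable {A B ι : Type*} [NonUnitalCStarAlgebra A] [CStarAlgebra B] [Fintype ι]
  {M : Matrix ι ι ℂ}

/-- `y` maps the span of the columns `w` to the span of the columns `v` by the matrix `M`, and
`star y` maps the span of the columns `v` to the span of the columns `w` by `Mᴴ`. -/
structure Intertwines (v w : ι → A) (M : Matrix ι ι ℂ) (y : A) : Prop where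
  star_mul : ∀ a, star (v a) * y = ∑ b, M a b • star (w b)
  mul : ∀ b, y * w b = ∑ a, M a b • v a

lemma Intertwines.compression_eq {r v w : ι → A} {y : A} (h : Intertwines v w M y)
    (hM : IsBlockMatrix r M) (hv : IsColumnFamily r v) : compression r v w y = M := by
  ext a b
  by_cases ha : r a = 0
  · rw [compression_apply_eq_zero ha, by_contra fun hab => (hM a b hab).2 ha]
  · refine compression_apply_eq ha ?_
    rw [mul_assoc, h.mul, Finset.mul_sum, ← hv.source, ← mul_smul_comm]
    refine Finset.sum_eq_single a (fun a' _ ha' => ?_) (by simp)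
    rw [mul_smul_comm, hv.orthogonal a a' ha'.symm, smul_zero]

variable {r v w : ι → B} {y : B}

lemma IsBlockMatrix.intertwines (hM : IsBlockMatrix r M) (hv : IsColumnFamily r v)
    (hw : IsColumnFamily r w) (z : B) :
    Intertwines v w M (frameMap v w M + (1 - rangeProj v) * z * (1 - rangeProj w)) where
  star_mul a := by
    rw [mul_add, mul_assoc (1 - _), ← mul_assoc, mul_sub (star _), mul_one, hv.star_mul_rangeProj,
      sub_self, zero_mul, add_zero, hv.star_mul_frameMap]
    refine Finset.sum_congr rfl fun b _ => ?_
    by_cases hab : M a b = 0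
    · rw [hab, zero_smul, zero_smul]
    · rw [(hM a b hab).1, hw.proj_mul_star]
  mul b := by
    rw [add_mul, mul_assoc _ _ (w b), sub_mul 1 _ (w b), one_mul, hw.rangeProj_mul, sub_self,
      mul_zero, add_zero, hw.frameMap_mul]
    refine Finset.sum_congr rfl fun a _ => ?_
    by_cases hab : M a b = 0
    · rw [hab, zero_smul, zero_smul]
    · rw [← (hM a b hab).1, hv.mul_proj]

lemma Intertwines.frameMap_add_eq (h : Intertwines v w M y) (hw : IsColumnFamily r w) :
    frameMap v w M + (1 - rangeProj v) * y * (1 - rangeProj w) = y := by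
  have left : rangeProj v * y = frameMap v w M := by
    simp only [rangeProj, Finset.sum_mul, mul_assoc, h.star_mul, frameMap_apply, Finset.mul_sum,
      mul_smul_comm]
  have right : y * rangeProj w = frameMap v w M := by
    simp only [rangeProj, Finset.mul_sum, ← mul_assoc, h.mul, frameMap_apply, Finset.sum_mul,
      smul_mul_assoc]
    exact Finset.sum_comm
  rw [sub_mul, one_mul, left, sub_mul, mul_sub, mul_sub, mul_one, mul_one, right,
    hw.frameMap_mul_rangeProj]
  abel

end Intertwining

section AdaptedMatrixUnits

variable {A : Type*} [NonUnitalCStarAlgebra A] {ι S : Type*}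
  {F G : NonUnitalStarSubalgebra ℂ A} {p e p' e' : ι → A} {q f : S → A}

lemma IsColumnFamily.mul_of_adapted (he' : IsColumnFamily p' e') (hf : IsColumnFamily q f)
    (hadapted : ∀ a s, p' a * f s = f s ∨ p' a * f s = 0) :
    IsColumnFamily (fun α : S × ι => star (f α.1) * (p' α.2 * f α.1))
      (fun α => e' α.2 * f α.1) := by
  have proj_mul_mul (a : ι) (s : S) : p' a * (p' a * f s) = p' a * f s := by
    rw [← mul_assoc, (he'.proj a).isIdempotentElem.eq]
  have compressed (a : ι) :
      IsColumnFamily (fun s => star (f s) * (p' a * f s)) fun s => p' a * f s := by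
    refine ⟨fun s => ?_, fun s => ?_, fun s s' hs => ?_⟩
    · rcases hadapted a s with h | h
      · rw [h, hf.source]
        exact hf.proj s
      · simp only [h, mul_zero, IsStarProjection.zero]
    · rw [star_mul, (he'.proj a).isSelfAdjoint.star_eq, mul_assoc, proj_mul_mul]
    · rcases hadapted a s with h | h <;> rcases hadapted a s' with h' | h' <;>
        simp [h, h', hf.orthogonal s s' hs]
  have h := he'.comp (t := fun α : S × ι => p' α.2 * f α.1)
    (r' := fun α => star (f α.1) * (p' α.2 * f α.1)) compressed fun α => proj_mul_mul α.2 α.1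
  simpa only [← mul_assoc, he'.mul_proj] using h

variable [Fintype ι] [Fintype S]

namespace IsMatrixUnitFamily

lemma mul_of_adapted (hf : IsMatrixUnitFamily G q f) (he' : IsColumnFamily p' e')
    (hmem : ∀ a, e' a ∈ G) (hadapted : ∀ a s, p' a * f s = f s ∨ p' a * f s = 0)
    (hrange : rangeProj e' = rangeProj f) :
    IsMatrixUnitFamily G (fun α : S × ι => star (f α.1) * (p' α.2 * f α.1))
      (fun α => e' α.2 * f α.1) := by
  have vanish {a : ι} {s : S} (h : p' a * f s = 0) : e' a * f s = 0 := by
    rw [← he'.mul_proj, mul_assoc, h, mul_zero]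
  refine ⟨he'.mul_of_adapted hf.toIsColumnFamily hadapted, fun α => mul_mem (hmem _) (hf.mem _),
    ?_, fun x hx => ?_⟩
  · rintro x hx ⟨s, a⟩ ⟨s', b⟩
    rcases hadapted a s with ha | ha
    · rcases hadapted b s' with hb | hb
      · have hcorner : star (e' a * f s) * x * (e' b * f s') =
            star (f s) * (star (e' a) * x * e' b) * f s' := by simp only [star_mul, mul_assoc]
        simp only [ha, hb, hf.source, hcorner]
        exact hf.scalar _ (mul_mem (mul_mem (star_mem (hmem a)) hx) (hmem b)) s s'
      · exact ⟨0, by simp only [vanish hb, mul_zero, zero_smul], fun _ => rfl⟩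
    · exact ⟨0, by simp only [vanish ha, star_zero, zero_mul, zero_smul], fun _ => rfl⟩
  · have h : rangeProj (fun α : S × ι => e' α.2 * f α.1) = rangeProj f := by
      calc rangeProj (fun α : S × ι => e' α.2 * f α.1)
          = ∑ a, e' a * rangeProj f * star (e' a) := by
            simp only [rangeProj, Fintype.sum_prod_type_right, star_mul, Finset.mul_sum,
              Finset.sum_mul, mul_assoc]
        _ = rangeProj e' := Finset.sum_congr rfl fun a _ => by rw [hf.mul_rangeProj (hmem a)]
        _ = rangeProj f := hrange
    rw [h, hf.rangeProj_mul_mem x hx]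

section Complement

variable (he : IsMatrixUnitFamily F p e) (hf : IsMatrixUnitFamily G q f) (hFG : F ≤ G)
include he hf hFG

lemma isStarProjection_rangeProj_sub : IsStarProjection (rangeProj f - rangeProj e) :=
  he.isStarProjection_rangeProj.sub_of_mul_eq_right hf.isStarProjection_rangeProj
    (hf.rangeProj_mul_mem _ (hFG he.rangeProj_mem))

lemma rangeProj_sub_mul {x : A} (hx : x ∈ F) : (rangeProj f - rangeProj e) * x = 0 := by
  rw [sub_mul, hf.rangeProj_mul_mem x (hFG hx), he.rangeProj_mul_mem x hx, sub_self]

lemma mul_rangeProj_sub {x : A} (hx : x ∈ F) : x * (rangeProj f - rangeProj e) = 0 := by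
  rw [mul_sub, hf.mul_rangeProj (hFG hx), he.mul_rangeProj hx, sub_self]

variable [DecidableEq ι]

lemma isColumnFamily_update (o : ι) :
    IsColumnFamily (Function.update p o (rangeProj f - rangeProj e))
      (Function.update e o (rangeProj f - rangeProj e)) := by
  have hz := isStarProjection_rangeProj_sub he hf hFG
  refine ⟨fun a => ?_, fun a => ?_, fun a b hab => ?_⟩
  · rcases eq_or_ne a o with rfl | ha
    · rwa [Function.update_self]
    · rw [Function.update_of_ne ha]
      exact he.proj a
  · rcases eq_or_ne a o with rfl | ha
    · simp only [Function.update_self, hz.isSelfAdjoint.star_eq, hz.isIdempotentElem.eq]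
    · simp only [Function.update_of_ne ha, he.source]
  · rcases eq_or_ne a o with rfl | ha
    · rw [Function.update_self, Function.update_of_ne hab.symm, hz.isSelfAdjoint.star_eq,
        rangeProj_sub_mul he hf hFG (he.mem b)]
    · rcases eq_or_ne b o with rfl | hb
      · rw [Function.update_self, Function.update_of_ne ha,
          mul_rangeProj_sub he hf hFG (star_mem (he.mem a))]
      · rw [Function.update_of_ne ha, Function.update_of_ne hb, he.orthogonal a b hab]

lemma rangeProj_update {o : ι} (ho : e o = 0) :
    rangeProj (Function.update e o (rangeProj f - rangeProj e)) = rangeProj f := by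
  have hz := isStarProjection_rangeProj_sub he hf hFG
  have h a : Function.update e o (rangeProj f - rangeProj e) a *
      star (Function.update e o (rangeProj f - rangeProj e) a) =
        (if a = o then rangeProj f - rangeProj e else 0) + e a * star (e a) := by
    rcases eq_or_ne a o with rfl | ha
    · simp [ho, hz.isSelfAdjoint.star_eq, hz.isIdempotentElem.eq]
    · simp [ha]
  rw [rangeProj, Finset.sum_congr rfl fun a _ => h a, Finset.sum_add_distrib,
    Finset.sum_ite_eq' Finset.univ, if_pos (Finset.mem_univ o), ← rangeProj, sub_add_cancel]

lemma star_update_mul_mul_update {o : ι} (ho : e o = 0) {x : A} (hx : x ∈ F) (a b : ι) :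
    star (Function.update e o (rangeProj f - rangeProj e) a) * x *
      Function.update e o (rangeProj f - rangeProj e) b =
        compression p e e x a b • Function.update p o (rangeProj f - rangeProj e) a := by
  have hz := isStarProjection_rangeProj_sub he hf hFG
  have hpo : p o = 0 := by rw [← he.source, ho, mul_zero]
  have hM := isBlockMatrix_compression (he.scalar x hx)
  rcases eq_or_ne a o with rfl | ha
  · rw [compression_apply_eq_zero hpo, zero_smul, Function.update_self, hz.isSelfAdjoint.star_eq,
      rangeProj_sub_mul he hf hFG hx, zero_mul]
  rw [Function.update_of_ne ha, Function.update_of_ne ha]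
  rcases eq_or_ne b o with rfl | hb
  · rw [by_contra fun h => (hM a b h).2 ((hM a b h).1.trans hpo), zero_smul, Function.update_self,
      mul_rangeProj_sub he hf hFG (mul_mem (star_mem (he.mem a)) hx)]
  · rw [Function.update_of_ne hb, (he.scalar x hx).star_mul_mul]

end Complement

end IsMatrixUnitFamily

end AdaptedMatrixUnits

section FramePairs

variable {A : Type u} {B : Type*} [NonUnitalCStarAlgebra A] [CStarAlgebra B]
  {F G : NonUnitalStarSubalgebra ℂ A} {H H' : NonUnitalStarSubalgebra ℂ B}

/-- Matrix units `e` of `F`, with source projections `p`, and two families of columns `v` and `w` of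
`H` over the same index set, each with source a fixed minimal projection `q` of `H` or zero. The
index `o` is reserved: `e o = 0`, but `v o` and `w o` are nonzero, so that they can be refined to
columns matching the complement of the unit of `F` in a larger algebra. -/
structure FramePair (F : NonUnitalStarSubalgebra ℂ A) (H : NonUnitalStarSubalgebra ℂ B) where
  ι : Type u
  [fintype : Fintype ι]
  p : ι → A
  e : ι → A
  q : B
  r : ι → B
  v : ι → B
  w : ι → B
  o : ι
  isMatrixUnitFamily : IsMatrixUnitFamily F p e
  e_o : e o = 0
  isMinimalProjection : IsMinimalProjection H q
  isColumnFamily_v : IsColumnFamily r v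
  isColumnFamily_w : IsColumnFamily r w
  v_mem : ∀ a, v a ∈ H
  w_mem : ∀ a, w a ∈ H
  r_eq : ∀ a, r a = 0 ∨ r a = q
  r_o : r o = q
  e_eq_zero : ∀ a, r a = 0 → e a = 0

namespace FramePair

attribute [instance] FramePair.fintype

/-- The compression of `B` to the columns of `H`, carried over to the matrix units of `F`. -/
noncomputable def delta (Φ : FramePair F H) : B →ₗ[ℂ] A :=
  frameMap Φ.e Φ.e ∘ₗ compression Φ.r Φ.v Φ.w

/-- The coefficient matrix of an element of `F` with respect to the matrix units `Φ.e`. -/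
noncomputable def coeff (Φ : FramePair F H) : A →ₗ[ℂ] Matrix Φ.ι Φ.ι ℂ :=
  compression Φ.p Φ.e Φ.e

lemma r_eq_q (Φ : FramePair F H) {a : Φ.ι} (h : Φ.e a ≠ 0) : Φ.r a = Φ.q :=
  (Φ.r_eq a).resolve_left fun h' => h (Φ.e_eq_zero a h')

lemma ne_o (Φ : FramePair F H) {a : Φ.ι} (h : Φ.e a ≠ 0) : a ≠ Φ.o :=
  ne_of_apply_ne Φ.e (h.trans_eq Φ.e_o.symm)

lemma e_ne_zero (Φ : FramePair F H) {x : A} (hx : x ∈ F) {a b : Φ.ι} (hab : Φ.coeff x a b ≠ 0) :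
    Φ.e a ≠ 0 ∧ Φ.e b ≠ 0 := by
  obtain ⟨h, h0⟩ := isBlockMatrix_compression (Φ.isMatrixUnitFamily.scalar x hx) a b hab
  rw [← Φ.isMatrixUnitFamily.source a] at h h0
  rw [← Φ.isMatrixUnitFamily.source b] at h
  exact ⟨right_ne_zero_of_mul h0, right_ne_zero_of_mul (h ▸ h0)⟩

lemma isBlockMatrix_coeff (Φ : FramePair F H) {x : A} (hx : x ∈ F) :
    IsBlockMatrix Φ.r (Φ.coeff x) := fun a b hab => by
  obtain ⟨ha, hb⟩ := Φ.e_ne_zero hx hab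
  rw [Φ.r_eq_q ha, Φ.r_eq_q hb]
  exact ⟨rfl, Φ.isMinimalProjection.ne_zero⟩

lemma hasScalarCompression (Φ : FramePair F H) {y : B} (hy : y ∈ H) :
    HasScalarCompression Φ.r Φ.v Φ.w y := by
  intro a b
  rcases Φ.r_eq a with ha | ha
  · exact ⟨0, by simp [Φ.isColumnFamily_v.eq_zero ha], fun _ => rfl⟩
  rcases Φ.r_eq b with hb | hb
  · exact ⟨0, by simp [Φ.isColumnFamily_w.eq_zero hb], fun _ => rfl⟩
  obtain ⟨c, hc⟩ := Φ.isMinimalProjection.scalar _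
    (mul_mem (mul_mem (star_mem (Φ.v_mem a)) hy) (Φ.w_mem b))
  refine ⟨c, ?_, fun h => absurd (ha.trans hb.symm) h⟩
  rw [← Φ.isColumnFamily_v.proj_mul_mul_proj Φ.isColumnFamily_w y a b, ha, hb, hc]

lemma norm_delta_le (Φ : FramePair F H) {y : B} (hy : y ∈ H) : ‖Φ.delta y‖ ≤ ‖y‖ := by
  classical
  exact (norm_frameMap_le Φ.isMatrixUnitFamily.toIsColumnFamily
    Φ.isMatrixUnitFamily.toIsColumnFamily _).trans
    (norm_compression_le Φ.isColumnFamily_v Φ.isColumnFamily_w (Φ.hasScalarCompression hy))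

lemma norm_frameMap_coeff_le (Φ : FramePair F H) {x : A} (hx : x ∈ F) :
    ‖frameMap Φ.v Φ.w (Φ.coeff x)‖ ≤ ‖x‖ := by
  classical
  exact (norm_frameMap_le Φ.isColumnFamily_v Φ.isColumnFamily_w _).trans
    (norm_compression_le Φ.isMatrixUnitFamily.toIsColumnFamily
      Φ.isMatrixUnitFamily.toIsColumnFamily (Φ.isMatrixUnitFamily.scalar x hx))

lemma delta_eq (Φ : FramePair F H) {x : A} (hx : x ∈ F) {y : B}
    (h : Intertwines Φ.v Φ.w (Φ.coeff x) y) : Φ.delta y = x := by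
  rw [delta, LinearMap.comp_apply, h.compression_eq (Φ.isBlockMatrix_coeff hx) Φ.isColumnFamily_v]
  exact Φ.isMatrixUnitFamily.frameMap_compression hx

end FramePair

end FramePairs

section Refinements

variable {A : Type u} {B : Type*} [NonUnitalCStarAlgebra A] [CStarAlgebra B]
  {F G : NonUnitalStarSubalgebra ℂ A} {H H' : NonUnitalStarSubalgebra ℂ B}

/-- The data refining a frame pair `Φ` to larger algebras `G` and `H'`: matrix units `f` of `G`
adapted to the projections of `Φ`, with a zero column at `o`, and columns `t` of `H'` below `Φ.q`
over a minimal projection `q` of `H'`. The `Bool` component provides two orthogonal copies of the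
columns, from which `v` and `w` are refined. -/
structure Refinement (Φ : FramePair F H) (G : NonUnitalStarSubalgebra ℂ A)
    (H' : NonUnitalStarSubalgebra ℂ B) where
  S : Type u
  [fintype : Fintype S]
  p : S → A
  f : S → A
  o : S
  q : B
  t : S × Bool → B
  le_left : F ≤ G
  le_right : H ≤ H'
  isMatrixUnitFamily : IsMatrixUnitFamily G p f
  f_o : f o = 0
  rangeProj_adapted : ∀ s, rangeProj Φ.e * f s = f s ∨ rangeProj Φ.e * f s = 0
  proj_adapted : ∀ a s, Φ.p a * f s = f s ∨ Φ.p a * f s = 0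
  isMinimalProjection : IsMinimalProjection H' q
  isColumnFamily : IsColumnFamily (fun _ => q) t
  t_mem : ∀ i, t i ∈ H'
  q_mul_t : ∀ i, Φ.q * t i = t i

namespace Refinement

attribute [instance] Refinement.fintype

variable {Φ : FramePair F H} (R : Refinement Φ G H')

open Classical in
/-- The source projections of the columns `completedE`. -/
noncomputable def completedP : Φ.ι → A :=
  Function.update Φ.p Φ.o (rangeProj R.f - rangeProj Φ.e)

open Classical in
/-- The columns `Φ.e`, with the zero column replaced by the complement of the unit of `F` in the
unit of `G`. -/
noncomputable def completedE : Φ.ι → A :=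
  Function.update Φ.e Φ.o (rangeProj R.f - rangeProj Φ.e)

lemma completedE_o : R.completedE Φ.o = rangeProj R.f - rangeProj Φ.e := by
  classical exact Function.update_self ..

lemma completedP_o : R.completedP Φ.o = rangeProj R.f - rangeProj Φ.e := by
  classical exact Function.update_self ..

lemma completedE_of_ne {a : Φ.ι} (ha : a ≠ Φ.o) : R.completedE a = Φ.e a := by
  classical exact Function.update_of_ne ha _ _

lemma completedP_of_ne {a : Φ.ι} (ha : a ≠ Φ.o) : R.completedP a = Φ.p a := by
  classical exact Function.update_of_ne ha _ _

lemma isColumnFamily_completedE : IsColumnFamily R.completedP R.completedE := by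
  classical exact Φ.isMatrixUnitFamily.isColumnFamily_update R.isMatrixUnitFamily R.le_left Φ.o

lemma completedE_mem (a : Φ.ι) : R.completedE a ∈ G := by
  by_cases ha : a = Φ.o
  · rw [ha, completedE_o]
    exact sub_mem R.isMatrixUnitFamily.rangeProj_mem (R.le_left Φ.isMatrixUnitFamily.rangeProj_mem)
  · rw [R.completedE_of_ne ha]
    exact R.le_left (Φ.isMatrixUnitFamily.mem a)

lemma completedP_adapted (a : Φ.ι) (s : R.S) :
    R.completedP a * R.f s = R.f s ∨ R.completedP a * R.f s = 0 := by
  by_cases ha : a = Φ.o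
  · rw [ha, completedP_o, sub_mul, R.isMatrixUnitFamily.rangeProj_mul]
    rcases R.rangeProj_adapted s with h | h
    · exact Or.inr (by rw [h, sub_self])
    · exact Or.inl (by rw [h, sub_zero])
  · rw [R.completedP_of_ne ha]
    exact R.proj_adapted a s

lemma completedP_o_mul {a : Φ.ι} (ha : a ≠ Φ.o) : R.completedP Φ.o * R.completedP a = 0 := by
  rw [R.completedP_of_ne ha, completedP_o]
  exact Φ.isMatrixUnitFamily.rangeProj_sub_mul R.isMatrixUnitFamily R.le_left
    (Φ.isMatrixUnitFamily.proj_mem a)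

/-- The source projections of the columns `refinedE`. -/
noncomputable def refinedP (α : R.S × Φ.ι) : A := star (R.f α.1) * (R.completedP α.2 * R.f α.1)

/-- Columns of matrix units of `G`: those of `R.f`, cut by the completed columns of `Φ`. By
adaptedness each of them is either zero or has source projection `R.p s`. -/
noncomputable def refinedE (α : R.S × Φ.ι) : A := R.completedE α.2 * R.f α.1

lemma isMatrixUnitFamily_refinedE : IsMatrixUnitFamily G R.refinedP R.refinedE := by
  classical
  exact R.isMatrixUnitFamily.mul_of_adapted R.isColumnFamily_completedE R.completedE_mem
    R.completedP_adapted
    (Φ.isMatrixUnitFamily.rangeProj_update R.isMatrixUnitFamily R.le_left Φ.e_o)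

lemma completedP_mul_f {α : R.S × Φ.ι} (h : R.refinedE α ≠ 0) :
    R.completedP α.2 * R.f α.1 = R.f α.1 := by
  refine (R.completedP_adapted α.2 α.1).resolve_right fun h' => h ?_
  rw [refinedE, ← R.isColumnFamily_completedE.mul_proj, mul_assoc, h', mul_zero]

lemma star_refinedE_mul_mul {x : A} (hx : x ∈ F) (α β : R.S × Φ.ι) :
    star (R.refinedE α) * x * R.refinedE β = Φ.coeff x α.2 β.2 •
      (star (R.f α.1) * (R.completedP α.2 * R.f β.1)) := by
  have h : star (R.completedE α.2) * x * R.completedE β.2 =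
      Φ.coeff x α.2 β.2 • R.completedP α.2 := by
    classical
    exact Φ.isMatrixUnitFamily.star_update_mul_mul_update R.isMatrixUnitFamily R.le_left Φ.e_o hx
      α.2 β.2
  calc star (R.refinedE α) * x * R.refinedE β
      = star (R.f α.1) * (star (R.completedE α.2) * x * R.completedE β.2 * R.f β.1) := by
        simp only [refinedE, star_mul, mul_assoc]
    _ = _ := by rw [h, smul_mul_assoc, mul_smul_comm]

/-- The indices of the nonzero columns of the refined pair in `B`. The index `(R.o, Φ.o)`, where
`refinedE` vanishes, is kept active as the reserved index of the refined pair. -/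
def IsActive (α : R.S × Φ.ι) : Prop := R.refinedE α ≠ 0 ∨ α = (R.o, Φ.o)

variable {R} in
lemma IsActive.r_eq {α : R.S × Φ.ι} (h : R.IsActive α) : Φ.r α.2 = Φ.q := by
  by_cases ha : α.2 = Φ.o
  · rw [ha, Φ.r_o]
  rcases h with h | rfl
  · refine Φ.r_eq_q fun h' => h ?_
    rw [refinedE, R.completedE_of_ne ha, h', zero_mul]
  · exact absurd rfl ha

open Classical in
/-- The common source projections of `innerV`, `innerW`, `refinedV` and `refinedW`. -/
noncomputable def refinedR (α : R.S × Φ.ι) : B := if R.IsActive α then R.q else 0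

open Classical in
/-- The columns of `H'` below `Φ.q` that refine the columns `Φ.v`. -/
noncomputable def innerV (α : R.S × Φ.ι) : B := if R.IsActive α then R.t (α.1, false) else 0

open Classical in
/-- The columns of `H'` below `Φ.q` that refine the columns `Φ.w`. At `Φ.o` they use the second
copy of `R.t`, orthogonal to the first: the new coefficients at `Φ.o` of an element of `H` are
then zero, which keeps `delta` unchanged on `H`. -/
noncomputable def innerW (α : R.S × Φ.ι) : B :=
  if R.IsActive α then R.t (α.1, decide (α.2 = Φ.o)) else 0

lemma r_mul_innerV (α : R.S × Φ.ι) : Φ.r α.2 * R.innerV α = R.innerV α := by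
  rw [innerV]
  split_ifs with h
  exacts [by rw [h.r_eq, R.q_mul_t], mul_zero _]

lemma r_mul_innerW (α : R.S × Φ.ι) : Φ.r α.2 * R.innerW α = R.innerW α := by
  rw [innerW]
  split_ifs with h
  exacts [by rw [h.r_eq, R.q_mul_t], mul_zero _]

/-- The columns `v` of the refined pair. -/
noncomputable def refinedV (α : R.S × Φ.ι) : B := Φ.v α.2 * R.innerV α

/-- The columns `w` of the refined pair. -/
noncomputable def refinedW (α : R.S × Φ.ι) : B := Φ.w α.2 * R.innerW α

lemma isColumnFamily_refinedV : IsColumnFamily R.refinedR R.refinedV := by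
  classical
  refine Φ.isColumnFamily_v.comp (fun a => ?_) R.r_mul_innerV
  exact (R.isColumnFamily.reindex (g := fun s => (s, false))
    (Prod.mk_left_injective _)).ite fun s => R.IsActive (s, a)

lemma isColumnFamily_refinedW : IsColumnFamily R.refinedR R.refinedW := by
  classical
  refine Φ.isColumnFamily_w.comp (fun a => ?_) R.r_mul_innerW
  exact (R.isColumnFamily.reindex (g := fun s => (s, decide (a = Φ.o)))
    (Prod.mk_left_injective _)).ite fun s => R.IsActive (s, a)

lemma innerV_mem (α : R.S × Φ.ι) : R.innerV α ∈ H' := by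
  rw [innerV]
  split_ifs
  exacts [R.t_mem _, zero_mem H']

lemma innerW_mem (α : R.S × Φ.ι) : R.innerW α ∈ H' := by
  rw [innerW]
  split_ifs
  exacts [R.t_mem _, zero_mem H']

/-- The frame pair for the larger algebras `G` and `H'` determined by the refinement. -/
noncomputable def framePair : FramePair G H' where
  ι := R.S × Φ.ι
  p := R.refinedP
  e := R.refinedE
  q := R.q
  r := R.refinedR
  v := R.refinedV
  w := R.refinedW
  o := (R.o, Φ.o)
  isMatrixUnitFamily := R.isMatrixUnitFamily_refinedE
  e_o := by rw [refinedE, R.f_o, mul_zero]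
  isMinimalProjection := R.isMinimalProjection
  isColumnFamily_v := R.isColumnFamily_refinedV
  isColumnFamily_w := R.isColumnFamily_refinedW
  v_mem α := mul_mem (R.le_right (Φ.v_mem _)) (R.innerV_mem α)
  w_mem α := mul_mem (R.le_right (Φ.w_mem _)) (R.innerW_mem α)
  r_eq α := by classical exact (ite_eq_or_eq _ _ _).symm
  r_o := if_pos (Or.inr rfl)
  e_eq_zero α hα := by_contra fun h =>
    R.isMinimalProjection.ne_zero ((if_pos (Or.inl h)).symm.trans hα)

lemma star_innerV_mul_innerW {α β : R.S × Φ.ι} (hα : R.IsActive α) (hβ : R.IsActive β)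
    (hs : α.1 = β.1) (hb : β.2 ≠ Φ.o) : star (R.innerV α) * R.innerW β = R.q := by
  classical
  rw [innerV, innerW, if_pos hα, if_pos hβ, decide_eq_false hb, hs, R.isColumnFamily.source]

lemma star_innerV_mul_innerW_eq_zero {α β : R.S × Φ.ι} (h : α.1 = β.1 → β.2 = Φ.o) :
    star (R.innerV α) * R.innerW β = 0 := by
  classical
  rw [innerV, innerW]
  split_ifs
  · refine R.isColumnFamily.orthogonal _ _ fun hab => ?_
    obtain ⟨hs, hb⟩ := Prod.mk.inj hab
    exact of_decide_eq_false hb.symm (h hs)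
  all_goals simp only [star_zero, zero_mul, mul_zero]

lemma star_refinedV_mul_mul {y : B} (hy : y ∈ H) (α β : R.S × Φ.ι) :
    star (R.refinedV α) * y * R.refinedW β =
      compression Φ.r Φ.v Φ.w y α.2 β.2 • (star (R.innerV α) * R.innerW β) := by
  calc star (R.refinedV α) * y * R.refinedW β
      = star (R.innerV α) * (star (Φ.v α.2) * y * Φ.w β.2) * R.innerW β := by
        simp only [refinedV, refinedW, star_mul, mul_assoc]
    _ = _ := by
        have h : star (R.innerV α) * Φ.r α.2 = star (R.innerV α) := by
          rw [← (Φ.isColumnFamily_v.proj α.2).isSelfAdjoint.star_eq, ← star_mul, R.r_mul_innerV]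
        rw [(Φ.hasScalarCompression hy).star_mul_mul, mul_smul_comm, h, smul_mul_assoc]

lemma compression_refined {y : B} (hy : y ∈ H) {α β : R.S × Φ.ι} (hα : R.IsActive α)
    (hβ : R.IsActive β) (hs : α.1 = β.1) (hb : β.2 ≠ Φ.o) :
    compression R.refinedR R.refinedV R.refinedW y α β =
      compression Φ.r Φ.v Φ.w y α.2 β.2 := by
  have hr : R.refinedR α = R.q := if_pos hα
  refine compression_apply_eq (hr ▸ R.isMinimalProjection.ne_zero) ?_
  rw [hr, ← R.star_innerV_mul_innerW hα hβ hs hb]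
  exact R.star_refinedV_mul_mul hy α β

lemma compression_refined_eq_zero {y : B} (hy : y ∈ H) {α β : R.S × Φ.ι}
    (h : α.1 = β.1 → β.2 = Φ.o) :
    compression R.refinedR R.refinedV R.refinedW y α β = 0 := by
  by_cases hr : R.refinedR α = 0
  · exact compression_apply_eq_zero hr y β
  refine compression_apply_eq hr ?_
  rw [zero_smul]
  exact (R.star_refinedV_mul_mul hy α β).trans (by
    rw [R.star_innerV_mul_innerW_eq_zero h, smul_zero])

lemma refinedE_mul_star_refinedE_eq_zero (s : R.S) {b : Φ.ι} (hb : b ≠ Φ.o) :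
    R.refinedE (s, Φ.o) * star (R.refinedE (s, b)) = 0 := by
  by_contra h
  have ho := left_ne_zero_of_mul h
  have hfo : R.completedP Φ.o * R.f s = R.f s := R.completedP_mul_f ho
  have hfb : R.completedP b * R.f s = R.f s :=
    R.completedP_mul_f (star_ne_zero.1 (right_ne_zero_of_mul h))
  refine ho ?_
  rw [refinedE, ← hfo, ← hfb, ← mul_assoc (R.completedP _), R.completedP_o_mul hb, zero_mul,
    mul_zero]

lemma compression_smul_refinedE_mul_star {y : B} (hy : y ∈ H) (s : R.S) (a b : Φ.ι) :
    compression R.refinedR R.refinedV R.refinedW y (s, a) (s, b) •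
        (R.refinedE (s, a) * star (R.refinedE (s, b))) =
      compression Φ.r Φ.v Φ.w y a b • (Φ.e a * R.f s * star (Φ.e b * R.f s)) := by
  by_cases hb : b = Φ.o
  · rw [R.compression_refined_eq_zero hy fun _ => hb, zero_smul, hb, Φ.e_o, zero_mul, star_zero,
      mul_zero, smul_zero]
  by_cases ha : a = Φ.o
  · rw [ha, R.refinedE_mul_star_refinedE_eq_zero s hb, smul_zero, Φ.e_o, zero_mul, zero_mul,
      smul_zero]
  rw [← R.completedE_of_ne ha, ← R.completedE_of_ne hb]
  by_cases h : R.refinedE (s, a) * star (R.refinedE (s, b)) = 0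
  · rw [h, smul_zero]
    exact (smul_eq_zero_of_right _ h).symm
  · rw [R.compression_refined hy (Or.inl (left_ne_zero_of_mul h))
      (Or.inl (star_ne_zero.1 (right_ne_zero_of_mul h))) rfl hb]
    rfl

lemma framePair_delta {y : B} (hy : y ∈ H) : R.framePair.delta y = Φ.delta y := by
  have off_diagonal {s s' : R.S} (hs : s' ≠ s) (a b : Φ.ι) :
      compression R.refinedR R.refinedV R.refinedW y (s, a) (s', b) = 0 :=
    R.compression_refined_eq_zero hy fun h => absurd h.symm hs
  have sum_f (a b : Φ.ι) : ∑ s, Φ.e a * R.f s * star (Φ.e b * R.f s) = Φ.e a * star (Φ.e b) := by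
    calc ∑ s, Φ.e a * R.f s * star (Φ.e b * R.f s) = Φ.e a * rangeProj R.f * star (Φ.e b) := by
          simp only [rangeProj, Finset.mul_sum, Finset.sum_mul, star_mul, mul_assoc]
      _ = Φ.e a * star (Φ.e b) := by
          rw [R.isMatrixUnitFamily.mul_rangeProj (R.le_left (Φ.isMatrixUnitFamily.mem a))]
  calc R.framePair.delta y
      = ∑ α, ∑ β, compression R.refinedR R.refinedV R.refinedW y α β •
          (R.refinedE α * star (R.refinedE β)) := rfl
    _ = ∑ s, ∑ a, ∑ b, compression R.refinedR R.refinedV R.refinedW y (s, a) (s, b) •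
          (R.refinedE (s, a) * star (R.refinedE (s, b))) := by
        rw [Fintype.sum_prod_type]
        refine Finset.sum_congr rfl fun s _ => Finset.sum_congr rfl fun a _ => ?_
        rw [Fintype.sum_prod_type]
        refine Finset.sum_eq_single s (fun s' _ hs => ?_) (absurd (Finset.mem_univ s))
        exact Finset.sum_eq_zero fun b _ => by rw [off_diagonal hs, zero_smul]
    _ = ∑ s, ∑ a, ∑ b, compression Φ.r Φ.v Φ.w y a b • (Φ.e a * R.f s * star (Φ.e b * R.f s)) := by
        simp only [R.compression_smul_refinedE_mul_star hy]
    _ = Φ.delta y := by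
        rw [FramePair.delta, LinearMap.comp_apply, frameMap_apply, Finset.sum_comm]
        refine Finset.sum_congr rfl fun a _ => ?_
        rw [Finset.sum_comm]
        refine Finset.sum_congr rfl fun b _ => ?_
        rw [← Finset.smul_sum, sum_f]

lemma compression_refinedE {x : A} (hx : x ∈ F) {s : R.S} {a : Φ.ι} (h : R.refinedE (s, a) ≠ 0)
    (b : Φ.ι) : compression R.refinedP R.refinedE R.refinedE x (s, a) (s, b) = Φ.coeff x a b :=
  compression_apply_eq
    (fun h' => h (R.isMatrixUnitFamily_refinedE.toIsColumnFamily.eq_zero h'))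
    (R.star_refinedE_mul_mul hx (s, a) (s, b))

lemma compression_refinedE_of_ne {x : A} (hx : x ∈ F) {α β : R.S × Φ.ι} (hs : α.1 ≠ β.1) :
    compression R.refinedP R.refinedE R.refinedE x α β = 0 := by
  by_cases hp : R.refinedP α = 0
  · exact compression_apply_eq_zero hp x β
  refine compression_apply_eq hp ((R.star_refinedE_mul_mul hx α β).trans ?_)
  have h : star (R.f α.1) * (R.completedP α.2 * R.f β.1) = 0 := by
    rcases R.completedP_adapted α.2 β.1 with h | h
    · rw [h, R.isMatrixUnitFamily.orthogonal _ _ hs]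
    · rw [h, mul_zero]
  rw [h, smul_zero, zero_smul]

lemma refinedP_eq_of_coeff_ne_zero {x : A} (hx : x ∈ F) {a b : Φ.ι} (h : Φ.coeff x a b ≠ 0)
    (s : R.S) : R.refinedP (s, a) = R.refinedP (s, b) := by
  obtain ⟨ha, hb⟩ := Φ.e_ne_zero hx h
  rw [refinedP, refinedP, R.completedP_of_ne (Φ.ne_o ha), R.completedP_of_ne (Φ.ne_o hb),
    (isBlockMatrix_compression (Φ.isMatrixUnitFamily.scalar x hx) a b h).1]

lemma refinedE_eq_zero_iff (α : R.S × Φ.ι) : R.refinedE α = 0 ↔ R.refinedP α = 0 := by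
  refine ⟨fun h => ?_, fun h => R.isMatrixUnitFamily_refinedE.toIsColumnFamily.eq_zero h⟩
  rw [← R.isMatrixUnitFamily_refinedE.source, h, mul_zero]

lemma isActive_iff {a : Φ.ι} (ha : a ≠ Φ.o) (s : R.S) :
    R.IsActive (s, a) ↔ R.refinedE (s, a) ≠ 0 :=
  or_iff_left fun h => ha (Prod.mk.inj h).2

lemma isActive_iff_of_coeff_ne_zero {x : A} (hx : x ∈ F) {a b : Φ.ι} (h : Φ.coeff x a b ≠ 0)
    (s : R.S) : R.IsActive (s, a) ↔ R.IsActive (s, b) := by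
  obtain ⟨ha, hb⟩ := Φ.e_ne_zero hx h
  rw [R.isActive_iff (Φ.ne_o ha), R.isActive_iff (Φ.ne_o hb), ne_eq, ne_eq,
    R.refinedE_eq_zero_iff, R.refinedE_eq_zero_iff, R.refinedP_eq_of_coeff_ne_zero hx h]

lemma compression_refinedE_dichotomy {x : A} (hx : x ∈ F) (s : R.S) (a b : Φ.ι) :
    (Φ.coeff x a b = 0 ∧ compression R.refinedP R.refinedE R.refinedE x (s, a) (s, b) = 0) ∨
      (R.innerW (s, b) = R.innerV (s, a) ∧ (R.innerV (s, a) = 0 ∨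
        compression R.refinedP R.refinedE R.refinedE x (s, a) (s, b) = Φ.coeff x a b)) := by
  by_cases hab : Φ.coeff x a b = 0
  · refine Or.inl ⟨hab, ?_⟩
    by_cases h : R.refinedE (s, a) = 0
    · exact compression_apply_eq_zero ((R.refinedE_eq_zero_iff _).1 h) x _
    · rw [R.compression_refinedE hx h, hab]
  obtain ⟨ha, hb⟩ := Φ.e_ne_zero hx hab
  have hactive := R.isActive_iff_of_coeff_ne_zero hx hab s
  classical
  right
  by_cases h : R.IsActive (s, a)
  · rw [innerV, innerW, if_pos h, if_pos (hactive.1 h), decide_eq_false (Φ.ne_o hb)]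
    exact ⟨rfl, Or.inr (R.compression_refinedE hx ((R.isActive_iff (Φ.ne_o ha) s).1 h) b)⟩
  · rw [innerV, innerW, if_neg h, if_neg (hactive.not.1 h)]
    exact ⟨rfl, Or.inl rfl⟩

lemma intertwines_refined {x : A} (hx : x ∈ F) {y : B}
    (h : Intertwines Φ.v Φ.w (Φ.coeff x) y) :
    Intertwines R.refinedV R.refinedW (compression R.refinedP R.refinedE R.refinedE x) y where
  star_mul := by
    rintro ⟨s, a⟩
    calc star (R.refinedV (s, a)) * y
        = ∑ b, Φ.coeff x a b • (star (R.innerV (s, a)) * star (Φ.w b)) := by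
          rw [refinedV, star_mul, mul_assoc, h.star_mul, Finset.mul_sum]
          simp only [mul_smul_comm]
      _ = ∑ b, compression R.refinedP R.refinedE R.refinedE x (s, a) (s, b) •
            star (R.refinedW (s, b)) := Finset.sum_congr rfl fun b _ => by
          rw [refinedW, star_mul]
          rcases R.compression_refinedE_dichotomy hx s a b with ⟨h, h'⟩ | ⟨hW, hV | h⟩
          · rw [h, h', zero_smul, zero_smul]
          · rw [hW, hV, star_zero, zero_mul, smul_zero, smul_zero]
          · rw [hW, h]
      _ = _ := by
          rw [eq_comm, Fintype.sum_prod_type]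
          refine Finset.sum_eq_single s (fun s' _ hs => ?_) (absurd (Finset.mem_univ s))
          exact Finset.sum_eq_zero fun b _ => by
            rw [R.compression_refinedE_of_ne hx hs.symm, zero_smul]
  mul := by
    rintro ⟨s, b⟩
    calc y * R.refinedW (s, b)
        = ∑ a, Φ.coeff x a b • (Φ.v a * R.innerW (s, b)) := by
          rw [refinedW, ← mul_assoc, h.mul, Finset.sum_mul]
          simp only [smul_mul_assoc]
      _ = ∑ a, compression R.refinedP R.refinedE R.refinedE x (s, a) (s, b) • R.refinedV (s, a) :=
          Finset.sum_congr rfl fun a _ => by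
          rw [refinedV]
          rcases R.compression_refinedE_dichotomy hx s a b with ⟨h, h'⟩ | ⟨hW, hV | h⟩
          · rw [h, h', zero_smul, zero_smul]
          · rw [hW, hV, mul_zero, smul_zero, smul_zero]
          · rw [hW, h]
      _ = _ := by
          rw [eq_comm, Fintype.sum_prod_type]
          refine Finset.sum_eq_single s (fun s' _ hs => ?_) (absurd (Finset.mem_univ s))
          exact Finset.sum_eq_zero fun a _ => by
            rw [R.compression_refinedE_of_ne hx hs, zero_smul]

lemma framePair_intertwines {x : A} (hx : x ∈ F) {y : B}
    (h : Intertwines Φ.v Φ.w (Φ.coeff x) y) :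
    Intertwines R.framePair.v R.framePair.w (R.framePair.coeff x) y :=
  R.intertwines_refined hx h

end Refinement

end Refinements

section Stages

variable {A : Type u} {B : Type*} [NonUnitalCStarAlgebra A] [CStarAlgebra B]
  {F G : NonUnitalStarSubalgebra ℂ A} {H H' : NonUnitalStarSubalgebra ℂ B}
  {S : ℕ → NonUnitalStarSubalgebra ℂ B} {n : ℕ}

lemma FramePair.exists_refinement (Φ : FramePair F (S n)) (hsimple : IsSimpleCStarAlgebra B)
    (hinf : ¬ FiniteDimensional ℂ B) (hS : IsAFPresentation B S) [FiniteDimensional ℂ G]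
    (hFG : F ≤ G) (N : ℕ) : ∃ n' ≥ N, n ≤ n' ∧ Nonempty (Refinement Φ G (S n')) := by
  have he := Φ.isMatrixUnitFamily
  have hP : insert (rangeProj Φ.e) (Set.range Φ.p) ⊆ F :=
    Set.insert_subset he.rangeProj_mem (Set.range_subset_iff.2 he.proj_mem)
  have hproj : ∀ g ∈ insert (rangeProj Φ.e) (Set.range Φ.p), IsStarProjection g :=
    Set.forall_mem_insert.2 ⟨he.isStarProjection_rangeProj, Set.forall_mem_range.2 he.proj⟩
  have hcomm : ∀ g ∈ insert (rangeProj Φ.e) (Set.range Φ.p),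
      ∀ h ∈ insert (rangeProj Φ.e) (Set.range Φ.p), g * h = h * g := by
    rintro g (rfl | ⟨a, rfl⟩) h (rfl | ⟨b, rfl⟩)
    · rfl
    · rw [he.rangeProj_mul_mem _ (he.proj_mem b), he.mul_rangeProj (he.proj_mem b)]
    · rw [he.rangeProj_mul_mem _ (he.proj_mem a), he.mul_rangeProj (he.proj_mem a)]
    · exact he.proj_mul_comm a b
  obtain ⟨T, _, p, f, o, hf, hfo, hadapted⟩ :=
    exists_isMatrixUnitFamily G (hP.trans hFG) hproj hcomm
  have hq := Φ.isMinimalProjection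
  obtain ⟨n', hn', r, hr, t, ht, hqt, htr⟩ := exists_columns hsimple hinf hS (T × Bool)
    (hS.1 (le_max_left n N) hq.mem) hq.isStarProjection hq.ne_zero
  exact ⟨n', (le_max_right n N).trans hn', (le_max_left n N).trans hn', ⟨{
    S := T, p, f, o, q := r, t
    le_left := hFG
    le_right := hS.1 ((le_max_left n N).trans hn')
    isMatrixUnitFamily := hf
    f_o := hfo
    rangeProj_adapted := hadapted _ (Set.mem_insert _ _)
    proj_adapted a := hadapted _ (Set.mem_insert_of_mem _ (Set.mem_range_self a))
    isMinimalProjection := hr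
    isColumnFamily := htr
    t_mem := ht
    q_mul_t := hqt }⟩⟩

/-- A stage of the construction: a frame pair for `F` and `H` together with a contraction
`γ : F → H` whose values act on the columns of `H` by the coefficient matrices of `F`. It is
encoded as a linear map on all of `A`, of which only the restriction to `F` matters. -/
structure Stage (F : NonUnitalStarSubalgebra ℂ A) (H : NonUnitalStarSubalgebra ℂ B) extends
    FramePair F H where
  γ : A →ₗ[ℂ] B
  γ_mem : ∀ x ∈ F, γ x ∈ H
  norm_γ_le : ∀ x ∈ F, ‖γ x‖ ≤ ‖x‖
  intertwines : ∀ x ∈ F, Intertwines v w (toFramePair.coeff x) (γ x)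

lemma Stage.delta_γ (Ψ : Stage F H) {x : A} (hx : x ∈ F) : Ψ.delta (Ψ.γ x) = x :=
  Ψ.delta_eq hx (Ψ.intertwines x hx)

namespace Refinement

variable {Ψ : Stage F H} (R : Refinement Ψ.toFramePair G H')

/-- The extension of `Ψ.γ` to `G`, relative to a projection `E` of `G` onto `F`: on the span of the
refined columns it is prescribed by the matrix units of `G`, and on the complement by `Ψ.γ ∘ E`. -/
noncomputable def extension (E : A →ₗ[ℂ] A) : A →ₗ[ℂ] B :=
  frameMap R.framePair.v R.framePair.w ∘ₗ R.framePair.coeff +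
    LinearMap.mulLeftRight ℂ (1 - rangeProj R.framePair.v, 1 - rangeProj R.framePair.w) ∘ₗ
      Ψ.γ ∘ₗ E

variable {E : A →ₗ[ℂ] A}

lemma extension_apply (x : A) :
    R.extension E x = frameMap R.framePair.v R.framePair.w (R.framePair.coeff x) +
      (1 - rangeProj R.framePair.v) * Ψ.γ (E x) * (1 - rangeProj R.framePair.w) := rfl

lemma extension_mem (hE : ∀ x, E x ∈ F) (x : A) : R.extension E x ∈ H' := by
  have hv : rangeProj R.framePair.v ∈ H' :=
    sum_mem fun a _ => mul_mem (R.framePair.v_mem a) (star_mem (R.framePair.v_mem a))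
  have hw : rangeProj R.framePair.w ∈ H' :=
    sum_mem fun a _ => mul_mem (R.framePair.w_mem a) (star_mem (R.framePair.w_mem a))
  have hγ : Ψ.γ (E x) ∈ H' := R.le_right (Ψ.γ_mem _ (hE x))
  rw [extension_apply, sub_mul, one_mul, mul_sub, mul_one]
  have hsub : Ψ.γ (E x) - rangeProj R.framePair.v * Ψ.γ (E x) ∈ H' :=
    sub_mem hγ (mul_mem hv hγ)
  exact add_mem (frameMap_mem R.framePair.v_mem R.framePair.w_mem _)
    (sub_mem hsub (mul_mem hsub hw))

lemma norm_extension_le (hE : ∀ x, E x ∈ F) (hE_norm : ∀ x ∈ G, ‖E x‖ ≤ ‖x‖) {x : A}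
    (hx : x ∈ G) : ‖R.extension E x‖ ≤ ‖x‖ :=
  norm_add_one_sub_mul_mul_one_sub_le
    R.framePair.isColumnFamily_v.isStarProjection_rangeProj
    R.framePair.isColumnFamily_w.isStarProjection_rangeProj
    (R.framePair.isColumnFamily_v.rangeProj_mul_frameMap _ _)
    (R.framePair.isColumnFamily_w.frameMap_mul_rangeProj _ _)
    (R.framePair.norm_frameMap_coeff_le hx)
    ((Ψ.norm_γ_le _ (hE x)).trans (hE_norm x hx))

/-- The stage for `G` and `H'` given by the refined frame pair and the extension of `Ψ.γ`. -/
noncomputable def stage (hE : ∀ x, E x ∈ F) (hE_norm : ∀ x ∈ G, ‖E x‖ ≤ ‖x‖) : Stage G H' where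
  toFramePair := R.framePair
  γ := R.extension E
  γ_mem x _ := R.extension_mem hE x
  norm_γ_le _ hx := R.norm_extension_le hE hE_norm hx
  intertwines _ hx := (R.framePair.isBlockMatrix_coeff hx).intertwines R.framePair.isColumnFamily_v
    R.framePair.isColumnFamily_w _

lemma extension_eq {x : A} (hx : x ∈ F) (hEx : E x = x) : R.extension E x = Ψ.γ x := by
  rw [extension_apply, hEx]
  exact (R.framePair_intertwines hx (Ψ.intertwines x hx)).frameMap_add_eq
    R.framePair.isColumnFamily_w

end Refinement

lemma Stage.exists_extension (Ψ : Stage F (S n)) (hsimple : IsSimpleCStarAlgebra B)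
    (hinf : ¬ FiniteDimensional ℂ B) (hS : IsAFPresentation B S) [FiniteDimensional ℂ G]
    (hFG : F ≤ G) (N : ℕ) : ∃ n' ≥ N, n ≤ n' ∧ ∃ Ψ' : Stage G (S n'),
      (∀ x ∈ F, Ψ'.γ x = Ψ.γ x) ∧ ∀ y ∈ S n, Ψ'.delta y = Ψ.delta y := by
  obtain ⟨n', hN, hn, ⟨R⟩⟩ := Ψ.toFramePair.exists_refinement hsimple hinf hS hFG N
  obtain ⟨E, hE, hE_norm, hE_id⟩ := exists_contractive_projection F G hFG
  exact ⟨n', hN, hn, R.stage hE hE_norm, fun x hx => R.extension_eq hx (hE_id x hx),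
    fun y hy => R.framePair_delta hy⟩

lemma exists_isMinimalProjection_of_isAFPresentation [Nontrivial B] (hS : IsAFPresentation B S) :
    ∃ n q, IsMinimalProjection (S n) q := by
  obtain ⟨x, hx, hx0⟩ := (hS.2.2.sdiff_singleton (0 : B)).nonempty
  obtain ⟨n, hxn⟩ := Set.mem_iUnion.1 hx
  have := hS.2.1 n
  obtain ⟨q, hq, -⟩ := exists_isMinimalProjection_eq_mul hxn hx0
  exact ⟨n, q, hq⟩

lemma nonempty_stage_bot {q : B} (hq : IsMinimalProjection H q) :
    Nonempty (Stage (⊥ : NonUnitalStarSubalgebra ℂ A) H) := by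
  have hbot {x : A} (hx : x ∈ (⊥ : NonUnitalStarSubalgebra ℂ A)) : x = 0 :=
    NonUnitalStarAlgebra.mem_bot.1 hx
  have hcol : IsColumnFamily (fun _ : PUnit.{u + 1} => q) fun _ => q :=
    ⟨fun _ => hq.isStarProjection,
      fun _ => by
        rw [hq.isStarProjection.isSelfAdjoint.star_eq, hq.isStarProjection.isIdempotentElem.eq],
      fun a b hab => absurd (Subsingleton.elim a b) hab⟩
  exact ⟨{
    ι := PUnit, p := 0, e := 0, q, r := fun _ => q, v := fun _ => q, w := fun _ => q
    o := PUnit.unit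
    isMatrixUnitFamily :=
      { proj := fun _ => .zero _
        source := fun _ => mul_zero _
        orthogonal := fun _ _ _ => mul_zero _
        mem := fun _ => zero_mem _
        scalar := fun x _ _ _ => ⟨0, by simp, fun _ => rfl⟩
        rangeProj_mul_mem := fun x hx => by rw [hbot hx, mul_zero] }
    e_o := rfl
    isMinimalProjection := hq
    isColumnFamily_v := hcol
    isColumnFamily_w := hcol
    v_mem := fun _ => hq.mem
    w_mem := fun _ => hq.mem
    r_eq := fun _ => .inr rfl
    r_o := rfl
    e_eq_zero := fun _ _ => rfl
    γ := 0
    γ_mem := fun _ _ => zero_mem _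
    norm_γ_le := fun _ _ => by simp
    intertwines := fun x hx => by
      rw [hbot hx]
      exact ⟨fun _ => by simp, fun _ => by simp⟩ }⟩

lemma exists_stage_seq {SA : ℕ → NonUnitalStarSubalgebra ℂ A} (hSA : Monotone SA)
    (hSA_fin : ∀ k, FiniteDimensional ℂ (SA k)) (hsimple : IsSimpleCStarAlgebra B)
    (hinf : ¬ FiniteDimensional ℂ B) (hS : IsAFPresentation B S) :
    ∃ (n : ℕ → ℕ) (Ψ : ∀ k, Stage (SA k) (S (n k))), Monotone n ∧ (∀ k, k ≤ n k) ∧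
      (∀ k, ∀ x ∈ SA k, (Ψ (k + 1)).γ x = (Ψ k).γ x) ∧
      ∀ k, ∀ y ∈ S (n k), (Ψ (k + 1)).delta y = (Ψ k).delta y := by
  have : Nontrivial B := not_subsingleton_iff_nontrivial.1 fun _ => hinf inferInstance
  have hnext (k : ℕ) (s : Σ n, Stage (SA k) (S n)) : ∃ s' : Σ n, Stage (SA (k + 1)) (S n),
      k + 1 ≤ s'.1 ∧ s.1 ≤ s'.1 ∧ (∀ x ∈ SA k, s'.2.γ x = s.2.γ x) ∧
        ∀ y ∈ S s.1, s'.2.delta y = s.2.delta y := by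
    obtain ⟨n', hN, hn, Ψ', hΨ'⟩ :=
      s.2.exists_extension hsimple hinf hS (hSA (Nat.le_succ k)) (k + 1)
    exact ⟨⟨n', Ψ'⟩, hN, hn, hΨ'⟩
  choose next le_next mono_next γ_next delta_next using hnext
  obtain ⟨n, q, hq⟩ := exists_isMinimalProjection_of_isAFPresentation hS
  obtain ⟨Ψ⟩ := nonempty_stage_bot (A := A) hq
  obtain ⟨n₀, -, -, Ψ₀, -⟩ := Ψ.exists_extension hsimple hinf hS (bot_le (a := SA 0)) 0
  let s (k : ℕ) : Σ n, Stage (SA k) (S n) := Nat.rec ⟨n₀, Ψ₀⟩ next k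
  refine ⟨fun k => (s k).1, fun k => (s k).2, monotone_nat_of_le_succ fun k => mono_next k (s k),
    fun k => ?_, fun k => γ_next k (s k), fun k => delta_next k (s k)⟩
  cases k with
  | zero => exact Nat.zero_le _
  | succ k => exact le_next k (s k)

end Stages

section Limits

variable {X Y : Type*} [NormedAddCommGroup X] [NormedSpace ℂ X] [NormedAddCommGroup Y]
  [NormedSpace ℂ Y] [CompleteSpace Y]

lemma exists_limit_of_contractions {S : ℕ → Submodule ℂ X} (hS : Monotone S)
    (hdense : Dense (⋃ k, (S k : Set X))) {f : ℕ → X →ₗ[ℂ] Y}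
    (hf : ∀ k, ∀ x ∈ S k, ‖f k x‖ ≤ ‖x‖) (hcompat : ∀ k, ∀ x ∈ S k, f (k + 1) x = f k x) :
    ∃ g : X →L[ℂ] Y, (∀ x, ‖g x‖ ≤ ‖x‖) ∧ ∀ k, ∀ x ∈ S k, g x = f k x := by
  have hcompat_le {k l : ℕ} (hkl : k ≤ l) {x : X} (hx : x ∈ S k) : f l x = f k x := by
    induction l, hkl using Nat.le_induction with
    | base => rfl
    | succ l hl ih => rw [hcompat l x (hS hl hx), ih]
  have hmem (x : ↥(⨆ k, S k)) : ∃ k, (x : X) ∈ S k :=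
    (Submodule.mem_iSup_of_directed S hS.directed_le).1 x.2
  choose κ hκ using hmem
  have hval (x : ↥(⨆ k, S k)) {l : ℕ} (hl : (x : X) ∈ S l) : f (κ x) x = f l x :=
    (hcompat_le (le_max_left (κ x) l) (hκ x)).symm.trans (hcompat_le (le_max_right (κ x) l) hl)
  let g₀ : ↥(⨆ k, S k) →ₗ[ℂ] Y :=
    { toFun x := f (κ x) x
      map_add' x y := by
        have hx := hS (le_max_left (κ x) (κ y)) (hκ x)
        have hy := hS (le_max_right (κ x) (κ y)) (hκ y)
        rw [hval _ (add_mem hx hy), hval x hx, hval y hy, Submodule.coe_add, map_add]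
      map_smul' c x := by
        rw [hval _ ((S _).smul_mem c (hκ x)), Submodule.coe_smul, map_smul, RingHom.id_apply] }
  have hrange : DenseRange (⨆ k, S k).subtype := by
    rwa [DenseRange, Submodule.coe_subtype, Subtype.range_coe,
      Submodule.coe_iSup_of_directed S hS.directed_le]
  have hnorm (x : ↥(⨆ k, S k)) : ‖g₀ x‖ ≤ 1 * ‖(⨆ k, S k).subtype x‖ :=
    (hf _ _ (hκ x)).trans_eq (one_mul _).symm
  refine ⟨g₀.extendOfNorm (⨆ k, S k).subtype, fun x => ?_, fun k x hx => ?_⟩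
  · exact (LinearMap.norm_extendOfNorm_apply_le hrange 1 hnorm x).trans_eq (one_mul _)
  · exact (LinearMap.extendOfNorm_eq hrange ⟨1, hnorm⟩ ⟨x, Submodule.mem_iSup_of_mem k hx⟩).trans
      (hval _ hx)

end Limits

end AFEmbedding

theorem exists_complemented_contractive_injection_into_simple
    (A B : Type*) [NonUnitalCStarAlgebra A] [CStarAlgebra B]
    (hA : ∃ SA : ℕ → NonUnitalStarSubalgebra ℂ A, IsAFPresentation A SA)
    (hB : ∃ SB : ℕ → NonUnitalStarSubalgebra ℂ B, IsAFPresentation B SB)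
    (hBsimple : IsSimpleCStarAlgebra B)
    (hBinf : ¬ FiniteDimensional ℂ B) :
    ∃ (γ : A →ₗᵢ[ℂ] B) (δ : B →ₗ[ℂ] A),
      (∀ b : B, ‖δ b‖ ≤ ‖b‖) ∧
      (∀ a : A, δ (γ a) = a) := by
  obtain ⟨SA, hSA⟩ := hA
  obtain ⟨SB, hSB⟩ := hB
  obtain ⟨n, Ψ, hn, hkn, hγ_compat, hδ_compat⟩ :=
    AFEmbedding.exists_stage_seq hSA.1 hSA.2.1 hBsimple hBinf hSB
  have hdense : Dense (⋃ k, (SB (n k) : Set B)) :=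
    hSB.2.2.mono (Set.iUnion_mono fun k => hSB.1 (hkn k))
  obtain ⟨γ, hγ_norm, hγ⟩ := AFEmbedding.exists_limit_of_contractions
    (S := fun k => (SA k).toSubmodule) hSA.1 hSA.2.2 (fun k => (Ψ k).norm_γ_le) hγ_compat
  obtain ⟨δ, hδ_norm, hδ⟩ := AFEmbedding.exists_limit_of_contractions
    (S := fun k => (SB (n k)).toSubmodule) (hSB.1.comp hn) hdense
    (fun k y hy => (Ψ k).norm_delta_le hy) hδ_compat
  have hδγ : ∀ a, δ (γ a) = a := by
    refine AFEmbedding.forall_of_isClosed_of_isAFPresentation hSA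
      (isClosed_eq (δ.continuous.comp γ.continuous) continuous_id) fun k x hx => ?_
    rw [hγ k x hx, hδ k _ ((Ψ k).γ_mem x hx), (Ψ k).delta_γ hx]
  refine ⟨⟨γ.toLinearMap, fun a => (hγ_norm a).antisymm ?_⟩, δ.toLinearMap, hδ_norm, hδγ⟩
  exact (congrArg norm (hδγ a)).ge.trans (hδ_norm (γ a))
end

section
/- Let F be a unital C*-algebra admitting an increasing sequence (S_k) of unital *-subalgebras with each S_k *-isomorphic to the full matrix algebra M_{2^k}(ℂ) and with union dense in F. Then F is isomorphic as a Banach space to C₀(ℕ, F). -/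
/-!
Statement 2 (Lemma 1.2 of the paper).

If `F` is a model of the Fermion (CAR) algebra — a unital C*-algebra with an
increasing sequence of unital *-subalgebras `S k ≅ M_{2^k}(ℂ)` whose union is
dense — then `F` is isomorphic as a Banach space to `C₀(ℕ, F)`.
-/

/-!
Let `S k ≅ M_{d^k}(ℂ)`, with `d = 2` for the Fermion algebra. A multiplicity count shows that
`S (k + 1)` is generated by `S k` and a system of `d × d` matrix units commuting with it. Composing
the unitary flips of consecutive systems produces in the limit an endomorphism of `F` that moves
each system to the next one; its image commutes with the first system and generates `F` together
with it, so `M_d(F) ≅ F`.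

Through this isomorphism, `(x, y) ↦ diag(x, Y, …, Y)`, where `Y ∈ F` has the single off-diagonal
entry `y`, is a left-invertible contraction `F × F → F`. Iterating it codes null sequences in `F` by
elements of `F`. Decoding always yields a null sequence, since every term of large index read off
an element of `S k` is an off-diagonal entry of a scalar matrix. Hence `C₀(ℕ, F)` is complemented
in `F`, and Pełczyński's decomposition method applies.
-/

open Filter Topology
open scoped ComplexOrder CStarAlgebra NNReal ZeroAtInfty

section ZeroAtInfty

variable {α β : Type*} [TopologicalSpace α] [TopologicalSpace β]

lemma tendsto_cocompact_sumElim {γ : Type*} {l : Filter γ} {f : α → γ} {g : β → γ}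
    (hf : Tendsto f (cocompact α) l) (hg : Tendsto g (cocompact β) l) :
    Tendsto (Sum.elim f g) (cocompact (α ⊕ β)) l := by
  intro s hs
  obtain ⟨K, hK, hKs⟩ := mem_cocompact.mp (hf hs)
  obtain ⟨L, hL, hLs⟩ := mem_cocompact.mp (hg hs)
  refine mem_cocompact.mpr
    ⟨Sum.inl '' K ∪ Sum.inr '' L, (hK.image continuous_inl).union (hL.image continuous_inr), ?_⟩
  rintro (a | b) hx
  · exact hKs fun ha ↦ hx (.inl ⟨a, ha, rfl⟩)
  · exact hLs fun hb ↦ hx (.inr ⟨b, hb, rfl⟩)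

variable {𝕜 X : Type*} [NormedField 𝕜] [NormedAddCommGroup X] [NormedSpace 𝕜 X]

lemma zeroAtInfty_norm_apply_le (f : C₀(α, X)) (a : α) : ‖f a‖ ≤ ‖f‖ :=
  f.toBCF.norm_coe_le_norm a

lemma zeroAtInfty_norm_le_iff {f : C₀(α, X)} {M : ℝ} (hM : 0 ≤ M) :
    ‖f‖ ≤ M ↔ ∀ a, ‖f a‖ ≤ M :=
  BoundedContinuousFunction.norm_le (f := f.toBCF) hM

lemma zeroAtInfty_norm_comp_le (f : C₀(α, X)) (g : CocompactMap β α) : ‖f.comp g‖ ≤ ‖f‖ :=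
  (zeroAtInfty_norm_le_iff (norm_nonneg f)).mpr fun b ↦ zeroAtInfty_norm_apply_le f (g b)

variable (𝕜 X) in
/-- Transport of functions vanishing at infinity along a homeomorphism. -/
def zeroAtInftyCongr (e : α ≃ₜ β) : C₀(α, X) ≃ₗᵢ[𝕜] C₀(β, X) where
  toFun f := f.comp e.symm.toCocompactMap
  invFun f := f.comp e.toCocompactMap
  map_add' _ _ := rfl
  map_smul' _ _ := rfl
  left_inv f := ZeroAtInftyContinuousMap.ext fun a ↦ congrArg f (e.symm_apply_apply a)
  right_inv f := ZeroAtInftyContinuousMap.ext fun b ↦ congrArg f (e.apply_symm_apply b)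
  norm_map' f := le_antisymm (zeroAtInfty_norm_comp_le f _) <|
    (zeroAtInfty_norm_le_iff (norm_nonneg _)).mpr fun a ↦
      (congrArg (‖f ·‖) (e.symm_apply_apply a)).ge.trans
        (zeroAtInfty_norm_apply_le (f.comp e.symm.toCocompactMap) (e a))

variable (𝕜 α β X) in
/-- A function vanishing at infinity on a disjoint union, split into its two restrictions. -/
def zeroAtInftySum : C₀(α ⊕ β, X) ≃ₗᵢ[𝕜] C₀(α, X) × C₀(β, X) where
  toFun f := (f.comp ⟨⟨_, continuous_inl⟩, IsClosedEmbedding.inl.tendsto_cocompact⟩,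
    f.comp ⟨⟨_, continuous_inr⟩, IsClosedEmbedding.inr.tendsto_cocompact⟩)
  invFun p := ⟨⟨Sum.elim p.1 p.2, p.1.continuous.sumElim p.2.continuous⟩,
    tendsto_cocompact_sumElim p.1.zero_at_infty' p.2.zero_at_infty'⟩
  map_add' _ _ := rfl
  map_smul' _ _ := rfl
  left_inv f := by ext (a | b) <;> rfl
  right_inv p := rfl
  norm_map' f := by
    refine le_antisymm (max_le (zeroAtInfty_norm_comp_le f _) (zeroAtInfty_norm_comp_le f _)) <|
      (zeroAtInfty_norm_le_iff (norm_nonneg _)).mpr ?_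
    rintro (a | b)
    · exact le_max_of_le_left (zeroAtInfty_norm_apply_le (f.comp ⟨⟨_, continuous_inl⟩, _⟩) a)
    · exact le_max_of_le_right (zeroAtInfty_norm_apply_le (f.comp ⟨⟨_, continuous_inr⟩, _⟩) b)

variable (𝕜 α X) in
/-- On a one-point space, functions vanishing at infinity are determined by their only value. -/
def zeroAtInftyUnique [Unique α] : C₀(α, X) ≃ₗᵢ[𝕜] X where
  toFun f := f default
  invFun x := ⟨.const α x, by simp⟩
  map_add' _ _ := rfl
  map_smul' _ _ := rfl
  left_inv f := ZeroAtInftyContinuousMap.ext fun a ↦ congrArg f (Subsingleton.elim default a)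
  right_inv _ := rfl
  norm_map' f := le_antisymm (zeroAtInfty_norm_apply_le f default) <|
    (zeroAtInfty_norm_le_iff (norm_nonneg _)).mpr fun a ↦
      (congrArg (‖f ·‖) (Subsingleton.elim a default)).le

variable (𝕜 X) in
/-- Interleaving two null sequences. -/
noncomputable def nullSequenceInterleave : (C₀(ℕ, X) × C₀(ℕ, X)) ≃L[𝕜] C₀(ℕ, X) :=
  ((zeroAtInftySum ℕ ℕ 𝕜 X).symm.trans
    (zeroAtInftyCongr 𝕜 X Equiv.natSumNatEquivNat.toHomeomorphOfDiscrete) :)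

variable (𝕜 X) in
/-- Prepending a term to a null sequence. -/
noncomputable def nullSequenceCons : (C₀(ℕ, X) × X) ≃L[𝕜] C₀(ℕ, X) :=
  ((ContinuousLinearEquiv.refl 𝕜 _).prodCongr
    (zeroAtInftyUnique Unit 𝕜 X).symm.toContinuousLinearEquiv).trans
    ((zeroAtInftySum ℕ Unit 𝕜 X).symm.trans
      (zeroAtInftyCongr 𝕜 X Equiv.natSumPUnitEquivNat.toHomeomorphOfDiscrete) :)

end ZeroAtInfty

lemma nonempty_continuousLinearEquiv_of_rightInverse {R X Y : Type*} [Ring R]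
    [TopologicalSpace X] [AddCommGroup X] [IsTopologicalAddGroup X] [Module R X]
    [TopologicalSpace Y] [AddCommGroup Y] [Module R Y]
    (P : X →L[R] Y) (J : Y →L[R] X) (hPJ : Function.RightInverse J P)
    (hYY : (Y × Y) ≃L[R] Y) (hYX : (Y × X) ≃L[R] Y) : Nonempty (X ≃L[R] Y) :=
  -- Pełczyński's decomposition method: with `K = ker P`, `X ≅ Y × K ≅ Y × Y × K ≅ Y × X ≅ Y`.
  let split : X ≃L[R] Y × P.ker := .equivOfRightInverse P J hPJ
  let absorb : (Y × P.ker) ≃L[R] Y × X :=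
    (hYY.symm.prodCongr (.refl R _)).trans <|
      (ContinuousLinearEquiv.prodAssoc R Y Y _).trans <|
        (ContinuousLinearEquiv.refl R Y).prodCongr split.symm
  ⟨(split.trans absorb).trans hYX⟩

section NullFamilies

variable {ι 𝕜 X Y : Type*} [NontriviallyNormedField 𝕜] [NormedAddCommGroup X] [NormedSpace 𝕜 X]
  [NormedAddCommGroup Y] [NormedSpace 𝕜 Y] {T : ι → X →L[𝕜] Y} {C : ℝ≥0}

lemma tendsto_apply_zero_of_dense {l : Filter ι} (hT : ∀ i, ‖T i‖ ≤ C)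
    (hdense : Dense {x | Tendsto (T · x) l (𝓝 0)}) (x : X) : Tendsto (T · x) l (𝓝 0) := by
  have hequi : Equicontinuous fun i ↦ (T i : X → Y) :=
    ((NormedSpace.equicontinuous_TFAE T).out 1 5 :).mpr ⟨C, hT⟩
  exact (hequi.isClosed_setOfPred_tendsto continuous_const).closure_subset (hdense x)

/-- An upper `∞`-estimate: finite sums `∑ T i (x i)` are bounded by `C` times the supremum of the
norms `‖x i‖`. -/
def HasUpperSupEstimate (T : ι → X →L[𝕜] Y) (C : ℝ≥0) : Prop :=
  ∀ (t : Finset ι) (x : ι → X) (r : ℝ), 0 ≤ r → (∀ i ∈ t, ‖x i‖ ≤ r) →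
    ‖∑ i ∈ t, T i (x i)‖ ≤ C * r

lemma HasUpperSupEstimate.summable [CompleteSpace Y] (hT : HasUpperSupEstimate T C) {x : ι → X}
    (hx : Tendsto x cofinite (𝓝 0)) : Summable fun i ↦ T i (x i) := by
  refine summable_iff_vanishing_norm.mpr fun ε hε ↦ ?_
  obtain ⟨r, hr, hCr⟩ := exists_pos_mul_lt hε C
  have hlarge : {i | ¬‖x i‖ < r}.Finite :=
    eventually_cofinite.mp (hx.norm.eventually_lt_const (by rwa [norm_zero]))
  refine ⟨hlarge.toFinset, fun t ht ↦ (hT t x r hr.le fun i hi ↦ ?_).trans_lt hCr⟩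
  have hsmall : ‖x i‖ < r := by simpa using Finset.disjoint_left.mp ht hi
  exact hsmall.le

variable [TopologicalSpace ι] [DiscreteTopology ι]

lemma zeroAtInfty_tendsto_cofinite (f : C₀(ι, X)) : Tendsto f cofinite (𝓝 0) :=
  cocompact_eq_cofinite ι ▸ f.zero_at_infty'

/-- A bounded, pointwise null family of operators, as a single operator into functions vanishing
at infinity. -/
noncomputable def toZeroAtInfty (hT : ∀ i, ‖T i‖ ≤ C)
    (hnull : ∀ x, Tendsto (T · x) cofinite (𝓝 0)) : X →L[𝕜] C₀(ι, Y) :=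
  LinearMap.mkContinuous
    { toFun := fun x ↦ ⟨⟨(T · x), continuous_of_discreteTopology⟩,
        (cocompact_eq_cofinite ι).symm ▸ hnull x⟩
      map_add' := fun x y ↦ by ext i; exact map_add (T i) x y
      map_smul' := fun c x ↦ by ext i; exact map_smul (T i) c x }
    C fun x ↦ (zeroAtInfty_norm_le_iff (by positivity)).mpr fun i ↦
      (T i).le_of_opNorm_le (hT i) x

/-- The operator `f ↦ ∑ T i (f i)` on functions vanishing at infinity. -/
noncomputable def sumZeroAtInfty [CompleteSpace Y] (hT : HasUpperSupEstimate T C) :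
    C₀(ι, X) →L[𝕜] Y :=
  have hsum (f : C₀(ι, X)) : Summable fun i ↦ T i (f i) :=
    hT.summable (zeroAtInfty_tendsto_cofinite f)
  LinearMap.mkContinuous
    { toFun := fun f ↦ ∑' i, T i (f i)
      map_add' := fun f g ↦ by
        simp only [ZeroAtInftyContinuousMap.add_apply, map_add, (hsum f).tsum_add (hsum g)]
      map_smul' := fun c f ↦ by
        simp only [ZeroAtInftyContinuousMap.smul_apply, map_smul, (hsum f).tsum_const_smul,
          RingHom.id_apply] }
    C fun f ↦ le_of_tendsto (hsum f).hasSum.norm <| .of_forall fun t ↦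
      hT t f ‖f‖ (norm_nonneg f) fun i _ ↦ zeroAtInfty_norm_apply_le f i

lemma toZeroAtInfty_sumZeroAtInfty [DecidableEq ι] [CompleteSpace Y]
    (hT : HasUpperSupEstimate T C) {P : ι → Y →L[𝕜] X} {D : ℝ≥0} (hP : ∀ i, ‖P i‖ ≤ D)
    (hnull : ∀ y, Tendsto (P · y) cofinite (𝓝 0))
    (hPT : ∀ i j x, P i (T j x) = if i = j then x else 0) (f : C₀(ι, X)) :
    toZeroAtInfty hP hnull (sumZeroAtInfty hT f) = f := by
  ext i
  calc P i (∑' j, T j (f j))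
    _ = ∑' j, P i (T j (f j)) :=
      (P i).map_tsum (hT.summable (zeroAtInfty_tendsto_cofinite f))
    _ = f i := by simp only [hPT, tsum_ite_eq']

end NullFamilies

section SelfSimilar

variable {𝕜 X : Type*} [NontriviallyNormedField 𝕜] [NormedAddCommGroup X] [NormedSpace 𝕜 X]

/-- The operators `x ↦ U (… U (U (0, x), 0) …, 0)` with `n + 1` occurrences of `U`: if `U` codes
pairs in `X` by elements of `X`, they place `x` as the `n`-th term of a coded sequence. -/
def nestedInr (U : X × X →L[𝕜] X) : ℕ → X →L[𝕜] X
  | 0 => U ∘L .inr 𝕜 X X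
  | n + 1 => U ∘L .inl 𝕜 X X ∘L nestedInr U n

/-- The operators reading off the `n`-th term of a sequence coded by a pairing that `V` inverts. -/
def nestedSnd (V : X →L[𝕜] X × X) : ℕ → X →L[𝕜] X
  | 0 => .snd 𝕜 X X ∘L V
  | n + 1 => nestedSnd V n ∘L .fst 𝕜 X X ∘L V

variable {U : X × X →L[𝕜] X} {V : X →L[𝕜] X × X}

lemma nestedInr_zero_apply (x : X) : nestedInr U 0 x = U (0, x) := rfl

lemma nestedInr_succ_apply (n : ℕ) (x : X) : nestedInr U (n + 1) x = U (nestedInr U n x, 0) := rfl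

lemma nestedSnd_zero_apply (x : X) : nestedSnd V 0 x = (V x).2 := rfl

lemma nestedSnd_succ_apply (n : ℕ) (x : X) : nestedSnd V (n + 1) x = nestedSnd V n (V x).1 := rfl

lemma norm_nestedSnd_apply_le (hV : ‖V‖ ≤ 1) (n : ℕ) (x : X) : ‖nestedSnd V n x‖ ≤ ‖x‖ := by
  have hVx (x : X) : ‖V x‖ ≤ ‖x‖ := by simpa using V.le_of_opNorm_le hV x
  induction n generalizing x with
  | zero => exact (norm_snd_le (V x)).trans (hVx x)
  | succ n ih => exact (ih _).trans ((norm_fst_le (V x)).trans (hVx x))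

lemma norm_sum_range_nestedInr_le (hU : ‖U‖ ≤ 1) {r : ℝ} (N : ℕ) {x : ℕ → X}
    (hx : ∀ n, ‖x n‖ ≤ r) : ‖∑ n ∈ Finset.range N, nestedInr U n (x n)‖ ≤ r := by
  induction N generalizing x with
  | zero => simpa using (norm_nonneg _).trans (hx 0)
  | succ N ih =>
    let tail := ∑ n ∈ Finset.range N, nestedInr U n (x (n + 1))
    calc ‖∑ n ∈ Finset.range (N + 1), nestedInr U n (x n)‖
      _ = ‖U (tail, x 0)‖ := by
        have htail : ∑ n ∈ Finset.range N, U (nestedInr U n (x (n + 1)), 0) = U (tail, 0) :=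
          (map_sum (U ∘L .inl 𝕜 X X) _ _).symm
        simp only [Finset.sum_range_succ', nestedInr_succ_apply, nestedInr_zero_apply, htail,
          ← map_add, Prod.mk_add_mk, add_zero, zero_add]
      _ ≤ ‖(tail, x 0)‖ := by simpa using U.le_of_opNorm_le hU (tail, x 0)
      _ ≤ r := max_le (ih fun n ↦ hx (n + 1)) (hx 0)

lemma hasUpperSupEstimate_nestedInr (hU : ‖U‖ ≤ 1) : HasUpperSupEstimate (nestedInr U) 1 := by
  intro t x r hr hx
  obtain ⟨N, hN⟩ := t.exists_nat_subset_range
  have hzero (n : ℕ) : ‖if n ∈ t then x n else 0‖ ≤ r := by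
    split_ifs with hn
    exacts [hx n hn, by rwa [norm_zero]]
  simpa [apply_ite, Finset.sum_ite_mem, Finset.inter_eq_right.mpr hN] using
    norm_sum_range_nestedInr_le hU N hzero

lemma nestedSnd_nestedInr (hVU : Function.LeftInverse V U) (m n : ℕ) (x : X) :
    nestedSnd V m (nestedInr U n x) = if m = n then x else 0 := by
  induction m generalizing n with
  | zero =>
    cases n <;> simp [nestedSnd_zero_apply, nestedInr_zero_apply, nestedInr_succ_apply, hVU _]
  | succ m ih =>
    cases n <;> simp [nestedSnd_succ_apply, nestedInr_zero_apply, nestedInr_succ_apply, hVU _, ih]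

theorem nonempty_equiv_zeroAtInfty_of_leftInverse [CompleteSpace X] (hU : ‖U‖ ≤ 1) (hV : ‖V‖ ≤ 1)
    (hVU : Function.LeftInverse V U)
    (hdense : Dense {x | Tendsto (nestedSnd V · x) atTop (𝓝 0)}) :
    Nonempty (X ≃L[𝕜] C₀(ℕ, X)) := by
  have hbound (n : ℕ) : ‖nestedSnd V n‖ ≤ (1 : ℝ≥0) :=
    ContinuousLinearMap.opNorm_le_bound _ zero_le_one fun x ↦ by
      simpa using norm_nestedSnd_apply_le hV n x
  have hnull : ∀ x, Tendsto (nestedSnd V · x) cofinite (𝓝 0) :=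
    tendsto_apply_zero_of_dense hbound (Nat.cofinite_eq_atTop ▸ hdense)
  exact nonempty_continuousLinearEquiv_of_rightInverse (toZeroAtInfty hbound hnull)
    (sumZeroAtInfty (hasUpperSupEstimate_nestedInr hU))
    (toZeroAtInfty_sumZeroAtInfty _ _ _ (nestedSnd_nestedInr hVU))
    (nullSequenceInterleave 𝕜 X) (nullSequenceCons 𝕜 X)

end SelfSimilar

section MatrixUnits

variable {ι R A : Type*} [DecidableEq ι]

/-- A system of matrix units `w a b` with unit `p`: the images of the elementary matrices under a
*-homomorphism from the matrices indexed by `ι` that maps the identity matrix to `p`. -/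
structure IsMatrixUnits [Fintype ι] [Semiring A] [StarRing A] (p : A) (w : ι → ι → A) : Prop where
  star_apply (a b : ι) : star (w a b) = w b a
  mul_apply (a b c d : ι) : w a b * w c d = if b = c then w a d else 0
  sum_diag : ∑ a, w a a = p

/-- A system of matrix units `w` in the commutant of `S` that generates `T` together with `S`, so
that `T` is the tensor product of `S` with a matrix algebra. -/
structure IsRelativeMatrixUnits [Fintype ι] [CommSemiring R] [StarRing R] [Semiring A] [StarRing A]
    [Algebra R A] [StarModule R A] (S T : StarSubalgebra R A) (w : ι → ι → A) : Prop
    extends IsMatrixUnits 1 w where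
  commute (a b : ι) {x : A} (hx : x ∈ S) : Commute x (w a b)
  sup_adjoin : S ⊔ StarAlgebra.adjoin R (Set.range (Function.uncurry w)) = T

section Relative

variable [Fintype ι] [CommSemiring R] [StarRing R] [Semiring A] [StarRing A]
    [Algebra R A] [StarModule R A] {S T C : StarSubalgebra R A} {w : ι → ι → A}

namespace IsRelativeMatrixUnits

lemma left_le (hw : IsRelativeMatrixUnits S T w) : S ≤ T := hw.sup_adjoin ▸ le_sup_left

lemma mem (hw : IsRelativeMatrixUnits S T w) (a b : ι) : w a b ∈ T :=
  hw.sup_adjoin ▸ StarSubalgebra.mem_sup_right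
    (StarAlgebra.subset_adjoin R _ (Set.mem_range_self (a, b)))

lemma le (hw : IsRelativeMatrixUnits S T w) (hS : S ≤ C) (hC : ∀ a b, w a b ∈ C) : T ≤ C :=
  hw.sup_adjoin ▸ sup_le hS (StarAlgebra.adjoin_le (Set.range_subset_iff.mpr fun p ↦ hC p.1 p.2))

end IsRelativeMatrixUnits

end Relative

section Flip

variable [Fintype ι] [Semiring A] {v w : ι → ι → A}

/-- The flip of the two factors `M_ι ⊗ M_ι` spanned by two commuting systems of matrix units. -/
def matrixUnitsFlip (v w : ι → ι → A) : A := ∑ a, ∑ b, v a b * w b a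

variable [StarRing A]

lemma matrixUnitsFlip_mul (hv : IsMatrixUnits 1 v) (hw : IsMatrixUnits 1 w)
    (hvw : ∀ a b c d, Commute (v a b) (w c d)) (a b : ι) :
    matrixUnitsFlip v w * v a b = w a b * matrixUnitsFlip v w := by
  calc matrixUnitsFlip v w * v a b
    _ = ∑ c, ∑ d, v c d * v a b * w d c := by
      simp only [matrixUnitsFlip, Finset.sum_mul, mul_assoc, (hvw a b _ _).eq]
    _ = ∑ c, v c b * w a c := by
      simp [hv.mul_apply, ite_mul]
    _ = ∑ c, ∑ d, v c d * (w a b * w d c) := by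
      simp [hw.mul_apply, mul_ite]
    _ = w a b * matrixUnitsFlip v w := by
      simp only [matrixUnitsFlip, Finset.mul_sum, ← mul_assoc, (hvw _ _ a b).eq]

lemma matrixUnitsFlip_mul_self (hv : IsMatrixUnits 1 v) (hw : IsMatrixUnits 1 w)
    (hvw : ∀ a b c d, Commute (v a b) (w c d)) :
    matrixUnitsFlip v w * matrixUnitsFlip v w = 1 := by
  have compress (a b : ι) : w a b * matrixUnitsFlip v w * w b a = v b b * w a a := by
    simp only [matrixUnitsFlip, Finset.mul_sum, Finset.sum_mul, ← mul_assoc,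
      (hvw _ _ _ _).symm.eq]
    simp [mul_assoc, hw.mul_apply, mul_ite]
  calc matrixUnitsFlip v w * matrixUnitsFlip v w
    _ = matrixUnitsFlip v w * ∑ a, ∑ b, v a b * w b a := rfl
    _ = ∑ a, ∑ b, matrixUnitsFlip v w * v a b * w b a := by
      simp only [Finset.mul_sum, mul_assoc]
    _ = ∑ a, ∑ b, v b b * w a a := by
      simp only [matrixUnitsFlip_mul hv hw hvw, compress]
    _ = 1 := by
      simp only [← Finset.sum_mul, hv.sum_diag, one_mul, hw.sum_diag]

lemma star_matrixUnitsFlip (hv : IsMatrixUnits 1 v) (hw : IsMatrixUnits 1 w)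
    (hvw : ∀ a b c d, Commute (v a b) (w c d)) :
    star (matrixUnitsFlip v w) = matrixUnitsFlip v w := by
  simp only [matrixUnitsFlip, star_sum, star_mul, hv.star_apply, hw.star_apply,
    fun a b c d ↦ (hvw a b c d).symm.eq]
  exact Finset.sum_comm

end Flip
end MatrixUnits

section Limits

variable {A B : Type*} [CStarAlgebra A] [CStarAlgebra B] {φ : ℕ → A →⋆ₐ[ℂ] B}

lemma cauchySeq_apply_of_dense (hdense : Dense {x | CauchySeq (φ · x)}) (x : A) :
    CauchySeq (φ · x) := by
  refine Metric.cauchySeq_iff'.mpr fun ε hε ↦ ?_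
  obtain ⟨y, hy, hxy⟩ := hdense.exists_dist_lt x (ε := ε / 3) (by positivity)
  obtain ⟨N, hN⟩ := Metric.cauchySeq_iff'.mp hy (ε / 3) (by positivity)
  have hclose (n : ℕ) : dist (φ n x) (φ n y) ≤ dist x y := by
    simpa only [dist_eq_norm, map_sub] using NonUnitalStarAlgHom.norm_apply_le (φ n) (x - y)
  refine ⟨N, fun n hn ↦ ?_⟩
  linarith [dist_triangle4 (φ n x) (φ n y) (φ N y) (φ N x), hclose n, hN n hn,
    dist_comm (φ N x) (φ N y), hclose N]

theorem exists_starAlgHom_tendsto (hdense : Dense {x | CauchySeq (φ · x)}) :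
    ∃ ψ : A →⋆ₐ[ℂ] B, ∀ x, Tendsto (φ · x) atTop (𝓝 (ψ x)) := by
  choose ψ hψ using fun x ↦ cauchySeq_tendsto_of_complete (cauchySeq_apply_of_dense hdense x)
  have eq_of_tendsto {x y} (h : Tendsto (φ · x) atTop (𝓝 y)) : ψ x = y :=
    tendsto_nhds_unique (hψ x) h
  exact ⟨
    { toFun := ψ
      map_one' := eq_of_tendsto <| by simp only [map_one, tendsto_const_nhds]
      map_mul' x y := eq_of_tendsto <| by simpa only [map_mul] using (hψ x).mul (hψ y)
      map_zero' := eq_of_tendsto <| by simp only [map_zero, tendsto_const_nhds]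
      map_add' x y := eq_of_tendsto <| by simpa only [map_add] using (hψ x).add (hψ y)
      commutes' c := eq_of_tendsto <| by simp only [AlgHomClass.commutes, tendsto_const_nhds]
      map_star' x := eq_of_tendsto <| by simpa only [map_star] using (hψ x).star }, hψ⟩

end Limits

section Shift

variable {ι F : Type*} [Fintype ι] [DecidableEq ι] [CStarAlgebra F] {S : ℕ → StarSubalgebra ℂ F}
  {w : ℕ → ι → ι → F}

namespace MatrixUnitTower

variable (hw : ∀ k, IsRelativeMatrixUnits (S k) (S (k + 1)) (w k))

include hw

lemma monotone : Monotone S := monotone_nat_of_le_succ fun k ↦ (hw k).left_le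

lemma mem {k l : ℕ} (hkl : k < l) (a b : ι) : w k a b ∈ S l :=
  monotone hw hkl ((hw k).mem a b)

lemma commute {k l : ℕ} (hkl : k < l) (a b c d : ι) : Commute (w k a b) (w l c d) :=
  (hw l).commute c d (mem hw hkl a b)

/-- The unitary exchanging the matrix units of levels `k` and `k + 1`. -/
def flip (k : ℕ) : unitary F :=
  have hcomm := commute hw (Nat.lt_succ_self k)
  have hstar := star_matrixUnitsFlip (hw k).1 (hw (k + 1)).1 hcomm
  have hsq := matrixUnitsFlip_mul_self (hw k).1 (hw (k + 1)).1 hcomm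
  ⟨matrixUnitsFlip (w k) (w (k + 1)),
    Unitary.mem_iff.mpr ⟨hstar.symm ▸ hsq, hstar.symm ▸ hsq⟩⟩

lemma flip_mem (k : ℕ) : (flip hw k : F) ∈ S (k + 2) :=
  sum_mem fun a _ ↦ sum_mem fun b _ ↦
    mul_mem (mem hw (by lia) a b) (mem hw (by lia) b a)

/-- Conjugation by the unitary exchanging the matrix units of levels `k` and `k + 1`. -/
noncomputable def conjFlip (k : ℕ) : F ≃⋆ₐ[ℂ] F := Unitary.conjStarAlgAut ℂ F (flip hw k)

lemma conjFlip_eq_iff {k : ℕ} {x y : F} :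
    conjFlip hw k x = y ↔ (flip hw k : F) * x = y * flip hw k := by
  rw [conjFlip, Unitary.conjStarAlgAut_apply]
  constructor
  · rintro rfl
    simp [mul_assoc]
  · intro h
    simp [h, mul_assoc]

lemma conjFlip_apply_of_mem {k : ℕ} {x : F} (hx : x ∈ S k) : conjFlip hw k x = x :=
  (conjFlip_eq_iff hw).mpr <| Commute.eq <|
    .sum_left _ _ _ fun a _ ↦ .sum_left _ _ _ fun b _ ↦
      ((hw k).commute a b hx).symm.mul_left
        ((hw (k + 1)).commute b a (monotone hw k.le_succ hx)).symm

lemma conjFlip_apply_self (k : ℕ) (a b : ι) : conjFlip hw k (w k a b) = w (k + 1) a b :=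
  (conjFlip_eq_iff hw).mpr <|
    matrixUnitsFlip_mul (hw k).1 (hw (k + 1)).1 (commute hw k.lt_succ_self) a b

lemma conjFlip_apply_of_lt {k l : ℕ} (hkl : k + 1 < l) (a b : ι) :
    conjFlip hw k (w l a b) = w l a b :=
  (conjFlip_eq_iff hw).mpr ((hw l).commute a b (monotone hw hkl (flip_mem hw k))).eq

/-- The composition `conjFlip 0 ∘ ⋯ ∘ conjFlip (m - 1)`, which shifts the matrix units of levels
below `m` by one level. -/
noncomputable def shiftBelow : ℕ → F ≃⋆ₐ[ℂ] F
  | 0 => .refl ℂ F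
  | m + 1 => (conjFlip hw m).trans (shiftBelow m)

lemma shiftBelow_succ_apply (m : ℕ) (x : F) :
    shiftBelow hw (m + 1) x = shiftBelow hw m (conjFlip hw m x) := rfl

lemma shiftBelow_apply_of_mem {m n : ℕ} (hmn : m ≤ n) {x : F} (hx : x ∈ S m) :
    shiftBelow hw n x = shiftBelow hw m x := by
  induction n, hmn using Nat.le_induction with
  | base => rfl
  | succ n hmn ih =>
    rw [shiftBelow_succ_apply, conjFlip_apply_of_mem hw (monotone hw hmn hx), ih]

lemma shiftBelow_apply_of_lt {m l : ℕ} (hml : m < l) (a b : ι) :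
    shiftBelow hw m (w l a b) = w l a b := by
  induction m with
  | zero => rfl
  | succ m ih => rw [shiftBelow_succ_apply, conjFlip_apply_of_lt hw hml, ih (by lia)]

lemma shiftBelow_succ_apply_self (k : ℕ) (a b : ι) :
    shiftBelow hw (k + 1) (w k a b) = w (k + 1) a b := by
  rw [shiftBelow_succ_apply, conjFlip_apply_self, shiftBelow_apply_of_lt hw k.lt_succ_self]

theorem exists_shift (hdense : Dense (⋃ k, (S k : Set F))) :
    ∃ φ : F →⋆ₐ[ℂ] F, Function.Injective φ ∧ ∀ k a b, φ (w k a b) = w (k + 1) a b := by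
  have heventually {m : ℕ} {x : F} (hx : x ∈ S m) :
      (shiftBelow hw · x) =ᶠ[atTop] fun _ ↦ shiftBelow hw m x :=
    (eventually_ge_atTop m).mono fun n hmn ↦ shiftBelow_apply_of_mem hw hmn hx
  have hcauchy : Dense {x | CauchySeq fun m ↦ (shiftBelow hw m : F →⋆ₐ[ℂ] F) x} :=
    hdense.mono <| Set.iUnion_subset fun m x hx ↦
      (tendsto_const_nhds.congr' (heventually hx).symm).cauchySeq
  obtain ⟨φ, hφ⟩ := exists_starAlgHom_tendsto hcauchy
  have hnorm (x : F) : ‖φ x‖ = ‖x‖ := tendsto_nhds_unique (hφ x).norm <|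
    tendsto_const_nhds.congr fun m ↦ (StarAlgEquiv.norm_map (shiftBelow hw m) x).symm
  refine ⟨φ, (injective_iff_map_eq_zero φ).mpr fun x hx ↦ ?_, fun k a b ↦ ?_⟩
  · rw [← norm_eq_zero, ← hnorm, hx, norm_zero]
  · refine tendsto_nhds_unique (hφ _) (tendsto_const_nhds.congr' ?_)
    rw [← shiftBelow_succ_apply_self hw]
    exact (heventually ((hw k).mem a b)).symm

lemma commute_shift (hS : S 0 = ⊥) (hdense : Dense (⋃ k, (S k : Set F))) {φ : F →⋆ₐ[ℂ] F}
    (hφ : ∀ k a b, φ (w k a b) = w (k + 1) a b) (a b : ι) (x : F) : Commute (w 0 a b) (φ x) := by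
  let C : StarSubalgebra ℂ F :=
    (StarSubalgebra.centralizer ℂ (Set.range (Function.uncurry (w 0)))).comap φ
  have mem_C {x : F} (hx : ∀ a b, Commute (w 0 a b) (φ x)) : x ∈ C :=
    (StarSubalgebra.mem_centralizer_iff ℂ).mpr <| Set.forall_mem_range.mpr fun p ↦
      ⟨hx p.1 p.2, ((hw 0).star_apply p.1 p.2).symm ▸ hx p.2 p.1⟩
  have le_C (k : ℕ) : S k ≤ C := by
    induction k with
    | zero => exact hS ▸ bot_le
    | succ k ih =>
      exact (hw k).le ih fun c d ↦ mem_C fun a b ↦ hφ k c d ▸ commute hw k.succ_pos a b c d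
  have hclosed : IsClosed {x | Commute (w 0 a b) (φ x)} :=
    isClosed_eq (continuous_const.mul (map_continuous φ)) ((map_continuous φ).mul continuous_const)
  refine hclosed.closure_subset_iff.mpr (Set.iUnion_subset fun k x hx ↦ ?_) (hdense x)
  exact ((StarSubalgebra.mem_centralizer_iff ℂ).mp (le_C k hx) _ ⟨(a, b), rfl⟩).1

end MatrixUnitTower

end Shift

section StarProjection

open Matrix

variable {m ι 𝕜 : Type*} [Fintype m] [DecidableEq m] [Fintype ι] [DecidableEq ι] [RCLike 𝕜]

lemma isProj_range_toEuclideanLin {p : Matrix m m 𝕜} (hp : IsIdempotentElem p) :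
    LinearMap.IsProj (toEuclideanLin p).range (toEuclideanLin p) :=
  LinearMap.isProj_range_iff_isIdempotentElem _ |>.mpr <|
    (toLpLin_mul_same 2 p p).symm.trans (congrArg toEuclideanLin hp.eq)

lemma finrank_range_toEuclideanLin {p : Matrix m m 𝕜} (hp : IsIdempotentElem p) :
    (Module.finrank 𝕜 (toEuclideanLin p).range : 𝕜) = p.trace := by
  rw [← (isProj_range_toEuclideanLin hp).trace, toEuclideanLin, toLpLin_eq_toLin,
    trace_toLin_eq]

omit [DecidableEq m] in
lemma exists_isometry_mul_conjTranspose_eq {p : Matrix m m 𝕜} (hp : IsStarProjection p)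
    (htrace : p.trace = Fintype.card ι) :
    ∃ X : Matrix m ι 𝕜, Xᴴ * X = 1 ∧ X * Xᴴ = p := by
  classical
  have hrank : Module.finrank 𝕜 (toEuclideanLin p).range = Fintype.card ι := by
    exact_mod_cast (finrank_range_toEuclideanLin hp.1).trans htrace
  let b : OrthonormalBasis ι 𝕜 (toEuclideanLin p).range :=
    (stdOrthonormalBasis 𝕜 _).reindex (Fintype.equivOfCardEq (by simpa using hrank))
  let X : Matrix m ι 𝕜 := of fun i a ↦ (b a : EuclideanSpace 𝕜 m) i
  have hX : Xᴴ * X = 1 := by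
    ext a c
    have := orthonormal_iff_ite.mp b.orthonormal a c
    simpa [X, mul_apply, one_apply, PiLp.inner_apply, mul_comm] using this
  have hpX : p * X = X := by
    ext i a
    exact congrArg (fun v : EuclideanSpace 𝕜 m ↦ v i)
      ((isProj_range_toEuclideanLin hp.1).map_id _ (b a).2)
  have hXX : IsStarProjection (X * Xᴴ) :=
    ⟨by rw [IsIdempotentElem, Matrix.mul_assoc, ← Matrix.mul_assoc Xᴴ, hX, Matrix.one_mul],
      isHermitian_mul_conjTranspose_self X⟩
  have hdefect : IsStarProjection (p - X * Xᴴ) :=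
    hXX.sub_of_mul_eq_right hp (by rw [← Matrix.mul_assoc, hpX])
  refine ⟨X, hX, (sub_eq_zero.mp ?_).symm⟩
  rw [← trace_conjTranspose_mul_self_eq_zero_iff, ← star_eq_conjTranspose,
    hdefect.isSelfAdjoint.star_eq, hdefect.isIdempotentElem.eq, trace_sub, trace_mul_comm, hX,
    htrace, trace_one, sub_self]

end StarProjection

section Inflation

variable {ι ι' R A B : Type*} [Fintype ι] [DecidableEq ι]

namespace IsMatrixUnits

lemma map [Semiring A] [StarRing A] [Semiring B] [StarRing B] {p : A} {w : ι → ι → A}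
    (hw : IsMatrixUnits p w) {Φ : Type*} [FunLike Φ A B] [NonUnitalRingHomClass Φ A B]
    [StarHomClass Φ A B] (φ : Φ) : IsMatrixUnits (φ p) fun a b ↦ φ (w a b) where
  star_apply a b := by rw [← map_star, hw.star_apply]
  mul_apply a b c d := by rw [← map_mul, hw.mul_apply, apply_ite φ, map_zero]
  sum_diag := by rw [← map_sum, hw.sum_diag]

variable [Semiring A] [StarRing A] {p : A} {f : ι → ι → A}

lemma unit_mul (hf : IsMatrixUnits p f) (a b : ι) : p * f a b = f a b := by
  simp [← hf.sum_diag, Finset.sum_mul, hf.mul_apply]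

end IsMatrixUnits

/-- The element `∑ f i o x f o i` of the commutant of the matrix units `f`, in which an element `x`
of the corner at `f o o` is repeated along the diagonal. -/
def matrixUnitsInflation [Semiring A] (f : ι → ι → A) (o : ι) (x : A) : A :=
  ∑ i, f i o * x * f o i

section Algebra

variable [Semiring A] [StarRing A] {f : ι → ι → A} {g : ι' → ι' → A}

lemma mul_matrixUnitsInflation (hf : IsMatrixUnits 1 f) (i j o : ι) (x : A) :
    f i j * matrixUnitsInflation f o x = f i o * x * f o j := by
  simp [matrixUnitsInflation, Finset.mul_sum, ← mul_assoc, hf.mul_apply, ite_mul]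

lemma matrixUnitsInflation_mul (hf : IsMatrixUnits 1 f) (i j o : ι) (x : A) :
    matrixUnitsInflation f o x * f i j = f i o * x * f o j := by
  simp [matrixUnitsInflation, Finset.sum_mul, mul_assoc, hf.mul_apply, mul_ite]

lemma matrixUnitsInflation_mul_matrixUnitsInflation (hf : IsMatrixUnits 1 f) (o : ι) (x y : A) :
    matrixUnitsInflation f o x * matrixUnitsInflation f o y =
      matrixUnitsInflation f o (x * (f o o * y)) := by
  rw [matrixUnitsInflation, Finset.sum_mul]
  simp only [mul_assoc, mul_matrixUnitsInflation hf]
  simp only [matrixUnitsInflation, mul_assoc]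

lemma sum_corners_eq (hf : IsMatrixUnits 1 f) (o : ι) (x : A) :
    ∑ i, ∑ j, f i o * (f o o * (f o i * x * f j o) * f o o) * f o j = x := by
  calc ∑ i, ∑ j, f i o * (f o o * (f o i * x * f j o) * f o o) * f o j
    _ = ∑ i, ∑ j, f i o * f o o * f o i * x * (f j o * f o o * f o j) := by
      simp only [mul_assoc]
    _ = (∑ i, f i i) * x * ∑ j, f j j := by
      simp only [hf.mul_apply, if_true]
      rw [Finset.sum_mul, Finset.sum_mul_sum]
    _ = x := by rw [hf.sum_diag, one_mul, mul_one]

variable [CommSemiring R] [StarRing R] [Algebra R A] [StarModule R A] {S T : StarSubalgebra R A}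

lemma mul_mul_mem_of_mem_span (hf : IsMatrixUnits 1 f) {o : ι} (hfS : ∀ i j, f i j ∈ S)
    (hgS : ∀ a b, matrixUnitsInflation f o (g a b) ∈ S) {x : A}
    (hx : x ∈ Submodule.span R (Set.range (Function.uncurry g))) (i j : ι) :
    f i o * x * f o j ∈ S := by
  induction hx using Submodule.span_induction with
  | mem _ h =>
    obtain ⟨⟨a, b⟩, rfl⟩ := h
    exact mul_matrixUnitsInflation hf i j o (g a b) ▸ mul_mem (hfS i j) (hgS a b)
  | zero => simp
  | add x y _ _ hx hy => simpa only [mul_add, add_mul] using add_mem hx hy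
  | smul c x _ hx => simpa using SMulMemClass.smul_mem c hx

variable [Fintype ι'] [DecidableEq ι']

lemma isMatrixUnits_inflation (hf : IsMatrixUnits 1 f) (o : ι) (hg : IsMatrixUnits (f o o) g) :
    IsMatrixUnits 1 fun a b ↦ matrixUnitsInflation f o (g a b) where
  star_apply a b := by
    simp only [matrixUnitsInflation, star_sum, star_mul, hf.star_apply, hg.star_apply, mul_assoc]
  mul_apply a b c d := by
    rw [matrixUnitsInflation_mul_matrixUnitsInflation hf, hg.unit_mul, hg.mul_apply]
    split_ifs <;> simp [matrixUnitsInflation]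
  sum_diag := by
    calc ∑ a, matrixUnitsInflation f o (g a a)
      _ = ∑ i, f i o * (∑ a, g a a) * f o i := by
        simp only [matrixUnitsInflation, Finset.mul_sum, Finset.sum_mul]
        exact Finset.sum_comm
      _ = 1 := by simp [hg.sum_diag, hf.mul_apply, hf.sum_diag]

theorem isRelativeMatrixUnits_inflation (hST : S ≤ T) (hf : IsMatrixUnits 1 f)
    (hfS : ∀ i j, f i j ∈ S) (hS : ∀ x ∈ S, x ∈ Submodule.span R (Set.range (Function.uncurry f)))
    (o : ι) (hg : IsMatrixUnits (f o o) g) (hgT : ∀ a b, g a b ∈ T)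
    (hT : ∀ x ∈ T, f o o * x * f o o ∈ Submodule.span R (Set.range (Function.uncurry g))) :
    IsRelativeMatrixUnits S T fun a b ↦ matrixUnitsInflation f o (g a b) where
  toIsMatrixUnits := isMatrixUnits_inflation hf o hg
  commute a b x hx := by
    refine Submodule.span_induction ?_ (.zero_left _) (fun _ _ _ _ ↦ .add_left)
      (fun c _ _ h ↦ h.smul_left c) (hS x hx)
    rintro _ ⟨⟨i, j⟩, rfl⟩
    exact (mul_matrixUnitsInflation hf i j o _).trans (matrixUnitsInflation_mul hf i j o _).symm
  sup_adjoin := by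
    let w (a b : ι') : A := matrixUnitsInflation f o (g a b)
    have hw_T (a b : ι') : w a b ∈ T := sum_mem fun i _ ↦
      mul_mem (mul_mem (hST (hfS i o)) (hgT a b)) (hST (hfS o i))
    refine le_antisymm (sup_le hST (StarAlgebra.adjoin_le ?_)) fun y hy ↦ ?_
    · exact Set.range_subset_iff.mpr fun p ↦ hw_T p.1 p.2
    have hcorner (i j : ι) : f o i * y * f j o ∈ T :=
      mul_mem (mul_mem (hST (hfS o i)) hy) (hST (hfS j o))
    rw [← sum_corners_eq hf o y]
    exact sum_mem fun i _ ↦ sum_mem fun j _ ↦ mul_mul_mem_of_mem_span hf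
      (fun i j ↦ StarSubalgebra.mem_sup_left (hfS i j))
      (fun a b ↦ StarSubalgebra.mem_sup_right
        (StarAlgebra.subset_adjoin R _ (Set.mem_range_self (a, b))))
      (hT _ (hcorner i j)) i j

end Algebra

end Inflation

section Existence

open Matrix

variable {m n ι R 𝕜 F : Type*} [Fintype m] [DecidableEq m] [Fintype n] [DecidableEq n]
  [Fintype ι] [RCLike 𝕜]

lemma isMatrixUnits_single [Semiring R] [StarRing R] :
    IsMatrixUnits (1 : Matrix n n R) fun i j ↦ single i j (1 : R) where
  star_apply i j := by simp [star_eq_conjTranspose]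
  mul_apply i j k l := by
    split_ifs with h <;> simp [h]
  sum_diag := sum_single_one

/-- The embedding `y ↦ X y X*` of matrix algebras induced by an isometry `X`. -/
def isometryConj [CommSemiring R] [StarRing R] [DecidableEq ι] (X : Matrix m ι R)
    (hX : Xᴴ * X = 1) : Matrix ι ι R →⋆ₙₐ[R] Matrix m m R where
  toFun y := X * y * Xᴴ
  map_smul' c y := by simp
  map_zero' := by simp
  map_add' y z := by rw [Matrix.mul_add, Matrix.add_mul]
  map_mul' y z := by
    calc X * (y * z) * Xᴴ
      _ = X * (y * (Xᴴ * X) * z) * Xᴴ := by rw [hX, Matrix.mul_one]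
      _ = X * y * Xᴴ * (X * z * Xᴴ) := by simp only [Matrix.mul_assoc]
  map_star' y := by
    simp only [star_eq_conjTranspose, conjTranspose_mul, conjTranspose_conjTranspose,
      Matrix.mul_assoc]

lemma IsMatrixUnits.trace_apply_self {f : n → n → Matrix m m 𝕜} (hf : IsMatrixUnits 1 f)
    (hcard : Fintype.card m = Fintype.card n * Fintype.card ι) (o : n) :
    (f o o).trace = Fintype.card ι := by
  have hconst (i : n) : (f i i).trace = (f o o).trace := by
    have h₁ : f i o * f o i = f i i := by simp [hf.mul_apply]
    have h₂ : f o i * f i o = f o o := by simp [hf.mul_apply]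
    rw [← h₁, trace_mul_comm, h₂]
  have htotal : (Fintype.card n : 𝕜) * (f o o).trace = Fintype.card n * Fintype.card ι := by
    calc (Fintype.card n : 𝕜) * (f o o).trace
      _ = (∑ i, f i i).trace := by simp [trace_sum, hconst]
      _ = Fintype.card n * Fintype.card ι := by simp [hf.sum_diag, hcard]
  have : Nonempty n := ⟨o⟩
  exact mul_left_cancel₀ (Nat.cast_ne_zero.mpr Fintype.card_ne_zero) htotal

omit [Fintype n] in
lemma mem_span_range_single [Finite n] [Semiring R] (y : Matrix n n R) :
    y ∈ Submodule.span R (Set.range (Function.uncurry fun i j ↦ single i j (1 : R))) := by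
  have := Fintype.ofFinite n
  rw [matrix_eq_sum_single y]
  refine sum_mem fun i _ ↦ sum_mem fun j _ ↦ ?_
  rw [← mul_one (y i j), ← smul_eq_mul, ← smul_single]
  exact Submodule.smul_mem _ _ (Submodule.subset_span (Set.mem_range_self (i, j)))

omit [Fintype n] in
lemma apply_mem_span_range_single [Finite n] [Semiring R] {M Φ : Type*} [AddCommMonoid M]
    [Module R M] [FunLike Φ (Matrix n n R) M] [LinearMapClass Φ R (Matrix n n R) M] (φ : Φ)
    (y : Matrix n n R) :
    φ y ∈ Submodule.span R (Set.range (Function.uncurry fun i j ↦ φ (single i j 1))) := by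
  have := Submodule.apply_mem_span_image_of_mem_span (φ : Matrix n n R →ₗ[R] M)
    (mem_span_range_single y)
  rwa [← Set.range_comp] at this

omit [DecidableEq m] [DecidableEq n] in
theorem exists_isRelativeMatrixUnits [Nonempty n] [DecidableEq ι] [Ring F] [StarRing F]
    [Algebra 𝕜 F] [StarModule 𝕜 F] {S T : StarSubalgebra 𝕜 F} (hST : S ≤ T)
    (eS : S ≃⋆ₐ[𝕜] Matrix n n 𝕜) (eT : T ≃⋆ₐ[𝕜] Matrix m m 𝕜)
    (hcard : Fintype.card m = Fintype.card n * Fintype.card ι) :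
    ∃ w : ι → ι → F, IsRelativeMatrixUnits S T w := by
  classical
  let σ : Matrix n n 𝕜 →⋆ₐ[𝕜] F := S.subtype.comp (eS.symm : Matrix n n 𝕜 →⋆ₐ[𝕜] S)
  let τ : Matrix m m 𝕜 →⋆ₐ[𝕜] F := T.subtype.comp (eT.symm : Matrix m m 𝕜 →⋆ₐ[𝕜] T)
  let κ : Matrix n n 𝕜 →⋆ₐ[𝕜] Matrix m m 𝕜 := (eT : T →⋆ₐ[𝕜] Matrix m m 𝕜).comp <|
    (StarSubalgebra.inclusion hST).comp (eS.symm : Matrix n n 𝕜 →⋆ₐ[𝕜] S)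
  have hσ_symm (x : S) : σ (eS x) = x := congrArg S.subtype (eS.symm_apply_apply x)
  have hτ_symm (x : T) : τ (eT x) = x := congrArg T.subtype (eT.symm_apply_apply x)
  have hτκ (y) : τ (κ y) = σ y := hτ_symm _
  have hκ : IsMatrixUnits 1 fun i j ↦ κ (single i j 1) := map_one κ ▸ isMatrixUnits_single.map κ
  have hσ : IsMatrixUnits 1 fun i j ↦ σ (single i j 1) := map_one σ ▸ isMatrixUnits_single.map σ
  let o : n := Classical.arbitrary n
  have ho : IsStarProjection (κ (single o o 1)) :=
    ⟨by simp [IsIdempotentElem, hκ.mul_apply], hκ.star_apply o o⟩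
  obtain ⟨X, hX, hXX⟩ := exists_isometry_mul_conjTranspose_eq ho (hκ.trace_apply_self hcard o)
  let ψ : Matrix ι ι 𝕜 →⋆ₙₐ[𝕜] F := (τ : Matrix m m 𝕜 →⋆ₙₐ[𝕜] F).comp (isometryConj X hX)
  have hψ (y) : ψ y = τ (X * y * Xᴴ) := rfl
  have hψ_one : ψ 1 = σ (single o o 1) := by
    rw [hψ, Matrix.mul_one, hXX, hτκ]
  have hψ_corner (x : T) : ψ (Xᴴ * eT x * X) = σ (single o o 1) * x * σ (single o o 1) := by
    rw [← hψ_one, hψ, hψ, ← hτ_symm x, Matrix.mul_one, ← map_mul, ← map_mul]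
    simp only [Matrix.mul_assoc]
  have hσ_span (x : S) :
      (x : F) ∈ Submodule.span 𝕜 (Set.range (Function.uncurry fun i j ↦ σ (single i j 1))) :=
    hσ_symm x ▸ apply_mem_span_range_single σ (eS x)
  exact ⟨_, isRelativeMatrixUnits_inflation hST hσ (fun i j ↦ (eS.symm (single i j 1)).2)
    (fun x hx ↦ hσ_span ⟨x, hx⟩) o
    (hψ_one ▸ isMatrixUnits_single.map ψ) (fun a b ↦ (eT.symm _).2)
    fun x hx ↦ hψ_corner ⟨x, hx⟩ ▸ apply_mem_span_range_single ψ _⟩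

end Existence

section Amplification

variable {ι R A B : Type*} [Fintype ι] [DecidableEq ι] [CommSemiring R] [Semiring A] [StarRing A]
  [Algebra R A] [Semiring B] [StarRing B] [Algebra R B] {w : ι → ι → B} {φ : A →⋆ₐ[R] B}

/-- The *-homomorphism on matrices over `A` that combines a representation `φ` of `A` with a system
of matrix units commuting with it. -/
def matrixUnitsAmplify (hw : IsMatrixUnits 1 w) (hφ : ∀ a b x, Commute (w a b) (φ x)) :
    CStarMatrix ι ι A →⋆ₐ[R] B where
  toFun x := ∑ a, ∑ b, w a b * φ (x a b)
  map_one' := by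
    simp [CStarMatrix.one_apply, apply_ite φ, hw.sum_diag]
  map_mul' x y := by
    symm
    calc (∑ a, ∑ b, w a b * φ (x a b)) * ∑ c, ∑ d, w c d * φ (y c d)
      _ = ∑ a, ∑ b, ∑ c, ∑ d, w a b * w c d * (φ (x a b) * φ (y c d)) := by
        simp only [Finset.sum_mul]
        simp only [Finset.mul_sum, (hφ _ _ _).symm.mul_mul_mul_comm]
      _ = ∑ a, ∑ b, ∑ d, w a d * (φ (x a b) * φ (y b d)) := by
        simp [hw.mul_apply, ite_mul]
      _ = ∑ a, ∑ d, w a d * φ ((x * y) a d) := by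
        simp only [CStarMatrix.mul_apply, map_sum, map_mul, Finset.mul_sum]
        exact Finset.sum_congr rfl fun a _ ↦ Finset.sum_comm
  map_zero' := by simp
  map_add' x y := by simp [mul_add, Finset.sum_add_distrib]
  commutes' r := by
    simp [CStarMatrix.algebraMap_apply, apply_ite φ, ← Finset.sum_mul, hw.sum_diag,
      AlgHomClass.commutes φ]
  map_star' x := by
    simp only [star_sum, star_mul, hw.star_apply, CStarMatrix.star_apply, map_star,
      (hφ _ _ _).eq]
    exact Finset.sum_comm

variable {hw : IsMatrixUnits 1 w} {hφ : ∀ a b x, Commute (w a b) (φ x)}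

lemma matrixUnitsAmplify_apply (x : CStarMatrix ι ι A) :
    matrixUnitsAmplify hw hφ x = ∑ a, ∑ b, w a b * φ (x a b) := rfl

lemma sum_mul_matrixUnitsAmplify_mul (x : CStarMatrix ι ι A) (a b : ι) :
    ∑ c, w c a * matrixUnitsAmplify hw hφ x * w b c = φ (x a b) := by
  have hcompress (c : ι) : w c a * matrixUnitsAmplify hw hφ x * w b c = w c c * φ (x a b) := by
    calc w c a * matrixUnitsAmplify hw hφ x * w b c
      _ = ∑ d, ∑ e, w c a * w d e * w b c * φ (x d e) := by
        simp only [matrixUnitsAmplify_apply, Finset.mul_sum, Finset.sum_mul, mul_assoc,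
          (hφ b c _).eq]
      _ = w c c * φ (x a b) := by simp [hw.mul_apply, ite_mul]
  simp only [hcompress, ← Finset.sum_mul, hw.sum_diag, one_mul]

lemma matrixUnitsAmplify_single (a b : ι) (x : A) :
    matrixUnitsAmplify hw hφ (CStarMatrix.ofMatrix (.single a b x)) = w a b * φ x := by
  simp [matrixUnitsAmplify_apply, Matrix.single_apply, apply_ite φ, ite_and]

lemma matrixUnitsAmplify_diagonal_const (x : A) :
    matrixUnitsAmplify hw hφ (CStarMatrix.ofMatrix (.diagonal fun _ ↦ x)) = φ x := by
  simp [matrixUnitsAmplify_apply, Matrix.diagonal_apply, apply_ite φ, ← Finset.sum_mul,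
    hw.sum_diag]

lemma matrixUnitsAmplify_injective (h : Function.Injective φ) :
    Function.Injective (matrixUnitsAmplify hw hφ) := fun x y hxy ↦
  CStarMatrix.ext fun a b ↦ h <| by
    rw [← sum_mul_matrixUnitsAmplify_mul (hw := hw) (hφ := hφ), hxy, sum_mul_matrixUnitsAmplify_mul]

variable [StarRing R] [StarModule R A] [StarModule R B]

variable (ι) in
/-- The matrices with entries in `S`. -/
def matricesOver (S : StarSubalgebra R A) : StarSubalgebra R (CStarMatrix ι ι A) where
  carrier := {x | ∀ a b, x a b ∈ S}
  mul_mem' hx hy a b := by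
    rw [CStarMatrix.mul_apply]
    exact sum_mem fun c _ ↦ mul_mem (hx a c) (hy c b)
  add_mem' hx hy a b := add_mem (hx a b) (hy a b)
  algebraMap_mem' r a b := by
    rw [CStarMatrix.algebraMap_apply]
    split_ifs
    exacts [algebraMap_mem S r, zero_mem S]
  star_mem' hx a b := by
    rw [CStarMatrix.star_apply]
    exact star_mem (hx b a)

lemma matricesOver_mono {S T : StarSubalgebra R A} (hST : S ≤ T) :
    matricesOver ι S ≤ matricesOver ι T := fun _ hx a b ↦ hST (hx a b)

end Amplification

section SelfSimilarity

variable {ι F : Type*} [Fintype ι] [DecidableEq ι] [CStarAlgebra F] {S : ℕ → StarSubalgebra ℂ F}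
  {w : ℕ → ι → ι → F}

namespace MatrixUnitTower

variable (hw : ∀ k, IsRelativeMatrixUnits (S k) (S (k + 1)) (w k))
include hw

lemma le_map_amplify (hS : S 0 = ⊥) {φ : F →⋆ₐ[ℂ] F}
    (hφ : ∀ k a b, φ (w k a b) = w (k + 1) a b) (hcomm : ∀ a b x, Commute (w 0 a b) (φ x))
    (k : ℕ) :
    S (k + 1) ≤ (matricesOver ι (S k)).map (matrixUnitsAmplify (hw 0).toIsMatrixUnits hcomm) := by
  induction k with
  | zero =>
    refine (hw 0).le (hS.trans_le bot_le) fun a b ↦ StarSubalgebra.mem_map.mpr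
      ⟨CStarMatrix.ofMatrix (.single a b 1), fun c d ↦ ?_, ?_⟩
    · simp only [CStarMatrix.ofMatrix_apply, Matrix.single_apply]
      split_ifs
      exacts [one_mem _, zero_mem _]
    · rw [matrixUnitsAmplify_single, map_one, mul_one]
  | succ k ih =>
    refine (hw (k + 1)).le (ih.trans (StarSubalgebra.map_mono (matricesOver_mono (hw k).left_le)))
      fun a b ↦ StarSubalgebra.mem_map.mpr
        ⟨CStarMatrix.ofMatrix (.diagonal fun _ ↦ w k a b), fun c d ↦ ?_, ?_⟩
    · simp only [CStarMatrix.ofMatrix_apply, Matrix.diagonal_apply]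
      split_ifs
      exacts [(hw k).mem a b, zero_mem _]
    · rw [matrixUnitsAmplify_diagonal_const, hφ]

theorem exists_cstarMatrix_equiv [PartialOrder F] [StarOrderedRing F] (hS : S 0 = ⊥)
    (hdense : Dense (⋃ k, (S k : Set F))) :
    ∃ Φ : CStarMatrix ι ι F ≃⋆ₐ[ℂ] F, ∀ k, ∀ y ∈ S (k + 1), ∀ a b, Φ.symm y a b ∈ S k := by
  obtain ⟨φ, hφ_inj, hφ⟩ := exists_shift hw hdense
  let Φ := matrixUnitsAmplify (hw 0).toIsMatrixUnits (commute_shift hw hS hdense hφ)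
  have hle (k : ℕ) : S (k + 1) ≤ (matricesOver ι (S k)).map Φ := le_map_amplify hw hS hφ _ k
  have hΦ_inj : Function.Injective Φ := matrixUnitsAmplify_injective hφ_inj
  have hΦ_surj : Function.Surjective Φ := by
    have hclosed : IsClosed (Set.range Φ) :=
      (NonUnitalStarAlgHom.isometry Φ hΦ_inj).isClosedEmbedding.isClosed_range
    refine Set.range_eq_univ.mp ((hclosed.closure_eq).symm.trans (hdense.mono ?_).closure_eq)
    refine Set.iUnion_subset fun k y hy ↦ ?_
    obtain ⟨x, -, hx⟩ := hle k ((hw k).left_le hy)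
    exact ⟨x, hx⟩
  let e : CStarMatrix ι ι F ≃⋆ₐ[ℂ] F := .ofBijective Φ ⟨hΦ_inj, hΦ_surj⟩
  refine ⟨e, fun k y hy a b ↦ ?_⟩
  obtain ⟨x, hx, rfl⟩ := StarSubalgebra.mem_map.mp (hle k hy)
  have hsymm : e.symm (Φ x) = x := e.symm_apply_apply x
  rw [hsymm]
  exact hx a b

end MatrixUnitTower

end SelfSimilarity

section Pairing

variable {ι A : Type*} [Fintype ι] [DecidableEq ι] [CStarAlgebra A] [PartialOrder A]
  [StarOrderedRing A]

lemma norm_ofMatrix_diagonal_le (d : ι → A) :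
    ‖CStarMatrix.ofMatrix (Matrix.diagonal d)‖ ≤ ‖d‖ :=
  let Δ : (ι → A) →⋆ₙₐ[ℂ] CStarMatrix ι ι A :=
    { toFun := fun d ↦ CStarMatrix.ofMatrix (.diagonal d)
      map_smul' := fun c d ↦ Matrix.diagonal_smul c d
      map_zero' := Matrix.diagonal_zero
      map_add' := fun d e ↦ (Matrix.diagonal_add d e).symm
      map_mul' := fun d e ↦ (Matrix.diagonal_mul_diagonal d e).symm
      map_star' := fun d ↦ (Matrix.diagonal_conjTranspose d).symm }
  NonUnitalStarAlgHom.norm_apply_le Δ d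

lemma norm_ofMatrix_single_le (i j : ι) (x : A) :
    ‖CStarMatrix.ofMatrix (Matrix.single i j x)‖ ≤ ‖x‖ := by
  let X := CStarMatrix.ofMatrix (Matrix.single i j x)
  have hXX : star X * X = CStarMatrix.ofMatrix (.diagonal (Pi.single j (star x * x))) := by
    rw [Matrix.diagonal_single]
    change (Matrix.single i j x).conjTranspose * Matrix.single i j x = _
    rw [Matrix.conjTranspose_single, Matrix.single_mul_single_same]
    rfl
  refine (sq_le_sq₀ (norm_nonneg X) (norm_nonneg x)).mp ?_
  calc ‖X‖ ^ 2
    _ = ‖star X * X‖ := by rw [CStarRing.norm_star_mul_self, sq]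
    _ ≤ ‖Pi.single (M := fun _ ↦ A) j (star x * x)‖ := hXX ▸ norm_ofMatrix_diagonal_le _
    _ = ‖x‖ ^ 2 := by rw [Pi.norm_single, CStarRing.norm_star_mul_self, sq]

variable (Φ : CStarMatrix ι ι A ≃⋆ₐ[ℂ] A)

/-- The matrix entries of the elements of `A`, under an identification of `A` with the matrices
over itself. -/
noncomputable def cstarMatrixEntry (a b : ι) : A →L[ℂ] A :=
  LinearMap.mkContinuous
    { toFun := fun y ↦ Φ.symm y a b
      map_add' := fun y z ↦ by rw [map_add, CStarMatrix.add_apply]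
      map_smul' := fun c y ↦ by rw [map_smul, CStarMatrix.smul_apply, RingHom.id_apply] }
    1 fun y ↦ by
      rw [one_mul, ← StarAlgEquiv.norm_map Φ.symm y]
      exact CStarMatrix.norm_entry_le_norm (i := a) (j := b)

lemma cstarMatrixEntry_apply (a b : ι) (y : A) : cstarMatrixEntry Φ a b y = Φ.symm y a b := rfl

lemma norm_cstarMatrixEntry_apply_le (a b : ι) (y : A) : ‖cstarMatrixEntry Φ a b y‖ ≤ ‖y‖ := by
  simpa using (cstarMatrixEntry Φ a b).le_of_opNorm_le
    (LinearMap.mkContinuous_norm_le _ zero_le_one _) y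

/-- The pairing `(x, y) ↦ diag(x, Y, …, Y)` with `Y = e i j ⊗ y`, where `x` stands at the
position `i`. -/
noncomputable def offDiagonalPair (i j : ι) : A × A →L[ℂ] A :=
  LinearMap.mkContinuous
    (let φ : Matrix ι ι A →ₗ[ℂ] A := Φ.toAlgEquiv.toLinearMap ∘ₗ CStarMatrix.ofMatrixₗ.toLinearMap
     φ ∘ₗ Matrix.diagonalLinearMap ι ℂ A ∘ₗ LinearMap.pi fun c ↦
      if c = i then LinearMap.fst ℂ A A
      else φ ∘ₗ Matrix.singleLinearMap ℂ i j ∘ₗ LinearMap.snd ℂ A A)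
    1 fun p ↦ by
      rw [one_mul]
      refine (StarAlgEquiv.norm_map Φ _).trans_le ?_
      refine (norm_ofMatrix_diagonal_le _).trans ?_
      refine (pi_norm_le_iff_of_nonneg (norm_nonneg p)).mpr fun c ↦ ?_
      rw [LinearMap.pi_apply]
      split_ifs
      · exact norm_fst_le p
      · refine (StarAlgEquiv.norm_map Φ _).trans_le ?_
        exact (norm_ofMatrix_single_le i j p.2).trans (norm_snd_le p)

lemma offDiagonalPair_apply (i j : ι) (x y : A) :
    offDiagonalPair Φ i j (x, y) = Φ (CStarMatrix.ofMatrix (.diagonal fun c ↦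
      if c = i then x else Φ (CStarMatrix.ofMatrix (.single i j y)))) := by
  refine congrArg (fun d ↦ Φ (CStarMatrix.ofMatrix (.diagonal d))) (funext fun c ↦ ?_)
  rw [LinearMap.pi_apply]
  split_ifs <;> rfl

/-- The left inverse of `offDiagonalPair`. -/
noncomputable def offDiagonalUnpair (i j : ι) : A →L[ℂ] A × A :=
  (cstarMatrixEntry Φ i i).prod (cstarMatrixEntry Φ i j ∘L cstarMatrixEntry Φ j j)

lemma norm_offDiagonalPair_le (i j : ι) : ‖offDiagonalPair Φ i j‖ ≤ 1 :=
  LinearMap.mkContinuous_norm_le _ zero_le_one _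

lemma norm_offDiagonalUnpair_le (i j : ι) : ‖offDiagonalUnpair Φ i j‖ ≤ 1 :=
  ContinuousLinearMap.opNorm_le_bound _ zero_le_one fun y ↦ by
    rw [one_mul]
    exact max_le (norm_cstarMatrixEntry_apply_le Φ i i y) <|
      (norm_cstarMatrixEntry_apply_le Φ i j _).trans (norm_cstarMatrixEntry_apply_le Φ j j y)

lemma offDiagonalUnpair_offDiagonalPair {i j : ι} (hij : i ≠ j) :
    Function.LeftInverse (offDiagonalUnpair Φ i j) (offDiagonalPair Φ i j) := by
  rintro ⟨x, y⟩
  have hentry (a : ι) : cstarMatrixEntry Φ a a (offDiagonalPair Φ i j (x, y)) =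
      if a = i then x else Φ (CStarMatrix.ofMatrix (.single i j y)) := by
    simp [cstarMatrixEntry_apply, offDiagonalPair_apply]
  refine Prod.ext ((hentry i).trans (if_pos rfl)) ?_
  change cstarMatrixEntry Φ i j (cstarMatrixEntry Φ j j _) = y
  rw [hentry, if_neg hij.symm]
  simp [cstarMatrixEntry_apply]

variable {S : ℕ → StarSubalgebra ℂ A}

lemma nestedSnd_offDiagonalUnpair_algebraMap {i j : ι} (hij : i ≠ j) (n : ℕ) (c : ℂ) :
    nestedSnd (offDiagonalUnpair Φ i j) n (algebraMap ℂ A c) = 0 := by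
  have hdiag (a : ι) : cstarMatrixEntry Φ a a (algebraMap ℂ A c) = algebraMap ℂ A c := by
    rw [cstarMatrixEntry_apply, AlgHomClass.commutes, CStarMatrix.algebraMap_apply, if_pos rfl]
  induction n with
  | zero =>
    change cstarMatrixEntry Φ i j (cstarMatrixEntry Φ j j (algebraMap ℂ A c)) = 0
    rw [hdiag, cstarMatrixEntry_apply, AlgHomClass.commutes, CStarMatrix.algebraMap_apply,
      if_neg hij]
  | succ n ih =>
    rw [nestedSnd_succ_apply]
    exact (congrArg _ (hdiag i)).trans ih

lemma nestedSnd_offDiagonalUnpair_of_mem (hS : S 0 = ⊥)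
    (hΦ : ∀ k, ∀ y ∈ S (k + 1), ∀ a b, Φ.symm y a b ∈ S k) {i j : ι} (hij : i ≠ j) {k n : ℕ}
    (hkn : k ≤ n) {y : A} (hy : y ∈ S k) : nestedSnd (offDiagonalUnpair Φ i j) n y = 0 := by
  induction n generalizing k y with
  | zero =>
    obtain rfl := Nat.le_zero.mp hkn
    obtain ⟨c, rfl⟩ := StarSubalgebra.mem_bot.mp (hS ▸ hy)
    exact nestedSnd_offDiagonalUnpair_algebraMap Φ hij 0 c
  | succ n ih =>
    cases k with
    | zero =>
      obtain ⟨c, rfl⟩ := StarSubalgebra.mem_bot.mp (hS ▸ hy)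
      exact nestedSnd_offDiagonalUnpair_algebraMap Φ hij _ c
    | succ k => exact ih (Nat.le_of_succ_le_succ hkn) (hΦ k y hy i i)

omit [DecidableEq ι] in
theorem nonempty_equiv_zeroAtInfty_of_cstarMatrix_equiv [Nontrivial ι] (hS : S 0 = ⊥)
    (hdense : Dense (⋃ k, (S k : Set A)))
    (hΦ : ∀ k, ∀ y ∈ S (k + 1), ∀ a b, Φ.symm y a b ∈ S k) :
    Nonempty (A ≃L[ℂ] C₀(ℕ, A)) := by
  classical
  obtain ⟨i, j, hij⟩ := exists_pair_ne ι
  refine nonempty_equiv_zeroAtInfty_of_leftInverse (norm_offDiagonalPair_le Φ i j)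
    (norm_offDiagonalUnpair_le Φ i j) (offDiagonalUnpair_offDiagonalPair Φ hij)
    (hdense.mono <| Set.iUnion_subset fun k y hy ↦ tendsto_const_nhds.congr' ?_)
  exact (eventually_ge_atTop k).mono fun n hkn ↦
    (nestedSnd_offDiagonalUnpair_of_mem Φ hS hΦ hij hkn hy).symm

end Pairing

lemma starSubalgebra_eq_bot_of_equiv_matrix {n R A : Type*} [Fintype n] [Unique n] [CommSemiring R]
    [StarRing R] [Semiring A] [StarRing A] [Algebra R A] [StarModule R A] {S : StarSubalgebra R A}
    (e : S ≃⋆ₐ[R] Matrix n n R) : S = ⊥ := by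
  classical
  refine eq_bot_iff.mpr fun x hx ↦ StarSubalgebra.mem_bot.mpr ⟨e ⟨x, hx⟩ default default, ?_⟩
  refine congrArg S.subtype (a₁ := algebraMap R S _) (a₂ := ⟨x, hx⟩) (e.injective ?_)
  refine (AlgHomClass.commutes e _).trans (Matrix.ext fun a b ↦ ?_)
  rw [Subsingleton.elim a default, Subsingleton.elim b default, Matrix.algebraMap_matrix_apply,
    if_pos rfl, Algebra.algebraMap_self_apply]
  rfl

theorem fermion_algebra_linearly_homeomorphic_c0_general
    (F : Type*) [CStarAlgebra F]
    {d : ℕ} (hd : 1 < d)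
    (S : ℕ → StarSubalgebra ℂ F)
    (hmono : Monotone S)
    (hiso : ∀ k, Nonempty ((S k) ≃⋆ₐ[ℂ] Matrix (Fin (d ^ k)) (Fin (d ^ k)) ℂ))
    (hdense : Dense (⋃ k, (S k : Set F))) :
    Nonempty (F ≃L[ℂ] ZeroAtInftyContinuousMap ℕ F) := by
  let _ := CStarAlgebra.spectralOrder F
  have := CStarAlgebra.spectralOrderedRing F
  have : NeZero d := ⟨by lia⟩
  have : Nontrivial (Fin d) := Fin.nontrivial_iff_two_le.mpr hd
  have hbot : S 0 = ⊥ := by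
    obtain ⟨e⟩ := hiso 0
    have : Unique (Fin (d ^ 0)) := inferInstanceAs (Unique (Fin 1))
    exact starSubalgebra_eq_bot_of_equiv_matrix e
  have hunits (k : ℕ) : ∃ w : Fin d → Fin d → F, IsRelativeMatrixUnits (S k) (S (k + 1)) w := by
    obtain ⟨e⟩ := hiso k
    obtain ⟨e'⟩ := hiso (k + 1)
    exact exists_isRelativeMatrixUnits (hmono k.le_succ) e e' (by simp [pow_succ])
  choose w hw using hunits
  obtain ⟨Φ, hΦ⟩ := MatrixUnitTower.exists_cstarMatrix_equiv hw hbot hdense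
  exact nonempty_equiv_zeroAtInfty_of_cstarMatrix_equiv Φ hbot hdense hΦ

theorem fermion_algebra_linearly_homeomorphic_c0
    (F : Type*) [CStarAlgebra F]
    (S : ℕ → StarSubalgebra ℂ F)
    (hmono : Monotone S)
    (hiso : ∀ k, Nonempty ((S k) ≃⋆ₐ[ℂ] Matrix (Fin (2 ^ k)) (Fin (2 ^ k)) ℂ))
    (hdense : Dense (⋃ k, (S k : Set F))) :
    Nonempty (F ≃L[ℂ] ZeroAtInftyContinuousMap ℕ F) := by
  exact fermion_algebra_linearly_homeomorphic_c0_general F one_lt_two S hmono hiso hdense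
end
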